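/- Let A, B ∈ SL(2,ℂ) generate a discrete subgroup, let A be elliptic of order n ≥ 3, and suppose the axes of A and B·A·B⁻¹ are disjoint, i.e.: (i) A and B·A·B⁻¹ have no common eigenvector in ℂ², and (ii) there is no C ∈ SL(2,ℂ) such that the matrices C·A·C⁻¹ and C·(B·A·B⁻¹)·C⁻¹ both lie in the special unitary group SU(2). Then for every C ∈ SL(2,ℂ), max{‖C·A·C⁻¹‖², ‖C·B·C⁻¹‖²} ≥ 2·d(n), where d(n) = t(n) for n ≠ 6 and d(6) = 6 − √24. -/

import Mathlib

open Matrix Real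

noncomputable section

abbrev SL2C := Matrix.SpecialLinearGroup (Fin 2) ℂ

/-- The Frobenius (Hilbert–Schmidt) norm of a 2×2 complex matrix. -/
def fnorm (A : Matrix (Fin 2) (Fin 2) ℂ) : ℝ :=
  @norm _ Matrix.frobeniusSeminormedAddCommGroup.toNorm A

instance : TopologicalSpace SL2C :=
  TopologicalSpace.induced (fun g => (g : Matrix (Fin 2) (Fin 2) ℂ)) inferInstance

/-- A subgroup of `SL(2,ℂ)` is discrete if it is a discrete subspace of `SL(2,ℂ)`. -/
def IsDiscreteSubgroup (Γ : Subgroup SL2C) : Prop := DiscreteTopology Γ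

/-- `A` is elliptic of order `n`: `A^n = ±1` but `A^k ≠ ±1` for `1 ≤ k < n`. -/
def IsEllipticOfOrder (A : SL2C) (n : ℕ) : Prop :=
  (A ^ n = 1 ∨ A ^ n = -1) ∧ ∀ k : ℕ, 1 ≤ k → k < n → A ^ k ≠ 1 ∧ A ^ k ≠ -1

/-- `A` is parabolic: `A ≠ ±1` and `tr A = ±2`. -/
def IsParabolic (A : SL2C) : Prop :=
  A ≠ 1 ∧ A ≠ -1 ∧ (Matrix.trace (A : Matrix (Fin 2) (Fin 2) ℂ) = 2 ∨
    Matrix.trace (A : Matrix (Fin 2) (Fin 2) ℂ) = -2)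

/-- `S` and `T` have a common eigenvector in `ℂ²`. -/
def HasCommonEigenvector (S T : SL2C) : Prop :=
  ∃ v : Fin 2 → ℂ, v ≠ 0 ∧ (∃ a : ℂ, (S : Matrix (Fin 2) (Fin 2) ℂ).mulVec v = a • v) ∧
    (∃ b : ℂ, (T : Matrix (Fin 2) (Fin 2) ℂ).mulVec v = b • v)

/-- A subgroup of `SL(2,ℂ)` is nonelementary if it contains two elements `S`, `T`
with `S^k ≠ ±1 ≠ T^k` for all `k ≥ 1` having no common eigenvector in `ℂ²`. -/
def IsNonelementary (Γ : Subgroup SL2C) : Prop :=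
  ∃ S ∈ Γ, ∃ T ∈ Γ, (∀ k : ℕ, 1 ≤ k → S ^ k ≠ 1 ∧ S ^ k ≠ -1) ∧
    (∀ k : ℕ, 1 ≤ k → T ^ k ≠ 1 ∧ T ^ k ≠ -1) ∧ ¬ HasCommonEigenvector S T

/-- The trace parameter `β(A) = tr²(A) - 4`. -/
def βp (A : SL2C) : ℂ := (Matrix.trace (A : Matrix (Fin 2) (Fin 2) ℂ)) ^ 2 - 4

/-- The commutator parameter `γ(A,B) = tr [A,B] - 2`. -/
def γp (A B : SL2C) : ℂ :=
  Matrix.trace ((A * B * A⁻¹ * B⁻¹ : SL2C) : Matrix (Fin 2) (Fin 2) ℂ) - 2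

/-- `PSL(2,ℂ)`, the quotient of `SL(2,ℂ)` by its center `{1, -1}`. -/
abbrev PSL2C := SL2C ⧸ Subgroup.center SL2C

/-- The image in `PSL(2,ℂ)` of a subgroup of `SL(2,ℂ)`. -/
def pslImage (Γ : Subgroup SL2C) : Subgroup PSL2C :=
  Γ.map (QuotientGroup.mk' (Subgroup.center SL2C))

open Classical in
/-- `t5`: the unique real `t > 1` with
`t (t - cos²(π/5)) + (t-1) √((t+1)(t+1-2 cos²(π/5))) = 1/2`. -/
def t5 : ℝ :=
  if h : ∃ t : ℝ, 1 < t ∧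
      t * (t - Real.cos (π / 5) ^ 2) +
        (t - 1) * Real.sqrt ((t + 1) * (t + 1 - 2 * Real.cos (π / 5) ^ 2)) = 1 / 2
  then h.choose else 0

/-- The value `t n = cosh (c n)` where `c n` is the sharp displacement bound for
discrete nonelementary groups with an elliptic generator of order `n ≥ 3`. -/
def tOf : ℕ → ℝ
  | 3 => (2 * Real.sqrt (8 + 2 * Real.sqrt 5) - (1 + Real.sqrt 5)) / (6 - Real.sqrt 5)
  | 4 => (Real.sqrt (6 + 2 * Real.sqrt 3) - Real.sqrt 3) / (3 - Real.sqrt 3)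
  | 5 => t5
  | 6 => 17 / 16
  | n => (5 - 2 * Real.sin (π / n) ^ 2) / (4 + 2 * Real.sin (π / n) ^ 2)

/-- `d n`: the sharp bound of Theorem 3.2 (`d n = t n` for `n ≠ 6`, `d 6 = 6 - √24`). -/
noncomputable def dOf (n : ℕ) : ℝ := if n = 6 then 6 - Real.sqrt 24 else tOf n

/-!
Conjugate so that `A` is diagonal, let `f` be a power of `A` that rotates by `2π / n`, and put
`x = g₀₁ g₁₀` for each `g` with `g f g⁻¹ ∈ Γ`. Then `‖x‖ + ‖1 + x‖` is the hyperbolic cosine of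
the distance between the axes of `f` and `g f g⁻¹`, and these axes meet, possibly at infinity, iff
`x ∈ [-1, 0]`. The set `S` of all such `x` is stable under `x ↦ -1 - x` and under the polynomial
maps induced by replacing `g` by words in `f` and `g f g⁻¹`. The polynomial of the `n`-th power of
`g f g⁻¹ f` is superattracting at `0`; as `Γ` is discrete, `0` is isolated in `S`. Iterating
contracting polynomials towards isolated points then puts every `x ∈ S` with
`‖x‖ + ‖1 + x‖ < K n` into `[-1, 0]`, for an explicit constant `K n`. For `n ≥ 7` the contraction
is of Shimizu–Leutbecher type; for `n = 3` a finite cover of an ellipse by squares, certified in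
fixed-point arithmetic, sends each square by a word into a punctured neighbourhood of an isolated
point.

If `A` and `B` both moved a point by less than `arcosh t`, that point would lie within `r` of the
axis of `A`, where `cosh (2 r) = 1 + (t - 1) / sin² (π / n)`, and the triangle inequality would
bound the distance between the axes of `A` and `B A B⁻¹` by `arcosh t + 2 r`. At `t = d(n)` this
bound is exactly `arcosh (K n)`.
-/

open Filter Topology Polynomial ComplexConjugate

/-! ### Matrix entries -/

namespace SL2C

lemma mul_apply (g k : SL2C) (i j : Fin 2) : (g * k) i j = g i 0 * k 0 j + g i 1 * k 1 j := by
  simp [Matrix.mul_apply, Fin.sum_univ_two]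

lemma inv_zero_zero (g : SL2C) : g⁻¹ 0 0 = g 1 1 := by simp [Matrix.adjugate_fin_two]

lemma inv_zero_one (g : SL2C) : g⁻¹ 0 1 = -g 0 1 := by simp [Matrix.adjugate_fin_two]

lemma inv_one_zero (g : SL2C) : g⁻¹ 1 0 = -g 1 0 := by simp [Matrix.adjugate_fin_two]

lemma inv_one_one (g : SL2C) : g⁻¹ 1 1 = g 0 0 := by simp [Matrix.adjugate_fin_two]

lemma det_eq_one (g : SL2C) : g 0 0 * g 1 1 - g 0 1 * g 1 0 = 1 := by
  rw [← Matrix.det_fin_two, g.det_coe]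

lemma ext_entries {g k : SL2C} (h00 : g 0 0 = k 0 0) (h01 : g 0 1 = k 0 1)
    (h10 : g 1 0 = k 1 0) (h11 : g 1 1 = k 1 1) : g = k := by
  ext i j
  fin_cases i <;> fin_cases j <;> assumption

end SL2C

/-- The matrix `!![a, b; c, d]` as an element of `SL(2,ℂ)`. -/
def mkSL2C (a b c d : ℂ) (h : a * d - b * c = 1) : SL2C :=
  ⟨!![a, b; c, d], by rw [Matrix.det_fin_two_of, h]⟩

lemma pow_succ_eq_chebyshev_of_det_eq_one {R : Type*} [CommRing R] {M : Matrix (Fin 2) (Fin 2) R}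
    (hM : M.det = 1) (k : ℕ) :
    M ^ (k + 1) =
      (Chebyshev.S R k).eval M.trace • M - (Chebyshev.S R (k - 1)).eval M.trace • 1 := by
  nontriviality R
  have hsq : M * M = M.trace • M - 1 := by
    have := M.aeval_self_charpoly
    rw [Matrix.charpoly_fin_two, hM] at this
    simpa [sq, sub_add, sub_eq_zero, Algebra.smul_def] using this
  induction k with
  | zero => simp
  | succ k ih =>
    rw [pow_succ, ih]
    push_cast
    rw [add_sub_cancel_right, Chebyshev.S_add_one, sub_mul, smul_mul_assoc, hsq]
    simp
    module

lemma SL2C.pow_succ_apply (M : SL2C) (k : ℕ) (i j : Fin 2) :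
    (M ^ (k + 1)) i j = (Chebyshev.S ℂ k).eval (M 0 0 + M 1 1) * M i j -
      (Chebyshev.S ℂ (k - 1)).eval (M 0 0 + M 1 1) * (1 : Matrix (Fin 2) (Fin 2) ℂ) i j := by
  have h := congrFun₂ (pow_succ_eq_chebyshev_of_det_eq_one M.det_coe k) i j
  simpa [Matrix.trace_fin_two] using h

/-- `f` is the diagonal matrix with diagonal entries `l` and `m`. -/
structure IsDiagonalWith (f : SL2C) (l m : ℂ) : Prop where
  zero_zero : f 0 0 = l
  zero_one : f 0 1 = 0
  one_zero : f 1 0 = 0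
  one_one : f 1 1 = m

namespace IsDiagonalWith

variable {f g : SL2C} {l m : ℂ}

lemma mul_eq_one (hf : IsDiagonalWith f l m) : l * m = 1 := by
  have := f.det_eq_one
  rw [hf.zero_zero, hf.zero_one, hf.one_one] at this
  simpa using this

lemma inv (hf : IsDiagonalWith f l m) : IsDiagonalWith f⁻¹ m l where
  zero_zero := by rw [SL2C.inv_zero_zero, hf.one_one]
  zero_one := by rw [SL2C.inv_zero_one, hf.zero_one, neg_zero]
  one_zero := by rw [SL2C.inv_one_zero, hf.one_zero, neg_zero]
  one_one := by rw [SL2C.inv_one_one, hf.zero_zero]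

lemma mul_apply_zero (hf : IsDiagonalWith f l m) (h : SL2C) (i : Fin 2) :
    (h * f) i 0 = h i 0 * l := by
  rw [SL2C.mul_apply, hf.zero_zero, hf.one_zero, mul_zero, add_zero]

lemma mul_apply_one (hf : IsDiagonalWith f l m) (h : SL2C) (i : Fin 2) :
    (h * f) i 1 = h i 1 * m := by
  rw [SL2C.mul_apply, hf.zero_one, hf.one_one, mul_zero, zero_add]

lemma conj_zero_zero (hf : IsDiagonalWith f l m) :
    (g * f * g⁻¹) 0 0 = (1 + g 0 1 * g 1 0) * l - g 0 1 * g 1 0 * m := by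
  rw [SL2C.mul_apply, hf.mul_apply_zero, hf.mul_apply_one, SL2C.inv_zero_zero, SL2C.inv_one_zero]
  linear_combination l * g.det_eq_one

lemma conj_zero_one (hf : IsDiagonalWith f l m) :
    (g * f * g⁻¹) 0 1 = g 0 0 * g 0 1 * (m - l) := by
  rw [SL2C.mul_apply, hf.mul_apply_zero, hf.mul_apply_one, SL2C.inv_zero_one, SL2C.inv_one_one]
  ring

lemma conj_one_zero (hf : IsDiagonalWith f l m) :
    (g * f * g⁻¹) 1 0 = g 1 0 * g 1 1 * (l - m) := by
  rw [SL2C.mul_apply, hf.mul_apply_zero, hf.mul_apply_one, SL2C.inv_zero_zero, SL2C.inv_one_zero]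
  ring

lemma conj_one_one (hf : IsDiagonalWith f l m) :
    (g * f * g⁻¹) 1 1 = (1 + g 0 1 * g 1 0) * m - g 0 1 * g 1 0 * l := by
  rw [SL2C.mul_apply, hf.mul_apply_zero, hf.mul_apply_one, SL2C.inv_zero_one, SL2C.inv_one_one]
  linear_combination m * g.det_eq_one

lemma conj_offDiag_mul (hf : IsDiagonalWith f l m) :
    (g * f * g⁻¹) 0 1 * (g * f * g⁻¹) 1 0 =
      (2 - l ^ 2 - m ^ 2) * (g 0 1 * g 1 0) * (1 + g 0 1 * g 1 0) := by
  rw [hf.conj_zero_one, hf.conj_one_zero]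
  linear_combination 2 * g 0 1 * g 1 0 * (1 + g 0 1 * g 1 0) * hf.mul_eq_one -
    g 0 1 * g 1 0 * (l - m) ^ 2 * g.det_eq_one

lemma trace_conj_mul (hf : IsDiagonalWith f l m) :
    (g * f * g⁻¹ * f) 0 0 + (g * f * g⁻¹ * f) 1 1 =
      2 - (2 - l ^ 2 - m ^ 2) * (1 + g 0 1 * g 1 0) := by
  rw [hf.mul_apply_zero, hf.mul_apply_one, hf.conj_zero_zero, hf.conj_one_one]
  linear_combination -2 * g 0 1 * g 1 0 * hf.mul_eq_one

lemma conj_mul_mul_zero_one (hf : IsDiagonalWith f l m) :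
    (g * f * g⁻¹ * f * g) 0 1 = (1 - (2 - l ^ 2 - m ^ 2) * (1 + g 0 1 * g 1 0)) * g 0 1 := by
  rw [SL2C.mul_apply, hf.mul_apply_zero, hf.mul_apply_one, hf.conj_zero_zero, hf.conj_zero_one]
  linear_combination g 0 1 * (m ^ 2 - l * m) * g.det_eq_one -
    g 0 1 * (1 + 2 * g 0 1 * g 1 0) * hf.mul_eq_one

lemma conj_mul_mul_one_zero (hf : IsDiagonalWith f l m) :
    (g * f * g⁻¹ * f * g) 1 0 = (1 - (2 - l ^ 2 - m ^ 2) * (1 + g 0 1 * g 1 0)) * g 1 0 := by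
  rw [SL2C.mul_apply, hf.mul_apply_zero, hf.mul_apply_one, hf.conj_one_zero, hf.conj_one_one]
  linear_combination g 1 0 * (l ^ 2 - l * m) * g.det_eq_one -
    g 1 0 * (1 + 2 * g 0 1 * g 1 0) * hf.mul_eq_one

end IsDiagonalWith

/-! ### The set of axis parameters -/

/-- The parameters `x = g₀₁ g₁₀` of all `g` for which `Γ` contains `g f g⁻¹`. When `f` is diagonal,
`x / (1 + x)` is the cross ratio of the fixed points `0, ∞` of `f` and `g 0, g ∞` of `g f g⁻¹`; the
axes of the two meet exactly when `x ∈ [-1, 0]`, and in general `‖x‖ + ‖1 + x‖` is the hyperbolic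
cosine of their distance. -/
def axisParams (Γ : Subgroup SL2C) (f : SL2C) : Set ℂ :=
  {x | ∃ g : SL2C, g * f * g⁻¹ ∈ Γ ∧ g 0 1 * g 1 0 = x}

section Closure

variable {Γ : Subgroup SL2C} {f : SL2C} {l m σ x : ℂ}

lemma conj_mul_mem {f g W : SL2C} (hg : g * f * g⁻¹ ∈ Γ) (hW : W ∈ Γ) :
    W * g * f * (W * g)⁻¹ ∈ Γ := by
  have : W * g * f * (W * g)⁻¹ = W * (g * f * g⁻¹) * W⁻¹ := by group
  exact this ▸ Γ.mul_mem (Γ.mul_mem hW hg) (Γ.inv_mem hW)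

lemma conj_mem_of_mem (hfΓ : f ∈ Γ) {W : SL2C} (hW : W ∈ Γ) : W * f * W⁻¹ ∈ Γ :=
  Γ.mul_mem (Γ.mul_mem hW hfΓ) (Γ.inv_mem hW)

-- `J` exchanges the two fixed points of `f`, so `(g J) f (g J)⁻¹ = (g f g⁻¹)⁻¹`.
lemma neg_one_sub_mem_axisParams (hf : IsDiagonalWith f l m) (hx : x ∈ axisParams Γ f) :
    -1 - x ∈ axisParams Γ f := by
  obtain ⟨g, hg, rfl⟩ := hx
  set J : SL2C := mkSL2C 0 1 (-1) 0 (by norm_num) with hJ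
  have hJf : J * f * J⁻¹ = f⁻¹ := by
    apply SL2C.ext_entries
    · rw [hf.conj_zero_zero, hf.inv.zero_zero]; simp [hJ, mkSL2C]
    · rw [hf.conj_zero_one, hf.inv.zero_one]; simp [hJ, mkSL2C]
    · rw [hf.conj_one_zero, hf.inv.one_zero]; simp [hJ, mkSL2C]
    · rw [hf.conj_one_one, hf.inv.one_one]; simp [hJ, mkSL2C]
  refine ⟨g * J, ?_, ?_⟩
  · have : g * J * f * (g * J)⁻¹ = (g * f * g⁻¹)⁻¹ := calc
      _ = g * (J * f * J⁻¹) * g⁻¹ := by group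
      _ = _ := by rw [hJf]; group
    exact this ▸ Γ.inv_mem hg
  · rw [SL2C.mul_apply, SL2C.mul_apply]
    simp only [hJ, mkSL2C, Matrix.of_apply, Matrix.cons_val', Matrix.cons_val_zero,
      Matrix.cons_val_one, Matrix.cons_val_fin_one]
    linear_combination -g.det_eq_one

lemma IsDiagonalWith.conj_mul_pow_zero_one (hf : IsDiagonalWith f l m) (g : SL2C) (k : ℕ) :
    ((g * f * g⁻¹ * f) ^ (k + 1)) 0 1 =
      (Chebyshev.S ℂ k).eval (2 - (2 - l ^ 2 - m ^ 2) * (1 + g 0 1 * g 1 0)) *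
        (g * f * g⁻¹) 0 1 * m := by
  rw [SL2C.pow_succ_apply, hf.trace_conj_mul, hf.mul_apply_one]
  simp [mul_assoc]

lemma IsDiagonalWith.conj_mul_pow_one_zero (hf : IsDiagonalWith f l m) (g : SL2C) (k : ℕ) :
    ((g * f * g⁻¹ * f) ^ (k + 1)) 1 0 =
      (Chebyshev.S ℂ k).eval (2 - (2 - l ^ 2 - m ^ 2) * (1 + g 0 1 * g 1 0)) *
        (g * f * g⁻¹) 1 0 * l := by
  rw [SL2C.pow_succ_apply, hf.trace_conj_mul, hf.mul_apply_zero]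
  simp [mul_assoc]

lemma IsDiagonalWith.conj_mul_pow_offDiag_mul (hf : IsDiagonalWith f l m) (g : SL2C) (k : ℕ) :
    ((g * f * g⁻¹ * f) ^ (k + 1)) 0 1 * ((g * f * g⁻¹ * f) ^ (k + 1)) 1 0 =
      (2 - l ^ 2 - m ^ 2) * (g 0 1 * g 1 0) * (1 + g 0 1 * g 1 0) *
        (Chebyshev.S ℂ k).eval (2 - (2 - l ^ 2 - m ^ 2) * (1 + g 0 1 * g 1 0)) ^ 2 := by
  rw [hf.conj_mul_pow_zero_one, hf.conj_mul_pow_one_zero, ← hf.conj_offDiag_mul]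
  set s := (Chebyshev.S ℂ k).eval (2 - (2 - l ^ 2 - m ^ 2) * (1 + g 0 1 * g 1 0))
  linear_combination s ^ 2 * (g * f * g⁻¹) 0 1 * (g * f * g⁻¹) 1 0 * hf.mul_eq_one

lemma conj_mul_pow_mem_axisParams (hf : IsDiagonalWith f l m) (hfΓ : f ∈ Γ)
    (hσ : σ = 2 - l ^ 2 - m ^ 2) (hx : x ∈ axisParams Γ f) (k : ℕ) :
    σ * x * (1 + x) * (Chebyshev.S ℂ k).eval (2 - σ * (1 + x)) ^ 2 ∈ axisParams Γ f := by
  obtain ⟨g, hg, rfl⟩ := hx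
  exact ⟨_, conj_mem_of_mem hfΓ (Γ.pow_mem (Γ.mul_mem hg hfΓ) (k + 1)),
    hσ ▸ hf.conj_mul_pow_offDiag_mul g k⟩

lemma conj_mul_pow_mul_mem_axisParams (hf : IsDiagonalWith f l m) (hfΓ : f ∈ Γ)
    (hσ : σ = 2 - l ^ 2 - m ^ 2) (hx : x ∈ axisParams Γ f) (k : ℕ) :
    x * ((Chebyshev.S ℂ (k + 1)).eval (2 - σ * (1 + x)) -
      (Chebyshev.S ℂ k).eval (2 - σ * (1 + x))) ^ 2 ∈ axisParams Γ f := by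
  obtain ⟨g, hg, rfl⟩ := hx
  refine ⟨_, conj_mul_mem hg (Γ.pow_mem (Γ.mul_mem hg hfΓ) (k + 1)), ?_⟩
  have h01 := hf.conj_mul_mul_zero_one (g := g)
  have h10 := hf.conj_mul_mul_one_zero (g := g)
  have hS : (Chebyshev.S ℂ (k + 1)).eval (2 - σ * (1 + g 0 1 * g 1 0)) =
      (2 - σ * (1 + g 0 1 * g 1 0)) * (Chebyshev.S ℂ k).eval (2 - σ * (1 + g 0 1 * g 1 0)) -
        (Chebyshev.S ℂ (k - 1)).eval (2 - σ * (1 + g 0 1 * g 1 0)) := by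
    simp [Chebyshev.S_add_one]
  rw [SL2C.mul_apply, ← hσ] at h01 h10
  rw [hS, SL2C.mul_apply, SL2C.mul_apply]
  simp only [SL2C.pow_succ_apply, hf.trace_conj_mul, ← hσ,
    Matrix.one_apply_eq, Matrix.one_apply_ne zero_ne_one, Matrix.one_apply_ne one_ne_zero]
  set s := (Chebyshev.S ℂ k).eval (2 - σ * (1 + g 0 1 * g 1 0))
  set r := (Chebyshev.S ℂ (k - 1)).eval (2 - σ * (1 + g 0 1 * g 1 0))
  set M := g * f * g⁻¹ * f
  calc
    _ = (s * (M 0 0 * g 0 1 + M 0 1 * g 1 1) - r * g 0 1) *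
        (s * (M 1 0 * g 0 0 + M 1 1 * g 1 0) - r * g 1 0) := by ring
    _ = _ := by rw [h01, h10]; ring

end Closure
/-! ### Discreteness -/

section Discreteness

variable {Γ : Subgroup SL2C}

lemma IsDiscreteSubgroup.finite_setOf_norm_apply_le (hΓ : IsDiscreteSubgroup Γ) (R : ℝ) :
    {g : SL2C | g ∈ Γ ∧ ∀ i j, ‖g i j‖ ≤ R}.Finite := by
  have : DiscreteTopology Γ := hΓ
  have : IsTopologicalGroup SL2C := Matrix.SpecialLinearGroup.topologicalGroup
  have hval : IsClosedEmbedding ((↑) : SL2C → Matrix (Fin 2) (Fin 2) ℂ) :=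
    Matrix.SpecialLinearGroup.isClosedEmbedding_val
  have : T2Space SL2C := hval.isEmbedding.t2Space
  have hK : IsCompact {M : Matrix (Fin 2) (Fin 2) ℂ | ∀ i j, ‖M i j‖ ≤ R} := by
    have : IsCompact (Set.univ.pi fun _ : Fin 2 => Set.univ.pi fun _ : Fin 2 =>
        Metric.closedBall (0 : ℂ) R) :=
      isCompact_univ_pi fun _ => isCompact_univ_pi fun _ => isCompact_closedBall 0 R
    simp only [Set.pi, Set.mem_univ, forall_const, mem_closedBall_zero_iff] at this
    exact this
  have hcompact := (hval.isCompact_preimage hK).inter_left Γ.isClosed_of_discrete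
  exact hcompact.finite (IsDiscrete.mono ⟨hΓ⟩ Set.inter_subset_left)

lemma IsDiscreteSubgroup.eq_empty_of_descent (hΓ : IsDiscreteSubgroup Γ) {Z : Set SL2C} {R : ℝ}
    (hZΓ : ∀ h ∈ Z, h ∈ Γ) (hZR : ∀ h ∈ Z, ∀ i j, ‖h i j‖ ≤ R) (μ : SL2C → ℝ)
    (hdesc : ∀ h ∈ Z, ∃ h' ∈ Z, μ h' < μ h) : Z = ∅ := by
  by_contra hne
  have hfin : Z.Finite :=
    (hΓ.finite_setOf_norm_apply_le R).subset fun h hh => ⟨hZΓ h hh, hZR h hh⟩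
  obtain ⟨h, hh, hmin⟩ := Set.exists_min_image Z μ hfin (Set.nonempty_iff_ne_empty.2 hne)
  obtain ⟨h', hh', hlt⟩ := hdesc h hh
  exact (hmin h' hh').not_gt hlt

variable {f : SL2C} {l m σ : ℂ}

lemma eventually_chebyshev_affine_ne_zero (hσ : σ ≠ 0) (k : ℕ) :
    ∀ᶠ x in 𝓝[≠] (0 : ℂ), (Chebyshev.S ℂ k).eval (2 - σ * (1 + x)) ≠ 0 := by
  have hS : Chebyshev.S ℂ k ≠ 0 := by
    intro h
    have := Chebyshev.S_eval_two ℂ k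
    rw [h, eval_zero, Int.cast_natCast] at this
    exact Nat.cast_add_one_ne_zero k this.symm
  have hinj : Function.Injective fun x : ℂ => 2 - σ * (1 + x) := fun x y hxy => by
    simpa [hσ] using hxy
  have hroots := ((Chebyshev.S ℂ k).rootSet_finite ℂ).preimage hinj.injOn
  filter_upwards [nhdsNE_le_cofinite 0 hroots.compl_mem_cofinite] with x hx h0
  exact hx (by simpa [Polynomial.mem_rootSet, hS] using h0)

lemma IsDiagonalWith.pow (hf : IsDiagonalWith f l m) (k : ℕ) :
    IsDiagonalWith (f ^ k) (l ^ k) (m ^ k) := by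
  induction k with
  | zero => constructor <;> simp
  | succ k ih =>
    simp only [pow_succ]
    constructor
    · rw [hf.mul_apply_zero, ih.zero_zero]
    · rw [hf.mul_apply_one, ih.zero_one, zero_mul]
    · rw [hf.mul_apply_zero, ih.one_zero, zero_mul]
    · rw [hf.mul_apply_one, ih.one_one]

lemma IsDiagonalWith.exists_chebyshev_eval_eq_zero (hf : IsDiagonalWith f l m)
    (hfin : IsOfFinOrder f) (hne : l ^ 2 ≠ m ^ 2) :
    ∃ k : ℕ, (Chebyshev.S ℂ k).eval (l ^ 2 + m ^ 2) = 0 := by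
  obtain ⟨N, hN, hfN⟩ := isOfFinOrder_iff_pow_eq_one.1 hfin
  obtain ⟨k, rfl⟩ := Nat.exists_eq_add_of_lt hN
  rw [zero_add] at hfN
  have hone : (f ^ 2) ^ (k + 1) = 1 := by rw [← pow_mul, mul_comm, pow_mul, hfN, one_pow]
  have h0 := SL2C.pow_succ_apply (f ^ 2) k 0 0
  have h1 := SL2C.pow_succ_apply (f ^ 2) k 1 1
  rw [hone, (hf.pow 2).zero_zero, (hf.pow 2).one_one] at h0 h1
  simp only [Matrix.SpecialLinearGroup.coe_one, Matrix.one_apply_eq, mul_one] at h0 h1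
  refine ⟨k, (mul_eq_zero.1 ?_).resolve_right (sub_ne_zero.2 hne)⟩
  linear_combination h1 - h0

section Descent

variable {g W : SL2C} {k : ℕ}

lemma IsDiagonalWith.conj_conj_mul_pow_zero_one (hf : IsDiagonalWith f l m)
    (hW : W = (g * f * g⁻¹ * f) ^ (k + 1)) :
    (W * f * W⁻¹) 0 1 = (Chebyshev.S ℂ k).eval (2 - (2 - l ^ 2 - m ^ 2) * (1 + g 0 1 * g 1 0)) *
      (W 0 0 * m * (m - l)) * (g * f * g⁻¹) 0 1 := by
  rw [hf.conj_zero_one, show W 0 1 = _ from hW ▸ hf.conj_mul_pow_zero_one g k]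
  ring

lemma IsDiagonalWith.conj_conj_mul_pow_one_zero (hf : IsDiagonalWith f l m)
    (hW : W = (g * f * g⁻¹ * f) ^ (k + 1)) :
    (W * f * W⁻¹) 1 0 = (Chebyshev.S ℂ k).eval (2 - (2 - l ^ 2 - m ^ 2) * (1 + g 0 1 * g 1 0)) *
      (W 1 1 * l * (l - m)) * (g * f * g⁻¹) 1 0 := by
  rw [hf.conj_one_zero, show W 1 0 = _ from hW ▸ hf.conj_mul_pow_one_zero g k]
  ring

lemma IsDiagonalWith.conj_mul_pow_zero_zero (hf : IsDiagonalWith f l m)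
    (hW : W = (g * f * g⁻¹ * f) ^ (k + 1)) :
    W 0 0 = (Chebyshev.S ℂ k).eval (2 - (2 - l ^ 2 - m ^ 2) * (1 + g 0 1 * g 1 0)) *
      (((1 + g 0 1 * g 1 0) * l - g 0 1 * g 1 0 * m) * l) -
      (Chebyshev.S ℂ (k - 1)).eval (2 - (2 - l ^ 2 - m ^ 2) * (1 + g 0 1 * g 1 0)) := by
  rw [hW, SL2C.pow_succ_apply, hf.trace_conj_mul, hf.mul_apply_zero, hf.conj_zero_zero,
    Matrix.one_apply_eq, mul_one]

lemma IsDiagonalWith.conj_mul_pow_one_one (hf : IsDiagonalWith f l m)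
    (hW : W = (g * f * g⁻¹ * f) ^ (k + 1)) :
    W 1 1 = (Chebyshev.S ℂ k).eval (2 - (2 - l ^ 2 - m ^ 2) * (1 + g 0 1 * g 1 0)) *
      (((1 + g 0 1 * g 1 0) * m - g 0 1 * g 1 0 * l) * m) -
      (Chebyshev.S ℂ (k - 1)).eval (2 - (2 - l ^ 2 - m ^ 2) * (1 + g 0 1 * g 1 0)) := by
  rw [hW, SL2C.pow_succ_apply, hf.trace_conj_mul, hf.mul_apply_one, hf.conj_one_one,
    Matrix.one_apply_eq, mul_one]

lemma eventually_norm_lt_one_of_continuous {F : ℂ → ℂ} (hF : Continuous F) (h0 : F 0 = 0) :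
    ∀ᶠ x in 𝓝[≠] (0 : ℂ), ‖F x‖ < 1 :=
  nhdsWithin_le_nhds <| (hF.norm.tendsto 0).eventually_lt_const (by simp [h0])

lemma IsDiagonalWith.eventually_conj_mul_pow_lt (hf : IsDiagonalWith f l m) (hne : l ^ 2 ≠ m ^ 2)
    {k : ℕ} (hk : (Chebyshev.S ℂ k).eval (l ^ 2 + m ^ 2) = 0) :
    ∀ᶠ x in 𝓝[≠] (0 : ℂ), ∀ g W : SL2C, g 0 1 * g 1 0 = x → W = (g * f * g⁻¹ * f) ^ (k + 1) →
      W 0 1 * W 1 0 ≠ 0 ∧ ‖W 0 1 * W 1 0‖ < ‖x‖ ∧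
      ‖(W * f * W⁻¹) 0 1‖ < ‖(g * f * g⁻¹) 0 1‖ ∧ ‖(W * f * W⁻¹) 1 0‖ < ‖(g * f * g⁻¹) 1 0‖ := by
  obtain ⟨σ, hσ⟩ : ∃ σ, σ = 2 - l ^ 2 - m ^ 2 := ⟨_, rfl⟩
  have hσ0 : σ ≠ 0 := by
    rw [hσ, show 2 - l ^ 2 - m ^ 2 = -(l - m) ^ 2 by linear_combination -2 * hf.mul_eq_one]
    exact neg_ne_zero.2 (pow_ne_zero 2 (sub_ne_zero.2 fun h => hne (h ▸ rfl)))
  set s : ℂ → ℂ := fun x => (Chebyshev.S ℂ k).eval (2 - σ * (1 + x)) with hs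
  set r : ℂ → ℂ := fun x => (Chebyshev.S ℂ (k - 1)).eval (2 - σ * (1 + x))
  have hsc : Continuous s := (Chebyshev.S ℂ k).continuous.comp (by fun_prop)
  have hrc : Continuous r := (Chebyshev.S ℂ (k - 1)).continuous.comp (by fun_prop)
  have hs0 : s 0 = 0 := by
    have : 2 - σ * (1 + 0) = l ^ 2 + m ^ 2 := by rw [hσ]; ring
    simp only [hs, this, hk]
  have h01 := eventually_norm_lt_one_of_continuous
    (F := fun x => s x * ((s x * (((1 + x) * l - x * m) * l) - r x) * m * (m - l)))
    (by fun_prop) (by simp [hs0])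
  have h10 := eventually_norm_lt_one_of_continuous
    (F := fun x => s x * ((s x * (((1 + x) * m - x * l) * m) - r x) * l * (l - m)))
    (by fun_prop) (by simp [hs0])
  have hx := eventually_norm_lt_one_of_continuous (F := fun x => σ * (1 + x) * s x ^ 2)
    (by fun_prop) (by simp [hs0])
  have hneg : ∀ᶠ x in 𝓝[≠] (0 : ℂ), ‖x‖ < 1 :=
    eventually_norm_lt_one_of_continuous continuous_id rfl
  filter_upwards [h01, h10, hx, hneg, eventually_chebyshev_affine_ne_zero hσ0 k,
    self_mem_nhdsWithin] with x h01 h10 hx hneg hsx hx0 g W hgx hW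
  have hx1 : 1 + x ≠ 0 := fun h => by
    rw [show x = -1 by linear_combination h, norm_neg, norm_one] at hneg
    exact hneg.false
  have hprod : (g * f * g⁻¹) 0 1 * (g * f * g⁻¹) 1 0 ≠ 0 := by
    rw [hf.conj_offDiag_mul, ← hσ, hgx]
    exact mul_ne_zero (mul_ne_zero hσ0 hx0) hx1
  have hWx : W 0 1 * W 1 0 = σ * (1 + x) * s x ^ 2 * x := by
    rw [hW, hf.conj_mul_pow_offDiag_mul, ← hσ, hgx]
    ring
  have hlt {a b : ℂ} (ha : ‖a‖ < 1) (hb : b ≠ 0) : ‖a * b‖ < ‖b‖ := by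
    rw [norm_mul]
    exact mul_lt_of_lt_one_left (norm_pos_iff.2 hb) ha
  refine ⟨?_, ?_, ?_, ?_⟩
  · rw [hWx]
    exact mul_ne_zero (mul_ne_zero (mul_ne_zero hσ0 hx1) (pow_ne_zero 2 hsx)) hx0
  · exact hWx ▸ hlt hx hx0
  · rw [hf.conj_conj_mul_pow_zero_one hW, hf.conj_mul_pow_zero_zero hW, hgx, ← hσ]
    exact hlt h01 (left_ne_zero_of_mul hprod)
  · rw [hf.conj_conj_mul_pow_one_zero hW, hf.conj_mul_pow_one_one hW, hgx, ← hσ]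
    exact hlt h10 (right_ne_zero_of_mul hprod)

end Descent

lemma IsDiagonalWith.norm_conj_apply_diag_le (hf : IsDiagonalWith f l m) {g : SL2C}
    (hg : ‖g 0 1 * g 1 0‖ ≤ 1) (i : Fin 2) : ‖(g * f * g⁻¹) i i‖ ≤ 2 * ‖l‖ + 2 * ‖m‖ := by
  have h1 : ‖1 + g 0 1 * g 1 0‖ ≤ 2 := (norm_add_le _ _).trans (by rw [norm_one]; linarith)
  fin_cases i
  · simp only [Fin.zero_eta, hf.conj_zero_zero]
    refine (norm_sub_le _ _).trans ?_
    rw [norm_mul, norm_mul (_ * _) m]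
    gcongr
    linarith
  · simp only [Fin.mk_one, hf.conj_one_one]
    refine (norm_sub_le _ _).trans ?_
    rw [norm_mul, norm_mul (_ * _) l, add_comm]
    gcongr
    linarith

-- Some `(g f g⁻¹ f)ᵏ` is `±1` when `x = 0`, so replacing `g` by this word shrinks both off-diagonal
-- entries of `g f g⁻¹` when `x` is small.
lemma IsDiscreteSubgroup.exists_le_norm_of_mem_axisParams (hΓ : IsDiscreteSubgroup Γ)
    (hf : IsDiagonalWith f l m) (hfΓ : f ∈ Γ) (hfin : IsOfFinOrder f) (hne : l ^ 2 ≠ m ^ 2) :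
    ∃ ε > 0, ∀ x ∈ axisParams Γ f, x ≠ 0 → ε ≤ ‖x‖ := by
  obtain ⟨k, hk⟩ := hf.exists_chebyshev_eval_eq_zero hfin hne
  obtain ⟨ε, hε, hball⟩ := Metric.mem_nhdsWithin_iff.1 (hf.eventually_conj_mul_pow_lt hne hk)
  refine ⟨min ε 1, lt_min hε one_pos, ?_⟩
  rintro x ⟨g₀, hg₀, hgx⟩ hx0
  by_contra! hlt
  set R := 2 * ‖l‖ + 2 * ‖m‖ + ‖(g₀ * f * g₀⁻¹) 0 1‖ + ‖(g₀ * f * g₀⁻¹) 1 0‖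
  set Z : Set SL2C := {h | h ∈ Γ ∧ ∃ g, h = g * f * g⁻¹ ∧ g 0 1 * g 1 0 ≠ 0 ∧
    ‖g 0 1 * g 1 0‖ < min ε 1 ∧ ‖h 0 1‖ ≤ ‖(g₀ * f * g₀⁻¹) 0 1‖ ∧
    ‖h 1 0‖ ≤ ‖(g₀ * f * g₀⁻¹) 1 0‖}
  have hZR : ∀ h ∈ Z, ∀ i j, ‖h i j‖ ≤ R := by
    rintro _ ⟨-, g, rfl, -, hg, h01, h10⟩ i j
    have hdiag := hf.norm_conj_apply_diag_le (hg.le.trans (min_le_right _ _))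
    have := norm_nonneg ((g₀ * f * g₀⁻¹) 0 1)
    have := norm_nonneg ((g₀ * f * g₀⁻¹) 1 0)
    have := norm_nonneg l
    have := norm_nonneg m
    fin_cases i <;> fin_cases j
    · exact (hdiag 0).trans (by linarith)
    · exact h01.trans (by linarith)
    · exact h10.trans (by linarith)
    · exact (hdiag 1).trans (by linarith)
  have hdesc : ∀ h ∈ Z, ∃ h' ∈ Z, ‖h' 0 1‖ < ‖h 0 1‖ := by
    rintro _ ⟨hgΓ, g, rfl, hg0, hg, h01, h10⟩
    obtain ⟨hW0, hWx, hW01, hW10⟩ :=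
      hball ⟨mem_ball_zero_iff.2 (hg.trans_le (min_le_left _ _)), hg0⟩ g _ rfl rfl
    exact ⟨_, ⟨conj_mem_of_mem hfΓ (Γ.pow_mem (Γ.mul_mem hgΓ hfΓ) _), _, rfl, hW0,
      hWx.trans hg, hW01.le.trans h01, hW10.le.trans h10⟩, hW01⟩
  have hempty := hΓ.eq_empty_of_descent (fun _ h => h.1) hZR (fun h => ‖h 0 1‖) hdesc
  have hmem : g₀ * f * g₀⁻¹ ∈ Z :=
    ⟨hg₀, g₀, rfl, hgx ▸ hx0, hgx ▸ hlt, le_rfl, le_rfl⟩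
  exact hempty.subset hmem

/-! ### Commutators -/

namespace IsDiagonalWith

variable {g : SL2C}

lemma commutator_zero_zero (hf : IsDiagonalWith f l m) :
    (g * f * g⁻¹ * f⁻¹) 0 0 = 1 + g 0 1 * g 1 0 * (1 - m ^ 2) := by
  rw [hf.inv.mul_apply_zero, hf.conj_zero_zero]
  linear_combination (1 + g 0 1 * g 1 0) * hf.mul_eq_one

lemma commutator_zero_one (hf : IsDiagonalWith f l m) :
    (g * f * g⁻¹ * f⁻¹) 0 1 = g 0 0 * g 0 1 * (1 - l ^ 2) := by
  rw [hf.inv.mul_apply_one, hf.conj_zero_one]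
  linear_combination g 0 0 * g 0 1 * hf.mul_eq_one

lemma commutator_one_zero (hf : IsDiagonalWith f l m) :
    (g * f * g⁻¹ * f⁻¹) 1 0 = g 1 0 * g 1 1 * (1 - m ^ 2) := by
  rw [hf.inv.mul_apply_zero, hf.conj_one_zero]
  linear_combination g 1 0 * g 1 1 * hf.mul_eq_one

lemma commutator_one_one (hf : IsDiagonalWith f l m) :
    (g * f * g⁻¹ * f⁻¹) 1 1 = 1 + g 0 1 * g 1 0 * (1 - l ^ 2) := by
  rw [hf.inv.mul_apply_one, hf.conj_one_one]
  linear_combination (1 + g 0 1 * g 1 0) * hf.mul_eq_one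

end IsDiagonalWith

lemma commutator_mul_mem_axisParams (hf : IsDiagonalWith f l m) (hfΓ : f ∈ Γ)
    (hσ : σ = 2 - l ^ 2 - m ^ 2) {x y z : ℂ} (hx : x ∈ axisParams Γ f) (hy : y = 1 + x)
    (hz : z = σ * x * y) :
    x * ((1 + z) ^ 2 + (1 + z) * (σ * z + σ * (σ - 2) * y ^ 2) + σ * z ^ 2 + σ ^ 2 * y ^ 4 +
      σ ^ 2 * (σ - 3) * z * y ^ 2) ∈ axisParams Γ f := by
  obtain ⟨g, hg, rfl⟩ := hx
  set h := g * f * g⁻¹ with hh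
  refine ⟨_, conj_mul_mem hg (Γ.mul_mem (Γ.mul_mem (Γ.mul_mem hg hfΓ) (Γ.inv_mem hg))
    (Γ.inv_mem hfΓ)), ?_⟩
  have hz' : h 0 1 * h 1 0 = z := by rw [hf.conj_offDiag_mul, ← hσ, hz, hy]
  have hdet := g.det_eq_one
  have hlm := hf.mul_eq_one
  have hsq : (1 - l ^ 2) * (1 - m ^ 2) = σ := by
    linear_combination -hσ + (l * m + 1) * hlm
  have h01 : (h * f * h⁻¹ * f⁻¹ * g) 0 1 =
      g 0 1 * (1 + z + z * (1 - m ^ 2) + (1 - l ^ 2) ^ 2 * y ^ 2) := by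
    rw [SL2C.mul_apply, hf.commutator_zero_zero, hf.commutator_zero_one, hz', hh,
      hf.conj_zero_zero, hf.conj_zero_one, hz, hy]
    linear_combination
      g 0 1 * ((1 + g 0 1 * g 1 0) * l - g 0 1 * g 1 0 * m) * (m - l) * (1 - l ^ 2) * hdet +
      g 0 1 * (1 + g 0 1 * g 1 0) * (1 - l ^ 2) * (1 + 2 * (g 0 1 * g 1 0)) * hlm +
      g 0 1 * (g 0 1 * g 1 0) * (1 + g 0 1 * g 1 0) * hsq
  have h10 : (h * f * h⁻¹ * f⁻¹ * g) 1 0 =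
      g 1 0 * (1 + z + z * (1 - l ^ 2) + (1 - m ^ 2) ^ 2 * y ^ 2) := by
    rw [SL2C.mul_apply, hf.commutator_one_zero, hf.commutator_one_one, hz', hh,
      hf.conj_one_zero, hf.conj_one_one, hz, hy]
    linear_combination
      g 1 0 * ((1 + g 0 1 * g 1 0) * m - g 0 1 * g 1 0 * l) * (l - m) * (1 - m ^ 2) * hdet +
      g 1 0 * (1 + g 0 1 * g 1 0) * (1 - m ^ 2) * (1 + 2 * (g 0 1 * g 1 0)) * hlm +
      g 1 0 * (g 0 1 * g 1 0) * (1 + g 0 1 * g 1 0) * hsq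
  rw [h01, h10]
  rw [show 1 - m ^ 2 = σ - (1 - l ^ 2) by rw [hσ]; ring] at hsq ⊢
  linear_combination g 0 1 * g 1 0 * (z ^ 2 - 2 * (1 + z) * y ^ 2 - 3 * σ * z * y ^ 2 +
    y ^ 4 * ((1 - l ^ 2) * (σ - (1 - l ^ 2)) + σ)) * hsq

-- The commutator `[u, f]` has the same shape as `u`, with off-diagonal entries multiplied by
-- `1 - l²` and `1 - m²`.
lemma IsDiscreteSubgroup.eq_one_of_diag_eq_one (hΓ : IsDiscreteSubgroup Γ)
    (hf : IsDiagonalWith f l m) (hfΓ : f ∈ Γ) (hl : l ^ 2 ≠ 1) (hl1 : ‖1 - l ^ 2‖ < 1)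
    (hm1 : ‖1 - m ^ 2‖ < 1) {u : SL2C} (hu : u ∈ Γ) (hu0 : u 0 0 = 1) (hu1 : u 1 1 = 1) :
    u = 1 := by
  have hm : m ^ 2 ≠ 1 := fun h => hl <| by
    linear_combination -l ^ 2 * h + (l * m + 1) * hf.mul_eq_one
  set Z : Set SL2C := {t | t ∈ Γ ∧ t 0 0 = 1 ∧ t 1 1 = 1 ∧ (t 0 1 ≠ 0 ∨ t 1 0 ≠ 0) ∧
    ‖t 0 1‖ ≤ ‖u 0 1‖ ∧ ‖t 1 0‖ ≤ ‖u 1 0‖}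
  have hZR : ∀ t ∈ Z, ∀ i j, ‖t i j‖ ≤ 1 + ‖u 0 1‖ + ‖u 1 0‖ := by
    rintro t ⟨-, h00, h11, -, h01, h10⟩ i j
    have := norm_nonneg (u 0 1)
    have := norm_nonneg (u 1 0)
    fin_cases i <;> fin_cases j
    · simpa [h00] using by linarith
    · exact h01.trans (by linarith)
    · exact h10.trans (by linarith)
    · simpa [h11] using by linarith
  have hdesc : ∀ t ∈ Z, ∃ t' ∈ Z, ‖t' 0 1‖ + ‖t' 1 0‖ < ‖t 0 1‖ + ‖t 1 0‖ := by
    rintro t ⟨htΓ, h00, h11, hne, h01, h10⟩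
    have htri : t 0 1 * t 1 0 = 0 := by linear_combination h00 * t 1 1 + h11 - t.det_eq_one
    have hle {a b : ℂ} (ha : ‖a‖ < 1) : ‖b * a‖ ≤ ‖b‖ := by
      rw [norm_mul]; exact mul_le_of_le_one_right (norm_nonneg b) ha.le
    have hlt {a b : ℂ} (ha : ‖a‖ < 1) (hb : b ≠ 0) : ‖b * a‖ < ‖b‖ := by
      rw [norm_mul]; exact mul_lt_of_lt_one_right (norm_pos_iff.2 hb) ha
    refine ⟨t * f * t⁻¹ * f⁻¹, ⟨Γ.mul_mem (conj_mem_of_mem hfΓ htΓ) (Γ.inv_mem hfΓ), ?_⟩, ?_⟩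
    all_goals simp only [hf.commutator_zero_zero, hf.commutator_zero_one, hf.commutator_one_zero,
      hf.commutator_one_one, htri, h00, h11, zero_mul, add_zero, one_mul, mul_one, true_and]
    · exact ⟨hne.imp (mul_ne_zero · (sub_ne_zero.2 hl.symm))
        (mul_ne_zero · (sub_ne_zero.2 hm.symm)), (hle hl1).trans h01, (hle hm1).trans h10⟩
    · rcases hne with h | h
      · exact add_lt_add_of_lt_of_le (hlt hl1 h) (hle hm1)
      · exact add_lt_add_of_le_of_lt (hle hl1) (hlt hm1 h)
  have hempty := hΓ.eq_empty_of_descent (fun _ h => h.1) hZR _ hdesc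
  by_contra hne
  have hoff : u 0 1 ≠ 0 ∨ u 1 0 ≠ 0 := by
    by_contra! h
    exact hne (SL2C.ext_entries (by simp [hu0]) (by simp [h.1]) (by simp [h.2]) (by simp [hu1]))
  exact hempty.subset ⟨hu, hu0, hu1, hoff, le_rfl, le_rfl⟩

-- With `h = g f g⁻¹`, the equation says `h 0 1 * h 1 0 = -1`, and then `h f h⁻¹ f` is a nontrivial
-- triangular matrix with ones on the diagonal.
lemma IsDiscreteSubgroup.mul_one_add_ne_neg_one (hΓ : IsDiscreteSubgroup Γ)
    (hf : IsDiagonalWith f l m) (hfΓ : f ∈ Γ) (hne : l ^ 2 ≠ m ^ 2) (hl : l ^ 2 ≠ 1)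
    (hl1 : ‖1 - l ^ 2‖ < 1) (hm1 : ‖1 - m ^ 2‖ < 1) (hσ : σ = 2 - l ^ 2 - m ^ 2)
    {x : ℂ} (hx : x ∈ axisParams Γ f) : σ * x * (1 + x) ≠ -1 := by
  rintro hx1
  obtain ⟨g, hg, rfl⟩ := hx
  set h := g * f * g⁻¹
  have hoff : h 0 1 * h 1 0 = -1 := by rw [hf.conj_offDiag_mul, ← hσ, hx1]
  have htr : h 0 0 + h 1 1 = l + m := by rw [hf.conj_zero_zero, hf.conj_one_one]; ring
  have hlm := hf.mul_eq_one
  have hone : h * f * h⁻¹ * f = 1 := by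
    refine hΓ.eq_one_of_diag_eq_one hf hfΓ hl hl1 hm1 (Γ.mul_mem (conj_mem_of_mem hfΓ hg) hfΓ) ?_ ?_
    · rw [hf.mul_apply_zero, hf.conj_zero_zero, hoff]; linear_combination hlm
    · rw [hf.mul_apply_one, hf.conj_one_one, hoff]; linear_combination hlm
  have hml : m - l ≠ 0 := sub_ne_zero.2 fun h => hne (h ▸ rfl)
  have hm0 : m ≠ 0 := right_ne_zero_of_mul_eq_one hlm
  have hl0 : l ≠ 0 := left_ne_zero_of_mul_eq_one hlm
  have h01 : h 0 0 = 0 := by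
    have := congrArg (fun k : SL2C => k 0 1) hone
    simp only [hf.mul_apply_one, hf.conj_zero_one] at this
    have h01 : h 0 1 ≠ 0 := left_ne_zero_of_mul (hoff ▸ neg_ne_zero.2 one_ne_zero)
    simpa [h01, hml, hm0] using this
  have h10 : h 1 1 = 0 := by
    have := congrArg (fun k : SL2C => k 1 0) hone
    simp only [hf.mul_apply_zero, hf.conj_one_zero] at this
    have h10 : h 1 0 ≠ 0 := right_ne_zero_of_mul (hoff ▸ neg_ne_zero.2 one_ne_zero)
    simpa [h10, sub_ne_zero.2 (sub_ne_zero.1 hml).symm, hl0] using this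
  rw [h01, h10, add_zero] at htr
  exact hne (by linear_combination (m - l) * htr)

end Discreteness
/-! ### Contractions on sets that are isolated at the fixed point -/

section Contraction

variable {X : Type*} [MetricSpace X] {c : X} {φ : X → X} {ε θ ρ : ℝ}

lemma eq_empty_of_contraction {Z : Set X} (hε : 0 < ε) (hZ : ∀ x ∈ Z, ε ≤ dist x c)
    (hφ : Set.MapsTo φ Z Z) (hθ : θ < 1) (hc : ∀ x ∈ Z, dist (φ x) c ≤ θ * dist x c) : Z = ∅ := by
  refine Set.eq_empty_of_forall_notMem fun x hx => ?_
  have hθ0 : 0 ≤ θ := nonneg_of_mul_nonneg_left (dist_nonneg.trans (hc x hx))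
    (hε.trans_le (hZ x hx))
  have hiter : ∀ k : ℕ, φ^[k] x ∈ Z ∧ dist (φ^[k] x) c ≤ θ ^ k * dist x c := fun k => by
    induction k with
    | zero => simpa using hx
    | succ k ih =>
      rw [Function.iterate_succ_apply', pow_succ', mul_assoc]
      exact ⟨hφ ih.1, (hc _ ih.1).trans (mul_le_mul_of_nonneg_left ih.2 hθ0)⟩
  have hlim := (tendsto_pow_atTop_nhds_zero_of_lt_one hθ0 hθ).mul_const (dist x c)
  rw [zero_mul] at hlim
  obtain ⟨k, hk⟩ := (hlim.eventually (gt_mem_nhds hε)).exists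
  exact (hZ _ (hiter k).1).not_gt ((hiter k).2.trans_lt hk)

lemma eq_of_dist_le_of_contraction {S : Set X} (hS : ∃ ε > 0, ∀ x ∈ S, x ≠ c → ε ≤ dist x c)
    (hθ : θ < 1) (hφ : ∀ x ∈ S, x ≠ c → dist x c ≤ ρ →
      φ x ∈ S ∧ φ x ≠ c ∧ dist (φ x) c ≤ θ * dist x c) {x : X} (hx : x ∈ S) (hρ : dist x c ≤ ρ) :
    x = c := by
  obtain ⟨ε, hε, hiso⟩ := hS
  by_contra hxc
  have hempty := eq_empty_of_contraction (Z := {y ∈ S | y ≠ c ∧ dist y c ≤ ρ}) hε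
    (fun y hy => hiso y hy.1 hy.2.1)
    (fun y hy => ⟨(hφ y hy.1 hy.2.1 hy.2.2).1, (hφ y hy.1 hy.2.1 hy.2.2).2.1,
      (hφ y hy.1 hy.2.1 hy.2.2).2.2.trans
        ((mul_le_of_le_one_left dist_nonneg hθ.le).trans hy.2.2)⟩)
    hθ fun y hy => (hφ y hy.1 hy.2.1 hy.2.2).2.2
  exact hempty.subset ⟨hx, hxc, hρ⟩

end Contraction

/-! ### Systems of axis parameters -/

/-- The properties of `axisParams Γ f` on which the lower bounds rest, for a discrete group `Γ` and
an elliptic element `f` of trace `τ`, with `σ = 4 - τ²`. -/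
structure IsParamSystem (S : Set ℂ) (σ : ℝ) : Prop where
  exists_le_norm : ∃ ε > 0, ∀ x ∈ S, x ≠ 0 → ε ≤ ‖x‖
  neg_one_sub_mem : ∀ x ∈ S, -1 - x ∈ S
  chebyshev_mem : ∀ x ∈ S, ∀ k : ℕ,
    σ * x * (1 + x) * (Chebyshev.S ℂ k).eval (2 - σ * (1 + x)) ^ 2 ∈ S
  chebyshev_sub_mem : ∀ x ∈ S, ∀ k : ℕ, x * ((Chebyshev.S ℂ (k + 1)).eval (2 - σ * (1 + x)) -
    (Chebyshev.S ℂ k).eval (2 - σ * (1 + x))) ^ 2 ∈ S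
  commutator_mem : ∀ x ∈ S, ∀ y z : ℂ, y = 1 + x → z = σ * x * y →
    x * ((1 + z) ^ 2 + (1 + z) * (σ * z + σ * (σ - 2) * y ^ 2) + σ * z ^ 2 + σ ^ 2 * y ^ 4 +
      σ ^ 2 * (σ - 3) * z * y ^ 2) ∈ S

lemma IsDiscreteSubgroup.isParamSystem_axisParams {Γ : Subgroup SL2C} (hΓ : IsDiscreteSubgroup Γ)
    {f : SL2C} {l m : ℂ} (hf : IsDiagonalWith f l m) (hfΓ : f ∈ Γ) (hfin : IsOfFinOrder f)
    (hne : l ^ 2 ≠ m ^ 2) {σ : ℝ} (hσ : (σ : ℂ) = 2 - l ^ 2 - m ^ 2) :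
    IsParamSystem (axisParams Γ f) σ where
  exists_le_norm := hΓ.exists_le_norm_of_mem_axisParams hf hfΓ hfin hne
  neg_one_sub_mem _ hx := neg_one_sub_mem_axisParams hf hx
  chebyshev_mem _ hx := conj_mul_pow_mem_axisParams hf hfΓ hσ hx
  chebyshev_sub_mem _ hx := conj_mul_pow_mul_mem_axisParams hf hfΓ hσ hx
  commutator_mem _ hx _ _ := commutator_mul_mem_axisParams hf hfΓ hσ hx

/-- The parameters `x` of conjugates of a diagonal elliptic element whose axis meets its own. -/
def crossingParams : Set ℂ := Complex.ofReal '' Set.Icc (-1) 0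

lemma ofReal_mem_crossingParams {r : ℝ} (h1 : -1 ≤ r) (h2 : r ≤ 0) : (r : ℂ) ∈ crossingParams :=
  ⟨r, ⟨h1, h2⟩, rfl⟩

lemma zero_mem_crossingParams : (0 : ℂ) ∈ crossingParams :=
  ⟨0, by norm_num, Complex.ofReal_zero⟩

lemma mem_crossingParams_of_neg_one_sub {x : ℂ} (hx : -1 - x ∈ crossingParams) :
    x ∈ crossingParams := by
  obtain ⟨r, ⟨h1, h2⟩, hr⟩ := hx
  refine ⟨-1 - r, ⟨by linarith, by linarith⟩, ?_⟩
  rw [Complex.ofReal_sub, hr]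
  push_cast
  ring

lemma norm_neg_one_sub (x : ℂ) : ‖-1 - x‖ = ‖1 + x‖ := by
  rw [← norm_neg, show -(-1 - x) = 1 + x by ring]

lemma norm_ofReal_mul {r : ℝ} (hr : 0 ≤ r) (z : ℂ) : ‖(r : ℂ) * z‖ = r * ‖z‖ := by
  rw [norm_mul, Complex.norm_real, Real.norm_of_nonneg hr]

lemma norm_sq_eq_re_sq_add_im_sq (z : ℂ) : ‖z‖ ^ 2 = z.re ^ 2 + z.im ^ 2 := by
  rw [← Complex.normSq_eq_norm_sq, Complex.normSq_apply, sq, sq]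

namespace IsParamSystem

variable {S : Set ℂ} {σ : ℝ} {x : ℂ}

lemma mul_one_add_mem (hS : IsParamSystem S σ) (hx : x ∈ S) : σ * x * (1 + x) ∈ S := by
  simpa using hS.chebyshev_mem x hx 0

lemma mul_sq_mem (hS : IsParamSystem S σ) (hx : x ∈ S) : x * (1 - σ * (1 + x)) ^ 2 ∈ S := by
  have := hS.chebyshev_sub_mem x hx 0
  simp only [Nat.cast_zero, zero_add, Chebyshev.S_one, Chebyshev.S_zero, eval_X, eval_one] at this
  convert this using 3
  ring

lemma mul_one_add_mul_sq_mem (hS : IsParamSystem S σ) (hx : x ∈ S) :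
    σ * x * (1 + x) * (2 - σ * (1 + x)) ^ 2 ∈ S := by
  simpa using hS.chebyshev_mem x hx 1

lemma mem_crossingParams_of_symm (hS : IsParamSystem S σ) {K : ℝ}
    (h : ∀ y ∈ S, ‖y‖ ≤ ‖1 + y‖ → ‖y‖ + ‖1 + y‖ < K → y ∈ crossingParams) (hx : x ∈ S)
    (hK : ‖x‖ + ‖1 + x‖ < K) : x ∈ crossingParams := by
  rcases le_total ‖x‖ ‖1 + x‖ with hle | hle
  · exact h x hx hle hK
  · have e : ‖1 + (-1 - x)‖ = ‖x‖ := by rw [← norm_neg]; ring_nf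
    refine mem_crossingParams_of_neg_one_sub (h _ (hS.neg_one_sub_mem x hx) ?_ ?_)
    · rwa [norm_neg_one_sub, e]
    · rwa [norm_neg_one_sub, e, add_comm]

end IsParamSystem

/-! ### Order at least seven -/

lemma one_le_norm_add_norm_one_add (x : ℂ) : 1 ≤ ‖x‖ + ‖1 + x‖ := by
  have := norm_sub_le (1 + x) x
  rw [add_sub_cancel_right, norm_one] at this
  linarith

lemma norm_one_add_two_mul_sq (x : ℂ) :
    ‖1 + 2 * x‖ ^ 2 = 2 * ‖x‖ ^ 2 + 2 * ‖1 + x‖ ^ 2 - 1 := by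
  simp only [norm_sq_eq_re_sq_add_im_sq]
  simp
  ring

lemma norm_mul_one_add_add_le {σ : ℝ} (hσ : 0 ≤ σ) {x : ℂ}
    (hx : σ * (‖x‖ + ‖1 + x‖ + 1) ≤ 2) :
    ‖σ * x * (1 + x)‖ + ‖1 + σ * x * (1 + x)‖ ≤ ‖x‖ + ‖1 + x‖ := by
  have hone := one_le_norm_add_norm_one_add x
  have hσ1 : σ ≤ 1 := by nlinarith
  have hprod : ‖σ * x * (1 + x)‖ = σ * ‖x‖ * ‖1 + x‖ := by rw [norm_mul, norm_ofReal_mul hσ]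
  have hone_add : ‖1 + σ * x * (1 + x)‖ ≤ 1 - σ / 4 + σ / 4 * ‖1 + 2 * x‖ ^ 2 := calc
    _ = ‖((1 - σ / 4 : ℝ) : ℂ) + ((σ / 4 : ℝ) : ℂ) * (1 + 2 * x) ^ 2‖ := by
      congr 1; push_cast; ring
    _ ≤ _ := by
      refine (norm_add_le _ _).trans ?_
      rw [norm_ofReal_mul (by positivity), Complex.norm_real, Real.norm_of_nonneg (by linarith),
        norm_pow]
  rw [norm_one_add_two_mul_sq] at hone_add
  rw [hprod]
  nlinarith [mul_nonneg (sub_nonneg.2 hone) (sub_nonneg.2 hx)]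

lemma IsParamSystem.mem_crossingParams_of_mul_one_add_ne {S : Set ℂ} {σ : ℝ} (hσ : 0 < σ)
    (hS : IsParamSystem S σ) (hne : ∀ x ∈ S, σ * x * (1 + x) ≠ -1) {x : ℂ} (hx : x ∈ S)
    (hK : ‖x‖ + ‖1 + x‖ < 2 / σ - 1) : x ∈ crossingParams := by
  set D := ‖x‖ + ‖1 + x‖
  have hσD : σ * (D + 1) < 2 := by
    rwa [lt_sub_iff_add_lt, lt_div_iff₀ hσ, mul_comm] at hK
  by_contra hcross
  have hx0 : x ≠ 0 := fun h => hcross (h ▸ zero_mem_crossingParams)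
  have hx1 : x ≠ -1 := fun h => hcross <| mem_crossingParams_of_neg_one_sub <| by
    rw [h, sub_self]; exact zero_mem_crossingParams
  obtain ⟨ε, hε, hiso⟩ := hS.exists_le_norm
  have hempty : {y ∈ S | y ≠ 0 ∧ y ≠ -1 ∧ ‖y‖ + ‖1 + y‖ ≤ D} = ∅ := by
    refine eq_empty_of_contraction (X := ℂ) (c := 0) (θ := σ * (D + 1) / 2)
      (φ := fun y => σ * y * (1 + y)) hε ?_ ?_ (by linarith) ?_
    · rintro y ⟨hy, hy0, -⟩
      simpa using hiso y hy hy0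
    · rintro y ⟨hy, hy0, hy1, hyD⟩
      have hy1' : 1 + y ≠ 0 := fun h => hy1 (by linear_combination h)
      refine ⟨hS.mul_one_add_mem hy,
        mul_ne_zero (mul_ne_zero (by exact_mod_cast hσ.ne') hy0) hy1', hne y hy,
        (norm_mul_one_add_add_le hσ.le ?_).trans hyD⟩
      nlinarith
    · rintro y ⟨-, -, -, hyD⟩
      have htri : ‖1 + y‖ ≤ 1 + ‖y‖ := (norm_add_le _ _).trans_eq (by rw [norm_one])
      rw [dist_zero_right, dist_zero_right, norm_mul, norm_ofReal_mul hσ.le]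
      nlinarith [mul_nonneg hσ.le (norm_nonneg y)]
  exact hempty.subset ⟨hx, hx0, hx1, le_rfl⟩

/-! ### Order six -/

lemma IsParamSystem.eq_zero_of_norm_lt_one {S : Set ℂ} (hS : IsParamSystem S 1) {x : ℂ}
    (hx : x ∈ S) (hx1 : ‖x‖ < 1) : x = 0 := by
  refine eq_of_dist_le_of_contraction (φ := fun y => y ^ 3) (θ := ‖x‖ ^ 2)
    (by simpa using hS.exists_le_norm) (by nlinarith [norm_nonneg x]) ?_ hx le_rfl
  intro y hy hy0 hyx
  refine ⟨?_, pow_ne_zero 3 hy0, ?_⟩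
  · convert hS.mul_sq_mem hy using 1
    push_cast
    ring
  · rw [dist_zero_right, dist_zero_right] at hyx ⊢
    rw [norm_pow, pow_succ]
    gcongr

lemma IsParamSystem.mem_crossingParams_of_order_six {S : Set ℂ} (hS : IsParamSystem S 1) {x : ℂ}
    (hx : x ∈ S) (hK : ‖x‖ + ‖1 + x‖ < 2) : x ∈ crossingParams :=
  hS.mem_crossingParams_of_symm (fun y hy hle hy2 => by
    rw [hS.eq_zero_of_norm_lt_one hy (by linarith)]
    exact zero_mem_crossingParams) hx hK
/-! ### Order five -/

section OrderFive

variable {σ : ℝ}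

lemma norm_sq_eq_and_re_eq_of_quadratic {z : ℂ} {b c : ℝ} (h : z ^ 2 + b * z + c = 0)
    (hd : b ^ 2 < 4 * c) : ‖z‖ ^ 2 = c ∧ z.re = -b / 2 := by
  have hre := congrArg Complex.re h
  have him := congrArg Complex.im h
  simp only [sq, Complex.add_re, Complex.mul_re, Complex.ofReal_re, Complex.ofReal_im, zero_mul,
    sub_zero, Complex.zero_re, Complex.add_im, Complex.mul_im, add_zero, Complex.zero_im] at hre him
  rw [norm_sq_eq_re_sq_add_im_sq]
  have hprod : z.im * (2 * z.re + b) = 0 := by linarith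
  rcases mul_eq_zero.1 hprod with h0 | h0
  · rw [h0] at hre
    nlinarith [sq_nonneg (2 * z.re + b)]
  · obtain rfl : b = -2 * z.re := by linarith
    constructor <;> nlinarith

-- `σ = (5 - √5) / 2 = 4 sin² (π / 5)` is the root of `σ² = 5 σ - 5` below `2`.
lemma four_thirds_lt_and_lt_three_halves (hσ : σ ^ 2 = 5 * σ - 5) (hσ2 : σ < 2) :
    4 / 3 < σ ∧ σ < 3 / 2 := by
  constructor <;> nlinarith

lemma eq_neg_one_or_of_mul_sq_eq (hσ : σ ^ 2 = 5 * σ - 5) (hσ2 : σ < 2) {z : ℂ}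
    (hz : z * (1 - σ - z) ^ 2 = 1 - σ) : z = -1 ∨ ‖z‖ ^ 2 = σ - 1 ∧ z.re = 3 / 2 - σ := by
  have hσc : (σ : ℂ) ^ 2 = 5 * σ - 5 := by exact_mod_cast hσ
  have hfac : (z + 1) * (z ^ 2 + (2 * σ - 3 : ℝ) * z + (σ - 1 : ℝ)) = 0 := by
    push_cast
    linear_combination hz - z * hσc
  obtain ⟨h1, h2⟩ := four_thirds_lt_and_lt_three_halves hσ hσ2
  refine (mul_eq_zero.1 hfac).imp eq_neg_of_add_eq_zero_left fun hquad => ?_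
  have h := norm_sq_eq_and_re_eq_of_quadratic hquad (by nlinarith)
  exact ⟨h.1, by rw [h.2]; ring⟩

lemma two_lt_norm_add_norm_add_of_norm_sq_eq (hσ : σ ^ 2 = 5 * σ - 5) {z : ℂ}
    (hz : ‖z‖ ^ 2 = σ - 1) (hre : z.re = 3 / 2 - σ) : 2 < ‖z‖ + ‖z + σ‖ := by
  have hb : ‖z + σ‖ ^ 2 = 4 - σ := by
    have : ‖z + σ‖ ^ 2 = ‖z‖ ^ 2 + 2 * z.re * σ + σ ^ 2 := by
      simp only [norm_sq_eq_re_sq_add_im_sq, Complex.add_re, Complex.add_im, Complex.ofReal_re,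
        Complex.ofReal_im]
      ring
    rw [this, hz, hre]
    linear_combination -hσ
  have hprod : (‖z‖ * ‖z + σ‖) ^ 2 = 1 := by
    rw [mul_pow, hz, hb]
    linear_combination -hσ
  have hprod1 : ‖z‖ * ‖z + σ‖ = 1 :=
    (sq_eq_sq₀ (by positivity) one_pos.le).1 (by rw [hprod, one_pow])
  nlinarith [norm_nonneg z, norm_nonneg (z + σ)]

lemma IsParamSystem.eq_zero_or_of_norm_lt {S : Set ℂ} (hS : IsParamSystem S σ)
    (hσ : σ ^ 2 = 5 * σ - 5) (hσ2 : σ < 2) {x : ℂ} (hx : x ∈ S) (hlt : ‖σ * x‖ < 2 - σ) :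
    x = 0 ∨ σ * x = 1 - σ := by
  obtain ⟨hσ4, hσ3⟩ := four_thirds_lt_and_lt_three_halves hσ hσ2
  have hσ0 : 0 < σ := by linarith
  obtain ⟨ε, hε, hiso⟩ := hS.exists_le_norm
  refine or_iff_not_imp_right.2 fun hxσ => ?_
  rw [norm_ofReal_mul hσ0.le] at hlt
  refine eq_of_dist_le_of_contraction (X := ℂ) (S := {y ∈ S | σ * y ≠ 1 - σ}) (ρ := ‖x‖)
    (φ := fun y => y * (1 - σ * (1 + y)) ^ 2) (θ := (σ * ‖x‖ + (σ - 1)) ^ 2)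
    ⟨ε, hε, fun y hy hy0 => by simpa using hiso y hy.1 hy0⟩ ?_ ?_ ⟨hx, hxσ⟩ (by simp)
  · exact pow_lt_one₀ (add_nonneg (by positivity) (by linarith)) (by linarith) two_ne_zero
  rintro y ⟨hy, hyσ⟩ hy0 hyx
  rw [dist_zero_right] at hyx
  have hyx' : σ * ‖y‖ ≤ σ * ‖x‖ := mul_le_mul_of_nonneg_left hyx hσ0.le
  refine ⟨⟨hS.mul_sq_mem hy, fun h => ?_⟩, mul_ne_zero hy0 (pow_ne_zero 2 fun h => hyσ ?_), ?_⟩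
  · have hroot := eq_neg_one_or_of_mul_sq_eq hσ hσ2 (z := σ * y) (by linear_combination h)
    rcases hroot with h1 | ⟨h1, -⟩
    · have := norm_ofReal_mul hσ0.le y
      rw [h1, norm_neg, norm_one] at this
      linarith
    · rw [norm_ofReal_mul hσ0.le] at h1
      have := pow_lt_pow_left₀ (hyx'.trans_lt hlt) (by positivity) two_ne_zero
      linarith
  · linear_combination -h
  · have hnorm : ‖1 - σ * (1 + y)‖ ≤ σ * ‖x‖ + (σ - 1) := calc
      _ = ‖(σ : ℂ) * y + ((σ - 1 : ℝ) : ℂ)‖ := by rw [← norm_neg]; congr 1; push_cast; ring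
      _ ≤ _ := by
        refine (norm_add_le _ _).trans ?_
        rw [norm_ofReal_mul hσ0.le, Complex.norm_real, Real.norm_of_nonneg (by linarith)]
        linarith
    rw [dist_zero_right, dist_zero_right, norm_mul, norm_pow, mul_comm]
    gcongr

lemma mul_cubic_lt (hσ : σ ^ 2 = 5 * σ - 5) (hσ2 : σ < 2) {a b : ℝ} (ha : 0 ≤ a) (hab : a ≤ b)
    (hsum : a + b < 2) : a * (a ^ 2 + (σ - 1) * b ^ 2 - σ * (σ - 1)) < σ * (2 - σ) := by
  obtain ⟨hσ4, hσ3⟩ := four_thirds_lt_and_lt_three_halves hσ hσ2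
  have hfac : 0 < (1 - a) * (σ * (2 - σ) + a * (4 - 3 * σ) + σ * a ^ 2) := by
    refine mul_pos (by linarith) ?_
    nlinarith [mul_nonneg (show 0 ≤ σ by linarith) (sq_nonneg a)]
  calc
    _ ≤ a * (a ^ 2 + (σ - 1) * (2 - a) ^ 2 - σ * (σ - 1)) := by
      gcongr <;> linarith
    _ < _ := by linarith

-- `1 - σ (1 + x)` is minus a convex combination of `σ x` and `σ (1 + x)`, so Stewart's theorem
-- expresses its norm through theirs.
lemma norm_mul_sq_lt_two_sub (hσ : σ ^ 2 = 5 * σ - 5) (hσ2 : σ < 2) {x : ℂ}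
    (hle : ‖x‖ ≤ ‖1 + x‖) (hK : σ * (‖x‖ + ‖1 + x‖) < 2) :
    ‖(σ : ℂ) * (x * (1 - σ * (1 + x)) ^ 2)‖ < 2 - σ := by
  have hσ0 : 0 < σ := by linarith [(four_thirds_lt_and_lt_three_halves hσ hσ2).1]
  have hstewart : σ * ‖1 - σ * (1 + x)‖ ^ 2 =
      (σ * ‖x‖) ^ 2 + (σ - 1) * (σ * ‖1 + x‖) ^ 2 - σ * (σ - 1) := by
    rw [mul_pow, mul_pow]
    simp only [norm_sq_eq_re_sq_add_im_sq]
    simp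
    ring
  have hcubic := mul_cubic_lt hσ hσ2 (a := σ * ‖x‖) (b := σ * ‖1 + x‖) (by positivity)
    (mul_le_mul_of_nonneg_left hle hσ0.le) (by linarith)
  rw [← hstewart] at hcubic
  rw [norm_ofReal_mul hσ0.le, norm_mul, norm_pow]
  refine lt_of_mul_lt_mul_left ?_ hσ0.le
  linarith

lemma mem_crossingParams_of_ofReal_mul (hσ : 0 < σ) {x : ℂ} {r : ℝ} (hx : σ * x = r) (h1 : -1 ≤ r)
    (h0 : r ≤ 0) (h1σ : 1 ≤ σ) : x ∈ crossingParams := by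
  have : x = ((r / σ : ℝ) : ℂ) := by
    have : (σ : ℂ) ≠ 0 := by exact_mod_cast hσ.ne'
    push_cast
    rw [← hx]
    field_simp
  rw [this]
  refine ofReal_mem_crossingParams ?_ (div_nonpos_of_nonpos_of_nonneg h0 hσ.le)
  rw [le_div_iff₀ hσ]
  linarith

lemma IsParamSystem.mem_crossingParams_of_order_five {S : Set ℂ} (hS : IsParamSystem S σ)
    (hσ : σ ^ 2 = 5 * σ - 5) (hσ2 : σ < 2) {x : ℂ} (hx : x ∈ S) (hK : ‖x‖ + ‖1 + x‖ < 2 / σ) :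
    x ∈ crossingParams := by
  obtain ⟨hσ4, hσ3⟩ := four_thirds_lt_and_lt_three_halves hσ hσ2
  have hσ0 : 0 < σ := by linarith
  refine hS.mem_crossingParams_of_symm (fun y hy hle hK => ?_) hx hK
  rw [lt_div_iff₀' hσ0] at hK
  rcases hS.eq_zero_or_of_norm_lt hσ hσ2 (hS.mul_sq_mem hy)
    (norm_mul_sq_lt_two_sub hσ hσ2 hle hK) with h0 | h1
  · rcases mul_eq_zero.1 h0 with rfl | h
    · exact zero_mem_crossingParams
    · refine mem_crossingParams_of_ofReal_mul hσ0 (r := 1 - σ) ?_ (by linarith) (by linarith)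
        (by linarith)
      push_cast
      linear_combination -(pow_eq_zero_iff two_ne_zero).1 h
  · rcases eq_neg_one_or_of_mul_sq_eq hσ hσ2 (z := σ * y) (by linear_combination h1)
      with h | ⟨h, hre⟩
    · exact mem_crossingParams_of_ofReal_mul hσ0 (r := -1) (by simpa using h) le_rfl (by norm_num)
        (by linarith)
    · have hlt := two_lt_norm_add_norm_add_of_norm_sq_eq hσ h hre
      rw [show (σ : ℂ) * y + σ = σ * (1 + y) by ring, norm_ofReal_mul hσ0.le,
        norm_ofReal_mul hσ0.le] at hlt
      linarith

end OrderFive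

/-! ### Order four -/

section OrderFour

variable {S : Set ℂ} {x : ℂ}

lemma IsParamSystem.eq_zero_of_norm_lt (hS : IsParamSystem S 2) (hx : x ∈ S) (hlt : ‖x‖ < 0.309) :
    x = 0 := by
  refine eq_of_dist_le_of_contraction (φ := fun y => 8 * y ^ 3 * (1 + y))
    (θ := 8 * ‖x‖ ^ 2 * (1 + ‖x‖)) (by simpa using hS.exists_le_norm) ?_ ?_ hx le_rfl
  · calc 8 * ‖x‖ ^ 2 * (1 + ‖x‖) ≤ 8 * 0.309 ^ 2 * (1 + 0.309) := by gcongr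
      _ < 1 := by norm_num
  intro y hy hy0 hyx
  rw [dist_zero_right, dist_zero_right] at hyx
  refine ⟨?_, mul_ne_zero (mul_ne_zero (by norm_num) (pow_ne_zero 3 hy0)) fun h => ?_, ?_⟩
  · convert hS.mul_one_add_mul_sq_mem hy using 1
    push_cast
    ring
  · rw [eq_neg_of_add_eq_zero_right h, norm_neg, norm_one] at hyx
    linarith
  · rw [dist_zero_right, dist_zero_right]
    have hnorm : ‖1 + y‖ ≤ 1 + ‖x‖ := (norm_add_le _ _).trans (by rw [norm_one]; linarith)
    calc ‖8 * y ^ 3 * (1 + y)‖ = 8 * ‖y‖ ^ 2 * ‖1 + y‖ * ‖y‖ := by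
          rw [norm_mul, norm_mul, norm_pow, Complex.norm_ofNat]; ring
      _ ≤ _ := by gcongr

lemma IsParamSystem.eq_neg_half_of_norm_lt_quarter (hS : IsParamSystem S 2) (hx : x ∈ S)
    (hlt : ‖x + 1 / 2‖ < 1 / 4) : x = -1 / 2 := by
  have hone : ‖1 - 2 * (1 + x)‖ ≤ 1 / 2 := by
    rw [show 1 - 2 * (1 + x) = -2 * (x + 1 / 2) by ring, norm_mul, norm_neg, Complex.norm_ofNat]
    linarith
  have hx1 : ‖x‖ ≤ 3 / 4 := by
    have := norm_sub_le (x + 1 / 2) (1 / 2)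
    norm_num at this
    linarith
  have hQ : ‖x * (1 - 2 * (1 + x)) ^ 2‖ < 0.309 := by
    rw [norm_mul, norm_pow]
    calc ‖x‖ * ‖1 - 2 * (1 + x)‖ ^ 2 ≤ 3 / 4 * (1 / 2) ^ 2 := by gcongr
      _ < _ := by norm_num
  have hmem := hS.mul_sq_mem hx
  push_cast at hmem
  rcases mul_eq_zero.1 (hS.eq_zero_of_norm_lt hmem hQ) with rfl | h
  · norm_num at hlt
  · linear_combination -(1 / 2) * (pow_eq_zero_iff two_ne_zero).1 h

lemma IsParamSystem.eq_neg_half_of_norm_lt_half (hS : IsParamSystem S 2) (hx : x ∈ S)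
    (hlt : ‖x + 1 / 2‖ < 1 / 2) : x = -1 / 2 := by
  have hdist : ∀ y : ℂ, dist y (-1 / 2) = ‖y + 1 / 2‖ := fun y => by
    rw [dist_eq_norm]; congr 1; ring
  refine eq_of_dist_le_of_contraction (c := (-1 / 2 : ℂ)) (φ := fun y => 2 * y * (1 + y))
    (θ := 2 * ‖x + 1 / 2‖) ⟨1 / 4, by norm_num, fun y hy hne => ?_⟩ (by linarith) ?_ hx le_rfl
  · by_contra! h
    exact hne (hS.eq_neg_half_of_norm_lt_quarter hy (hdist y ▸ h))
  intro y hy hne hyx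
  have hsq : 2 * y * (1 + y) - -1 / 2 = 2 * (y - -1 / 2) ^ 2 := by ring
  refine ⟨by simpa using hS.mul_one_add_mem hy, fun h => hne ?_, ?_⟩
  · rw [← sub_eq_zero, hsq] at h
    simpa [sub_eq_zero] using h
  · rw [dist_eq_norm, hsq, norm_mul, norm_pow, Complex.norm_ofNat, ← dist_eq_norm, ← hdist]
    nlinarith [dist_nonneg (x := y) (y := (-1 / 2 : ℂ))]

lemma two_mul_norm_lt_one_and_sq_sub_one_lt (hfar : 1 ≤ ‖1 + 2 * x‖) (hle : ‖x‖ ≤ ‖1 + x‖)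
    (hK : ‖x‖ + ‖1 + x‖ < (1 + √3) / 2) :
    2 * ‖x‖ < 1 ∧ ‖1 + 2 * x‖ ^ 2 - 1 < (1 - 2 * ‖x‖) * (√3 - 2 * ‖x‖) := by
  have h3 : √3 ^ 2 = 3 := Real.sq_sqrt (by norm_num)
  have h3' : √3 < 1.733 := by rw [Real.sqrt_lt'] <;> norm_num
  have hpar := norm_one_add_two_mul_sq x
  have hsq : ‖1 + x‖ ^ 2 < ((1 + √3) / 2 - ‖x‖) ^ 2 :=
    pow_lt_pow_left₀ (by linarith) (norm_nonneg _) two_ne_zero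
  have hlt : ‖1 + 2 * x‖ ^ 2 - 1 < (1 - 2 * ‖x‖) * (√3 - 2 * ‖x‖) := by nlinarith
  refine ⟨?_, hlt⟩
  by_contra! h
  nlinarith

lemma order_four_polynomial_pos {N d : ℝ} (hN : 0.38 ≤ N) (hN1 : N < 1) (hd0 : 0 ≤ d)
    (hd1 : d ≤ 0.22) (hd2 : d ≤ 0.35 * (1 - N)) :
    0 < N * (1 - N) * (4 - N) + d * (-6 * N ^ 2 + 10 * N - 2) + d ^ 2 * (8 * N - 8) -
      8 * d ^ 3 := by
  have h1 : 0 ≤ d * (-6 * N ^ 2 + 10 * N - 2) := mul_nonneg hd0 (by nlinarith)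
  have h2 : d ^ 2 * (1 - N + d) ≤ 0.0484 * (1.35 * (1 - N)) :=
    mul_le_mul (by nlinarith) (by linarith) (by linarith) (by norm_num)
  have h3 : 1.2 * (1 - N) ≤ N * (4 - N) * (1 - N) :=
    mul_le_mul_of_nonneg_right (by nlinarith) (by linarith)
  nlinarith

lemma norm_mul_sq_add_half_lt_half (hx : 0.309 ≤ ‖x‖) (hx1 : 2 * ‖x‖ < 1) (hfar : 1 ≤ ‖1 + 2 * x‖)
    (hlt : ‖1 + 2 * x‖ ^ 2 - 1 < (1 - 2 * ‖x‖) * (√3 - 2 * ‖x‖)) :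
    ‖x * (1 - 2 * (1 + x)) ^ 2 + 1 / 2‖ < 1 / 2 := by
  have h3 : √3 < 1.733 := by rw [Real.sqrt_lt'] <;> norm_num
  set n := 2 * ‖x‖ with hn
  set d := (‖1 + 2 * x‖ ^ 2 - 1) / 2 with hd
  have hn2 : n ^ 2 = 4 * (x.re ^ 2 + x.im ^ 2) := by
    rw [hn, mul_pow, norm_sq_eq_re_sq_add_im_sq]; ring
  have hd' : d = 2 * (x.re ^ 2 + x.im ^ 2) + 2 * x.re := by
    rw [hd, norm_sq_eq_re_sq_add_im_sq]; simp; ring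
  have hexp : 4 * ‖x * (1 - 2 * (1 + x)) ^ 2 + 1 / 2‖ ^ 2 =
      1 - (n ^ 2 * (1 - n ^ 2) * (4 - n ^ 2) + d * (-6 * (n ^ 2) ^ 2 + 10 * n ^ 2 - 2) +
        d ^ 2 * (8 * n ^ 2 - 8) - 8 * d ^ 3) := by
    rw [norm_sq_eq_re_sq_add_im_sq, hn2, hd']
    simp [sq, Complex.mul_re, Complex.mul_im]
    ring
  have hdn : d ≤ (1 - n) * 1.115 / 2 := by
    have : (1 - n) * (√3 - n) ≤ (1 - n) * 1.115 := by gcongr; linarith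
    linarith
  have hpos := order_four_polynomial_pos (N := n ^ 2) (d := d) (by nlinarith) (by nlinarith)
    (by nlinarith) (by nlinarith) (by nlinarith)
  nlinarith [norm_nonneg (x * (1 - 2 * (1 + x)) ^ 2 + 1 / 2)]

lemma two_mul_norm_mul_sq_ne_one (hx : 2 * ‖x‖ < 1)
    (hlt : ‖1 + 2 * x‖ ^ 2 - 1 < (1 - 2 * ‖x‖) * (√3 - 2 * ‖x‖)) :
    2 * ‖x‖ * ‖1 + 2 * x‖ ^ 2 ≠ 1 := by
  intro h
  have h3 : √3 ^ 2 = 3 := Real.sq_sqrt (by norm_num)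
  have hx0 : 0 < 2 * ‖x‖ := by
    by_contra! h0
    rw [le_antisymm h0 (by positivity), zero_mul] at h
    exact zero_ne_one h
  have hmul := mul_lt_mul_of_pos_left hlt hx0
  have : 1 < 2 * ‖x‖ * (√3 - 2 * ‖x‖) := by
    refine lt_of_mul_lt_mul_left (a := 1 - 2 * ‖x‖) ?_ (by linarith)
    linarith
  nlinarith [sq_nonneg (2 * ‖x‖ - √3 / 2)]

lemma IsParamSystem.mem_crossingParams_of_order_four (hS : IsParamSystem S 2) (hx : x ∈ S)
    (hK : ‖x‖ + ‖1 + x‖ < (1 + √3) / 2) : x ∈ crossingParams := by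
  refine hS.mem_crossingParams_of_symm (fun y hy hle hK => ?_) hx hK
  rcases lt_or_ge ‖y‖ 0.309 with hlt | hge
  · exact hS.eq_zero_of_norm_lt hy hlt ▸ zero_mem_crossingParams
  have hhalf : ‖1 + 2 * y‖ = 2 * ‖y + 1 / 2‖ := by
    rw [show 1 + 2 * y = 2 * (y + 1 / 2) by ring, norm_mul, Complex.norm_ofNat]
  rcases lt_or_ge ‖y + 1 / 2‖ (1 / 2) with hlt | hge'
  · rw [hS.eq_neg_half_of_norm_lt_half hy hlt]
    exact_mod_cast ofReal_mem_crossingParams (r := -1 / 2) (by norm_num) (by norm_num)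
  have hfar : 1 ≤ ‖1 + 2 * y‖ := by linarith
  obtain ⟨hy1, hlt⟩ := two_mul_norm_lt_one_and_sq_sub_one_lt hfar hle hK
  have hmem := hS.mul_sq_mem hy
  push_cast at hmem
  have hQ := hS.eq_neg_half_of_norm_lt_half hmem (norm_mul_sq_add_half_lt_half hge hy1 hfar hlt)
  refine absurd ?_ (two_mul_norm_mul_sq_ne_one hy1 hlt)
  have := congrArg norm hQ
  rw [show 1 - 2 * (1 + y) = -(1 + 2 * y) by ring, norm_mul, norm_pow, norm_neg] at this
  norm_num at this
  linarith

end OrderFour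
/-! ### Order three -/

section OrderThree

/-- The trace coordinate `T = -1 - 3x` of the parameters of an element of order three;
`crossingParams` becomes the real segment `[-1, 2]`. -/
def traceParams (S : Set ℂ) : Set ℂ := {T | -(1 + T) / 3 ∈ S}

/-- The polynomial maps under which the traces of an element of order three are closed. They can be
evaluated in any structure with ring operations, lawful or not, hence also on Taylor models. -/
inductive TraceMove
  | symm
  | mulOneAdd
  | mulSq
  | mulOneAddMulSq
  | chebyshevSub
  | commutator

namespace TraceMove

/-- The value of a move at `T`. The constant `2` is spelled `1 + 1`, as `R` only provides `1`. -/
def eval {R : Type*} [One R] [Add R] [Sub R] [Mul R] (T : R) : TraceMove → R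
  | symm => 1 - T
  | mulOneAdd => T * T - T
  | mulSq => (T + 1) * ((T - 1) * (T - 1)) - 1
  | mulOneAddMulSq => (T + 1) * (1 + 1 - T) * (T * T) - 1
  | chebyshevSub => (T + 1) * ((T * T - T - 1) * (T * T - T - 1)) - 1
  | commutator => (T + 1) *
      ((T - 1) * (T - 1) * ((T - 1) * (T - 1)) - (T * T - T - 1) * (1 + 1 - T)) - 1

/-- The composite of a route of moves. The moves of a route are applied from left to right. -/
def evalRoute {R : Type*} [One R] [Add R] [Sub R] [Mul R] (T : R) (p : List TraceMove) : R :=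
  p.foldl eval T

lemma eval_mem {S : Set ℂ} (hS : IsParamSystem S 3) {T : ℂ} (hT : T ∈ traceParams S)
    (w : TraceMove) : w.eval T ∈ traceParams S := by
  have hT : -(1 + T) / 3 ∈ S := hT
  change -(1 + w.eval T) / 3 ∈ S
  cases w with
  | symm => convert hS.neg_one_sub_mem _ hT using 1; simp only [eval]; ring
  | mulOneAdd =>
    convert hS.neg_one_sub_mem _ (hS.mul_one_add_mem hT) using 1
    simp only [eval]; push_cast; ring
  | mulSq => convert hS.mul_sq_mem hT using 1; simp only [eval]; push_cast; ring
  | mulOneAddMulSq =>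
    convert hS.mul_one_add_mul_sq_mem hT using 1; simp only [eval]; push_cast; ring
  | chebyshevSub =>
    convert hS.chebyshev_sub_mem _ hT 1 using 1
    simp [eval, Chebyshev.S_two]
    ring
  | commutator =>
    convert hS.commutator_mem _ hT _ _ rfl rfl using 1
    simp only [eval]; push_cast; ring

lemma evalRoute_mem {S : Set ℂ} (hS : IsParamSystem S 3) {T : ℂ} (hT : T ∈ traceParams S)
    (p : List TraceMove) : evalRoute T p ∈ traceParams S := by
  induction p generalizing T with
  | nil => exact hT
  | cons w _ ih => exact ih (eval_mem hS hT w)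

lemma evalRoute_conj (T : ℂ) (p : List TraceMove) :
    evalRoute (starRingEnd ℂ T) p = starRingEnd ℂ (evalRoute T p) := by
  induction p generalizing T with
  | nil => rfl
  | cons w p ih =>
    have hw : w.eval (starRingEnd ℂ T) = starRingEnd ℂ (w.eval T) := by cases w <;> simp [eval]
    change evalRoute (w.eval (starRingEnd ℂ T)) p = starRingEnd ℂ (evalRoute (w.eval T) p)
    rw [hw, ih]

end TraceMove

lemma goldenConj_mem_Ioo : goldenConj ∈ Set.Ioo (-0.6180340 : ℝ) (-0.6180339) := by
  have h1 : √5 < (2.236068 : ℝ) := by rw [Real.sqrt_lt'] <;> norm_num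
  have h2 : (2.2360678 : ℝ) < √5 := by rw [Real.lt_sqrt] <;> norm_num
  constructor <;> rw [goldenConj] <;> linarith

variable {S : Set ℂ} {T : ℂ}

namespace IsParamSystem

lemma mul_cube_mem (hS : IsParamSystem S 3) {x : ℂ} (hx : x ∈ S) :
    27 * (1 + x) * (2 + 3 * x) ^ 2 * x ^ 3 ∈ S := by
  convert hS.chebyshev_mem x hx 2 using 1
  simp [Chebyshev.S_two]
  ring

lemma eq_zero_of_norm_lt_of_order_three (hS : IsParamSystem S 3) {x : ℂ} (hx : x ∈ S)
    (hx1 : 3 * ‖x‖ < 0.245) : x = 0 := by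
  set ρ := ‖x‖
  have hθ : 27 * (1 + ρ) * (2 + 3 * ρ) ^ 2 * ρ ^ 2 < 1 := by
    have : ρ ≤ 0.245 / 3 := by linarith
    calc 27 * (1 + ρ) * (2 + 3 * ρ) ^ 2 * ρ ^ 2
        ≤ 27 * (1 + 0.245 / 3) * (2 + 3 * (0.245 / 3)) ^ 2 * (0.245 / 3) ^ 2 := by gcongr
      _ < 1 := by norm_num
  refine eq_of_dist_le_of_contraction (φ := fun y => 27 * (1 + y) * (2 + 3 * y) ^ 2 * y ^ 3)
    (by simpa using hS.exists_le_norm) hθ (fun y hy hy0 hyρ => ?_) hx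
    (dist_zero_right x).le
  rw [dist_zero_right] at hyρ
  have hne : ∀ r : ℝ, r ≤ -0.5 → y ≠ r := by
    rintro r hr rfl
    rw [Complex.norm_real, Real.norm_of_nonpos (by linarith)] at hyρ
    linarith
  have hne1 : 1 + y ≠ 0 := fun h => hne (-1) (by norm_num) (by push_cast; linear_combination h)
  have hne2 : 2 + 3 * y ≠ 0 := fun h =>
    hne (-2 / 3) (by norm_num) (by push_cast; linear_combination h / 3)
  refine ⟨hS.mul_cube_mem hy, by simp [hne1, hne2, hy0], ?_⟩
  have h1 : ‖1 + y‖ ≤ 1 + ρ := (norm_add_le _ _).trans (by rw [norm_one]; linarith)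
  have h2 : ‖2 + 3 * y‖ ≤ 2 + 3 * ρ := (norm_add_le _ _).trans (by
    rw [norm_mul, Complex.norm_ofNat, Complex.norm_ofNat]; linarith)
  simp only [dist_zero_right, norm_mul, norm_pow, Complex.norm_ofNat]
  calc 27 * ‖1 + y‖ * ‖2 + 3 * y‖ ^ 2 * ‖y‖ ^ 3
      = 27 * ‖1 + y‖ * ‖2 + 3 * y‖ ^ 2 * ‖y‖ ^ 2 * ‖y‖ := by ring
    _ ≤ 27 * (1 + ρ) * (2 + 3 * ρ) ^ 2 * ρ ^ 2 * ‖y‖ := by gcongr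

lemma trace_eq_neg_one (hS : IsParamSystem S 3) (hT : T ∈ traceParams S)
    (hT1 : ‖T + 1‖ < 0.245) : T = -1 := by
  have hnorm : 3 * ‖-(1 + T) / 3‖ = ‖T + 1‖ := by
    rw [norm_div, norm_neg, Complex.norm_ofNat, add_comm]; ring
  have := hS.eq_zero_of_norm_lt_of_order_three hT (by rwa [hnorm])
  linear_combination -3 * this

lemma trace_eq_zero (hS : IsParamSystem S 3) (hT : T ∈ traceParams S) (hT0 : ‖T‖ < 0.28) :
    T = 0 := by
  have h1 : ‖T + 1‖ ≤ 1.28 := (norm_add_le _ _).trans (by rw [norm_one]; linarith)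
  have h2 : ‖1 + 1 - T‖ ≤ 2.28 := (norm_sub_le _ _).trans (by
    rw [one_add_one_eq_two, Complex.norm_ofNat]; linarith)
  have himage := hS.trace_eq_neg_one (TraceMove.mulOneAddMulSq.eval_mem hS hT) (by
    rw [TraceMove.eval, sub_add_cancel]
    simp only [norm_mul]
    calc ‖T + 1‖ * ‖1 + 1 - T‖ * (‖T‖ * ‖T‖) ≤ 1.28 * 2.28 * (0.28 * 0.28) := by gcongr
      _ < 0.245 := by norm_num)
  have hne : ∀ r : ℝ, 1 ≤ |r| → T ≠ r := by
    rintro r hr rfl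
    rw [Complex.norm_real, Real.norm_eq_abs] at hT0
    linarith
  have hne1 : T + 1 ≠ 0 := fun h =>
    hne (-1) (by norm_num) (by push_cast; linear_combination h)
  have hne2 : 1 + 1 - T ≠ 0 := fun h =>
    hne 2 (by norm_num) (by push_cast; linear_combination -h)
  rw [TraceMove.eval, sub_eq_neg_self] at himage
  simpa [hne1, hne2] using himage

lemma trace_eq_goldenConj (hS : IsParamSystem S 3) (hT : T ∈ traceParams S)
    (hTg : ‖T - goldenConj‖ < 0.25) : T = goldenConj := by
  obtain ⟨hlo, hhi⟩ := goldenConj_mem_Ioo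
  have hsq := goldenConj_sq
  generalize goldenConj = ψ at *
  have hsq' : (ψ : ℂ) ^ 2 = ψ + 1 := by exact_mod_cast hsq
  have hfac : T * T - T - 1 = (T - ψ) * (T - (1 - ψ : ℝ)) := by
    push_cast; linear_combination hsq'
  have hnorm : ∀ r : ℝ, ‖T - r‖ ≤ 0.25 + |ψ - r| := fun r => by
    have := norm_sub_le_norm_sub_add_norm_sub T (ψ : ℂ) r
    rw [← Complex.ofReal_sub, Complex.norm_real, Real.norm_eq_abs] at this
    linarith
  have h1 : ‖T + 1‖ ≤ 0.632 := by
    have := hnorm (-1)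
    rw [abs_of_pos (by linarith), Complex.ofReal_neg, Complex.ofReal_one, sub_neg_eq_add] at this
    linarith
  have h2 : ‖T - (1 - ψ : ℝ)‖ ≤ 2.4861 := by
    have := hnorm (1 - ψ)
    rw [abs_of_neg (by linarith)] at this
    linarith
  have himage := hS.trace_eq_neg_one (TraceMove.chebyshevSub.eval_mem hS hT) (by
    rw [TraceMove.eval, sub_add_cancel, hfac]
    simp only [norm_mul]
    calc ‖T + 1‖ * (‖T - ψ‖ * ‖T - (1 - ψ : ℝ)‖ * (‖T - ψ‖ * ‖T - (1 - ψ : ℝ)‖))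
        ≤ 0.632 * (0.25 * 2.4861 * (0.25 * 2.4861)) := by gcongr
      _ < 0.245 := by norm_num)
  have hne : ∀ r : ℝ, 0.25 ≤ |r - ψ| → T ≠ r := by
    rintro r hr rfl
    rw [← Complex.ofReal_sub, Complex.norm_real, Real.norm_eq_abs] at hTg
    linarith
  have hne1 : T + 1 ≠ 0 := fun h => hne (-1) (by rw [abs_of_neg] <;> linarith)
    (by push_cast; linear_combination h)
  have hne2 : T - (1 - ψ : ℝ) ≠ 0 := sub_ne_zero.2 (hne _ (by rw [abs_of_pos] <;> linarith))
  rw [TraceMove.eval, sub_eq_neg_self, hfac] at himage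
  exact sub_eq_zero.1 (by
    simpa only [mul_eq_zero, hne1, hne2, or_false, false_or, or_self] using himage)

end IsParamSystem

/-- A disc around a point which is isolated among the traces: a trace in the disc is its centre. -/
inductive Hole
  | negOne
  | golden
  | zero

namespace Hole

/-- The isolated trace. -/
def center : Hole → ℝ
  | negOne => -1
  | golden => goldenConj
  | zero => 0

/-- The centre rounded to an integer multiple of `2⁻²⁰`, in units of `2⁻²⁰`. -/
def approxCenter : Hole → ℤ
  | negOne => -1048576
  | golden => -648056
  | zero => 0

/-- The radius of the disc, in units of `2⁻²⁰`. -/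
def radius : Hole → ℕ
  | negOne => 256901
  | golden => 262144
  | zero => 293601

lemma abs_center_sub_approxCenter_le (e : Hole) : |1048576 * e.center - e.approxCenter| ≤ 1 := by
  obtain ⟨hlo, hhi⟩ := goldenConj_mem_Ioo
  generalize h : goldenConj = ψ at hlo hhi
  cases e <;> simp only [center, approxCenter, h, abs_le] <;> push_cast <;> constructor <;> linarith

lemma center_mem_Icc (e : Hole) : e.center ∈ Set.Icc (-1 : ℝ) 2 := by
  obtain ⟨hlo, hhi⟩ := goldenConj_mem_Ioo
  generalize h : goldenConj = ψ at hlo hhi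
  cases e <;> simp only [center, h] <;> constructor <;> linarith

end Hole

lemma IsParamSystem.trace_eq_center (hS : IsParamSystem S 3) (hT : T ∈ traceParams S) {e : Hole}
    (he : 1048576 * ‖T - e.center‖ < e.radius) : T = e.center := by
  cases e with
  | negOne =>
    simp only [Hole.center, Hole.radius, Complex.ofReal_neg, Complex.ofReal_one, sub_neg_eq_add]
      at he ⊢
    exact hS.trace_eq_neg_one hT (by norm_num at he ⊢; linarith)
  | golden =>
    simp only [Hole.center, Hole.radius, Nat.cast_ofNat] at he
    exact hS.trace_eq_goldenConj hT (by linarith)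
  | zero =>
    simp only [Hole.center, Hole.radius, Complex.ofReal_zero, sub_zero] at he ⊢
    exact hS.trace_eq_zero hT (by norm_num at he ⊢; linarith)

end OrderThree
/-! ### Taylor models with Gaussian integer coefficients -/

/-- A first order Taylor model in fixed point arithmetic with unit `2⁻²⁰`, see
`TaylorModel.Encloses`. -/
structure TaylorModel where
  value : GaussianInt
  slope : GaussianInt
  error : ℕ

namespace TaylorModel

/-- An upper bound for `‖w‖` that needs no square root, since `√(x² + y²) ≤ x + y / 2` for
`y ≤ x`. -/
def normBound (w : GaussianInt) : ℕ :=
  max w.re.natAbs w.im.natAbs + min w.re.natAbs w.im.natAbs / 2 + 1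

/-- Division by the scale `2²⁰`, rounding both coordinates down. -/
def roundDown (w : GaussianInt) : GaussianInt := ⟨w.re / 1048576, w.im / 1048576⟩

instance : One TaylorModel := ⟨⟨⟨1048576, 0⟩, ⟨0, 0⟩, 0⟩⟩

instance : Add TaylorModel :=
  ⟨fun m n => ⟨m.value + n.value, m.slope + n.slope, m.error + n.error⟩⟩

instance : Sub TaylorModel :=
  ⟨fun m n => ⟨m.value - n.value, m.slope - n.slope, m.error + n.error⟩⟩

/-- The error of a product before division by the scale; the product of the slopes, of second
order, is counted as an error. -/
def mulError (m n : TaylorModel) : ℕ :=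
  normBound m.value * n.error + normBound n.value * m.error +
    normBound m.slope * normBound n.slope + normBound m.slope * n.error +
    normBound n.slope * m.error + m.error * n.error

/-- The summand `5` in the error absorbs the rounding of the three coefficients. -/
instance : Mul TaylorModel :=
  ⟨fun m n => ⟨roundDown (m.value * n.value),
    roundDown (m.value * n.slope + m.slope * n.value), mulError m n / 1048576 + 5⟩⟩

/-- The model `m` encloses the value `z` at the point `h` of the unit disc. -/
structure Encloses (m : TaylorModel) (h z : ℂ) : Prop where
  norm_le_one : ‖h‖ ≤ 1
  norm_sub_le : ‖1048576 * z - m.value - m.slope * h‖ ≤ m.error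

lemma norm_le_normBound (w : GaussianInt) : ‖(w : ℂ)‖ ≤ normBound w := by
  have hsq : w.re ^ 2 + w.im ^ 2 ≤ (normBound w : ℤ) ^ 2 := by
    rw [← Int.natAbs_sq w.re, ← Int.natAbs_sq w.im, normBound]
    norm_cast
    generalize w.re.natAbs = x
    generalize w.im.natAbs = y
    wlog hxy : x ≤ y generalizing x y
    · rw [add_comm, max_comm, min_comm]
      exact this y x (by omega)
    rw [max_eq_right hxy, min_eq_left hxy]
    have : x ≤ 2 * (x / 2 + 1) := by omega
    nlinarith
  refine (sq_le_sq₀ (norm_nonneg _) (by positivity)).1 ?_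
  rw [norm_sq_eq_re_sq_add_im_sq, ← GaussianInt.intCast_re, ← GaussianInt.intCast_im]
  exact_mod_cast hsq

lemma norm_sub_roundDown_le (w : GaussianInt) :
    ‖(w : ℂ) - 1048576 * (roundDown w : ℂ)‖ ≤ 2 * 1048576 := by
  have hround : ∀ a : ℤ, |(a : ℝ) - 1048576 * ((a / 1048576 : ℤ) : ℝ)| ≤ 1048576 := fun a => by
    have h1 : 0 ≤ a - 1048576 * (a / 1048576) := by omega
    have h2 : a - 1048576 * (a / 1048576) ≤ 1048576 := by omega
    rw [abs_of_nonneg] <;> exact_mod_cast ‹_›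
  refine (Complex.norm_le_abs_re_add_abs_im _).trans ?_
  rw [two_mul]
  refine add_le_add (le_of_eq_of_le ?_ (hround w.re)) (le_of_eq_of_le ?_ (hround w.im)) <;>
    simp [roundDown]

lemma encloses_one {h : ℂ} (hh : ‖h‖ ≤ 1) : Encloses 1 h 1 :=
  ⟨hh, by
    change ‖1048576 * 1 - ((⟨1048576, 0⟩ : GaussianInt) : ℂ) - ((⟨0, 0⟩ : GaussianInt) : ℂ) * h‖ ≤
      ((0 : ℕ) : ℝ)
    simp [GaussianInt.toComplex_def']⟩

namespace Encloses

variable {m n : TaylorModel} {h z w : ℂ}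

lemma add (hm : Encloses m h z) (hn : Encloses n h w) : Encloses (m + n) h (z + w) :=
  ⟨hm.norm_le_one, by
    change ‖1048576 * (z + w) - (m.value + n.value : GaussianInt) -
      (m.slope + n.slope : GaussianInt) * h‖ ≤ ((m.error + n.error : ℕ) : ℝ)
    rw [GaussianInt.toComplex_add, GaussianInt.toComplex_add, Nat.cast_add]
    refine (congrArg norm ?_).trans_le (norm_add_le_of_le hm.norm_sub_le hn.norm_sub_le)
    ring⟩

lemma sub (hm : Encloses m h z) (hn : Encloses n h w) : Encloses (m - n) h (z - w) :=
  ⟨hm.norm_le_one, by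
    change ‖1048576 * (z - w) - (m.value - n.value : GaussianInt) -
      (m.slope - n.slope : GaussianInt) * h‖ ≤ ((m.error + n.error : ℕ) : ℝ)
    rw [GaussianInt.toComplex_sub, GaussianInt.toComplex_sub, Nat.cast_add]
    refine (congrArg norm ?_).trans_le (norm_sub_le_of_le hm.norm_sub_le hn.norm_sub_le)
    ring⟩

lemma norm_slope_mul_le (hm : Encloses m h z) : ‖m.slope * h‖ ≤ normBound m.slope := by
  rw [norm_mul]
  exact (mul_le_of_le_one_right (norm_nonneg _) hm.norm_le_one).trans (norm_le_normBound _)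

lemma mul (hm : Encloses m h z) (hn : Encloses n h w) : Encloses (m * n) h (z * w) := by
  refine ⟨hm.norm_le_one, ?_⟩
  change ‖1048576 * (z * w) - roundDown (m.value * n.value) -
    roundDown (m.value * n.slope + m.slope * n.value) * h‖ ≤
      ((mulError m n / 1048576 + 5 : ℕ) : ℝ)
  have hvalue := norm_sub_roundDown_le (m.value * n.value)
  have hslope := norm_sub_roundDown_le (m.value * n.slope + m.slope * n.value)
  set v := roundDown (m.value * n.value)
  set s := roundDown (m.value * n.slope + m.slope * n.value)
  set E := 1048576 * z - m.value - m.slope * h with hE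
  set F := 1048576 * w - n.value - n.slope * h with hF
  rw [GaussianInt.toComplex_mul] at hvalue
  rw [GaussianInt.toComplex_add, GaussianInt.toComplex_mul, GaussianInt.toComplex_mul] at hslope
  have hexp : 1048576 * (1048576 * (z * w) - v - s * h) =
      (m.value * n.value - 1048576 * v) +
        (m.value * n.slope + m.slope * n.value - 1048576 * s) * h +
        (m.value * F + n.value * E + m.slope * h * (n.slope * h) + m.slope * h * F +
          n.slope * h * E + E * F) := by
    rw [hE, hF]; ring
  have hdiv : (mulError m n : ℝ) + 4 * 1048576 ≤
      1048576 * ((mulError m n / 1048576 + 5 : ℕ) : ℝ) := by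
    have : mulError m n + 4 * 1048576 ≤ 1048576 * (mulError m n / 1048576 + 5) := by omega
    exact_mod_cast this
  have hrounding := mul_le_mul hslope hm.norm_le_one (norm_nonneg h) (by norm_num)
  rw [← norm_mul] at hrounding
  have hbound : ‖1048576 * (1048576 * (z * w) - v - s * h)‖ ≤
      2 * 1048576 + 2 * 1048576 * 1 + mulError m n := by
    rw [hexp, mulError]
    push_cast
    refine norm_add_le_of_le (norm_add_le_of_le hvalue hrounding) ?_
    have hE := hm.norm_sub_le
    have hF := hn.norm_sub_le
    have hms := hm.norm_slope_mul_le
    have hns := hn.norm_slope_mul_le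
    have hmv := norm_le_normBound m.value
    have hnv := norm_le_normBound n.value
    repeat' refine norm_add_le_of_le ?_ ?_
    all_goals rw [norm_mul]; gcongr
  rw [norm_mul, Complex.norm_ofNat] at hbound
  linarith

lemma eval (hm : Encloses m h z) (c : TraceMove) : Encloses (c.eval m) h (c.eval z) := by
  have h1 := encloses_one hm.norm_le_one
  have hsub := hm.sub h1
  have hadd := hm.add h1
  have htwo := (h1.add h1).sub hm
  have hquad := ((hm.mul hm).sub hm).sub h1
  cases c with
  | symm => exact h1.sub hm
  | mulOneAdd => exact (hm.mul hm).sub hm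
  | mulSq => exact (hadd.mul (hsub.mul hsub)).sub h1
  | mulOneAddMulSq => exact ((hadd.mul htwo).mul (hm.mul hm)).sub h1
  | chebyshevSub => exact (hadd.mul (hquad.mul hquad)).sub h1
  | commutator =>
    exact (hadd.mul (((hsub.mul hsub).mul (hsub.mul hsub)).sub (hquad.mul htwo))).sub h1

lemma evalRoute (hm : Encloses m h z) (p : List TraceMove) :
    Encloses (TraceMove.evalRoute m p) h (TraceMove.evalRoute z p) := by
  induction p generalizing m z with
  | nil => exact hm
  | cons c _ ih => exact ih (hm.eval c)

end Encloses

end TaylorModel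
/-! ### A covering of a quarter of an ellipse -/

namespace TaylorModel

variable {m : TaylorModel} {e : Hole} {h z : ℂ}

/-- The value of the model relative to the rounded centre of the hole. -/
def offset (m : TaylorModel) (e : Hole) : GaussianInt := m.value - ⟨e.approxCenter, 0⟩

/-- A bound for the distance of the enclosed points to the value of the model; the summand `1`
absorbs the rounding of the centre of a hole. -/
def spread (m : TaylorModel) : ℕ := normBound m.slope + m.error + 1

/-- Sufficient for the enclosed points to lie in the hole. The truncated difference makes the test
fail when the spread exceeds the radius. The first comparison is implied by the second; it spares
the kernel the evaluation of the error in most cases. -/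
def isInside (m : TaylorModel) (e : Hole) : Bool :=
  (m.offset e).norm < (e.radius ^ 2 : ℕ) && (m.offset e).norm < ((e.radius - m.spread) ^ 2 : ℕ)

/-- Sufficient for the centre of the hole not to be enclosed. -/
def avoidsCenter (m : TaylorModel) (e : Hole) : Bool := (m.spread ^ 2 : ℕ) < (m.offset e).norm

/-- The model of the square with centre `c` and half-side `s`; the slope exceeds `√2 s`. -/
def square (c : GaussianInt) (s : ℕ) : TaylorModel := ⟨c, ⟨(s * 1415 / 1000 + 1 : ℕ), 0⟩, 0⟩

lemma norm_offset_sq (m : TaylorModel) (e : Hole) :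
    ‖(m.offset e : ℂ)‖ ^ 2 = ((m.offset e).norm : ℝ) := by
  rw [norm_sq_eq_re_sq_add_im_sq, ← GaussianInt.intCast_re, ← GaussianInt.intCast_im, Zsqrtd.norm]
  push_cast
  ring

lemma Encloses.norm_sub_offset_le (hm : Encloses m h z) (e : Hole) :
    ‖1048576 * (z - e.center) - m.offset e‖ ≤ m.spread := by
  have hcenter : ‖((e.approxCenter - 1048576 * e.center : ℝ) : ℂ)‖ ≤ 1 := by
    rw [Complex.norm_real, Real.norm_eq_abs, abs_sub_comm]
    exact e.abs_center_sub_approxCenter_le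
  rw [offset, spread, GaussianInt.toComplex_sub, GaussianInt.toComplex_def' e.approxCenter]
  push_cast at hcenter ⊢
  refine (congrArg norm ?_).trans_le
    (norm_add_le_of_le (norm_add_le_of_le hm.norm_slope_mul_le hm.norm_sub_le) hcenter)
  ring

lemma Encloses.norm_sub_center_lt (hm : Encloses m h z) (he : m.isInside e) :
    1048576 * ‖z - e.center‖ < e.radius := by
  rw [isInside, Bool.and_eq_true, decide_eq_true_eq, decide_eq_true_eq] at he
  replace he := he.2
  rw [← Int.cast_lt (R := ℝ), ← norm_offset_sq] at he
  push_cast at he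
  have hlt : ‖(m.offset e : ℂ)‖ < ((e.radius - m.spread : ℕ) : ℝ) :=
    lt_of_pow_lt_pow_left₀ 2 (Nat.cast_nonneg _) he
  have hpos : 0 < e.radius - m.spread := by exact_mod_cast (norm_nonneg _).trans_lt hlt
  rw [Nat.cast_sub (by omega)] at hlt
  have := norm_le_norm_add_norm_sub (m.offset e : ℂ) (1048576 * (z - e.center))
  rw [norm_sub_rev, norm_mul, Complex.norm_ofNat] at this
  linarith [hm.norm_sub_offset_le e]

lemma Encloses.ne_center (hm : Encloses m h z) (he : m.avoidsCenter e) : z ≠ e.center := by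
  rw [avoidsCenter, decide_eq_true_eq, ← Int.cast_lt (R := ℝ), ← norm_offset_sq] at he
  push_cast at he
  rintro rfl
  have := hm.norm_sub_offset_le e
  rw [sub_self, mul_zero, zero_sub, norm_neg] at this
  exact (pow_le_pow_left₀ (norm_nonneg _) this 2).not_gt he

lemma exists_encloses_square {c : GaussianInt} {s : ℕ} (hre : |1048576 * z.re - c.re| ≤ s)
    (him : |1048576 * z.im - c.im| ≤ s) : ∃ h, Encloses (square c s) h z := by
  obtain ⟨r, hr⟩ : ∃ r, r = s * 1415 / 1000 + 1 := ⟨_, rfl⟩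
  have hrs : (s : ℝ) * 1415 ≤ 1000 * r := by
    have : s * 1415 ≤ 1000 * r := by omega
    exact_mod_cast this
  have hr0 : (0 : ℝ) < r := by rw [hr]; positivity
  have hnorm : ‖1048576 * z - c‖ ≤ r := by
    refine (sq_le_sq₀ (norm_nonneg _) hr0.le).1 ?_
    rw [norm_sq_eq_re_sq_add_im_sq]
    have hsub : (1048576 * z - c : ℂ).re = 1048576 * z.re - c.re ∧
        (1048576 * z - c : ℂ).im = 1048576 * z.im - c.im := by simp
    rw [hsub.1, hsub.2]
    have h1 := sq_le_sq' (abs_le.1 hre).1 (abs_le.1 hre).2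
    have h2 := sq_le_sq' (abs_le.1 him).1 (abs_le.1 him).2
    have := mul_self_le_mul_self (by positivity) hrs
    nlinarith
  refine ⟨(1048576 * z - c) / r, ?_, ?_⟩
  · rw [norm_div, Complex.norm_natCast]
    exact (div_le_one hr0).2 hnorm
  · have hr0' : (r : ℂ) ≠ 0 := by exact_mod_cast hr0.ne'
    simp only [square, ← hr, GaussianInt.toComplex_def' r]
    push_cast
    field_simp
    simp

end TaylorModel

lemma add_lt_mul_of_norm_add_norm_sub_lt {z : ℂ} {a c : ℝ} (h : ‖z + c‖ + ‖z - c‖ < 2 * a) :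
    (a ^ 2 - c ^ 2) * z.re ^ 2 + a ^ 2 * z.im ^ 2 < a ^ 2 * (a ^ 2 - c ^ 2) := by
  have hp0 := norm_nonneg (z + c)
  have hq0 := norm_nonneg (z - c)
  have hp : ‖z + c‖ ^ 2 = (z.re + c) ^ 2 + z.im ^ 2 := by simp [norm_sq_eq_re_sq_add_im_sq]
  have hq : ‖z - c‖ ^ 2 = (z.re - c) ^ 2 + z.im ^ 2 := by simp [norm_sq_eq_re_sq_add_im_sq]
  generalize ‖z + c‖ = p at *
  generalize ‖z - c‖ = q at *
  have hsum : (p + q) ^ 2 < (2 * a) ^ 2 := by gcongr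
  have hprod : (2 * (p * q)) ^ 2 < ((2 * a) ^ 2 - p ^ 2 - q ^ 2) ^ 2 :=
    pow_lt_pow_left₀ (by linarith) (by positivity) two_ne_zero
  have hsq : (2 * (p * q)) ^ 2 = 4 * (p ^ 2 * q ^ 2) := by ring
  rw [hsq, hp, hq] at hprod
  linarith

section Covering

/-- Some move route takes `T` into a hole, and not to its centre unless `T` lies in the segment. -/
def IsCaptured (T : ℂ) : Prop := ∃ (p : List TraceMove) (e : Hole),
  1048576 * ‖TraceMove.evalRoute T p - e.center‖ < e.radius ∧
    (TraceMove.evalRoute T p = e.center → T ∈ Complex.ofReal '' Set.Icc (-1) 2)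

/-- The part `Re T ≤ 1/2`, `0 ≤ Im T` of the interior of an ellipse with foci `-1` and `2`. -/
structure InQuarterEllipse (T : ℂ) : Prop where
  re_le : T.re ≤ 1 / 2
  im_nonneg : 0 ≤ T.im
  norm_add_norm_lt : ‖T + 1‖ + ‖T - 2‖ < 1 + √5

open TraceMove TaylorModel

/-- Routes that take a point of the ellipse to the centre of the hole only if it is real. -/
def freeRoutes : List (List TraceMove × Hole) :=
  [([], .zero), ([], .negOne), ([], .golden), ([mulOneAdd], .golden)]

/-- Routes whose use requires the image of the square to avoid the centre of the hole. -/
def strictRoutes : List (List TraceMove × Hole) :=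
  [([mulOneAdd], .zero), ([commutator, symm], .negOne), ([commutator, symm], .golden),
    ([mulSq, mulOneAdd, mulOneAddMulSq], .golden), ([mulSq, mulOneAdd, mulOneAddMulSq], .negOne),
    ([mulOneAdd, mulSq, mulOneAdd], .zero), ([mulOneAddMulSq, mulSq, mulOneAdd], .zero),
    ([mulOneAdd, mulSq, commutator, symm], .negOne),
    ([chebyshevSub, mulOneAddMulSq, symm, mulOneAddMulSq, symm], .golden)]

/-- Sufficient for the points of the square modelled by `m` that lie in the quarter ellipse to be
captured. -/
def isCapturedBy (m : TaylorModel) : Bool :=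
  freeRoutes.any (fun r => (evalRoute m r.1).isInside r.2) ||
    strictRoutes.any (fun r => (evalRoute m r.1).isInside r.2 && (evalRoute m r.1).avoidsCenter r.2)

/-- Sufficient for the square to be outside the ellipse, whose squared semi-axes are below
`2.61804` and `0.36804`. -/
def isOutside (c : GaussianInt) (s : ℕ) : Bool :=
  0 ≤ 524288 - c.re - s ∧ 0 ≤ c.im - s ∧ 36804 * 261804 * 1048576 ^ 2 ≤
    ((524288 - c.re - s) ^ 2 * 36804 + (c.im - s) ^ 2 * 261804) * 100000

/-- Recursive subdivision, `depth` times, of the square with centre `c` and half-side `s`, in units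
of `2⁻²⁰`. -/
def isCovered : (depth : ℕ) → (c : GaussianInt) → (s : ℕ) → Bool
  | 0, c, s => isOutside c s || isCapturedBy (square c s)
  | depth + 1, c, s => isOutside c s || isCapturedBy (square c s) ||
      [(⟨-1, -1⟩ : GaussianInt), ⟨-1, 1⟩, ⟨1, -1⟩, ⟨1, 1⟩].all fun u =>
        isCovered depth ⟨c.re + u.re * ((s + 1) / 2 : ℕ), c.im + u.im * ((s + 1) / 2 : ℕ)⟩
          ((s + 1) / 2)

lemma isCovered_quarter : isCovered 10 ⟨524288 - 851968, 851968⟩ 851968 := by decide +kernel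

namespace InQuarterEllipse

variable {T : ℂ}

lemma semiaxes_lt (hT : InQuarterEllipse T) :
    (√5 / 2 - 3 / 4) * (T.re - 1 / 2) ^ 2 + (3 + √5) / 2 * T.im ^ 2 <
      (3 + √5) / 2 * (√5 / 2 - 3 / 4) := by
  have h5 : √5 ^ 2 = 5 := Real.sq_sqrt (by norm_num)
  have hfoci : ‖T - 1 / 2 + (3 / 2 : ℝ)‖ + ‖T - 1 / 2 - (3 / 2 : ℝ)‖ < 2 * ((1 + √5) / 2) := by
    convert hT.norm_add_norm_lt using 1
    · congr 2 <;> push_cast <;> ring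
    · ring
  have hmajor : ((1 + √5) / 2) ^ 2 = (3 + √5) / 2 := by linear_combination h5 / 4
  have hminor : (3 + √5) / 2 - (3 / 2) ^ 2 = √5 / 2 - 3 / 4 := by ring
  have hre : (T - 1 / 2).re = T.re - 1 / 2 := by norm_num
  have him : (T - 1 / 2).im = T.im := by norm_num
  have := add_lt_mul_of_norm_add_norm_sub_lt hfoci
  rwa [hmajor, hminor, hre, him] at this

lemma rational_semiaxes_lt (hT : InQuarterEllipse T) :
    0.36804 * (T.re - 1 / 2) ^ 2 + 2.61804 * T.im ^ 2 < 2.61804 * 0.36804 := by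
  have hlo : (2.236 : ℝ) < √5 := by rw [Real.lt_sqrt] <;> norm_num
  have hhi : √5 < (2.23607 : ℝ) := by rw [Real.sqrt_lt'] <;> norm_num
  have hlt := hT.semiaxes_lt
  obtain ⟨α, hα⟩ : ∃ α, α = (3 + √5) / 2 := ⟨_, rfl⟩
  obtain ⟨β, hβ⟩ : ∃ β, β = √5 / 2 - 3 / 4 := ⟨_, rfl⟩
  rw [← hα, ← hβ] at hlt
  have hα0 : 0 < α := by linarith
  have hβ0 : 0 < β := by linarith
  have hdiv : (T.re - 1 / 2) ^ 2 / 2.61804 + T.im ^ 2 / 0.36804 < 1 := by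
    calc _ ≤ (T.re - 1 / 2) ^ 2 / α + T.im ^ 2 / β := by gcongr <;> linarith
      _ < 1 := by
        rw [div_add_div _ _ hα0.ne' hβ0.ne', div_lt_one (by positivity)]
        linarith
  rw [div_add_div _ _ (by norm_num) (by norm_num), div_lt_one (by norm_num)] at hdiv
  linarith

lemma mem_ofReal_of_im_eq_zero (hT : InQuarterEllipse T) (hre : -1 ≤ T.re) (him : T.im = 0) :
    T ∈ Complex.ofReal '' Set.Icc (-1) 2 :=
  ⟨T.re, ⟨hre, by linarith [hT.re_le]⟩, Complex.ext rfl him.symm⟩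

/-- The nonreal preimages of the golden centre lie on the ellipse, as `√5` was chosen. -/
lemma mem_ofReal_of_mulOneAdd (hT : InQuarterEllipse T)
    (hgolden : mulOneAdd.eval T = Hole.golden.center) : T ∈ Complex.ofReal '' Set.Icc (-1) 2 := by
  have hlo : (2.236 : ℝ) < √5 := by rw [Real.lt_sqrt] <;> norm_num
  have hre := congrArg Complex.re hgolden
  have him := congrArg Complex.im hgolden
  simp only [TraceMove.eval, Hole.center, Complex.sub_re, Complex.sub_im, Complex.mul_re,
    Complex.mul_im, Complex.ofReal_re, Complex.ofReal_im, goldenConj] at hre him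
  rcases mul_eq_zero.1 (show T.im * (2 * T.re - 1) = 0 by linarith) with him0 | hre0
  · rw [him0] at hre
    exact hT.mem_ofReal_of_im_eq_zero (by nlinarith) him0
  · have hre2 : T.re = 1 / 2 := by linarith
    have hlt := hT.semiaxes_lt
    rw [hre2] at hre hlt
    have him2 : T.im ^ 2 = √5 / 2 - 3 / 4 := by linarith
    rw [him2] at hlt
    linarith

lemma mem_ofReal_of_mem_freeRoutes (hT : InQuarterEllipse T) {r : List TraceMove × Hole}
    (hr : r ∈ freeRoutes) (hcenter : evalRoute T r.1 = r.2.center) :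
    T ∈ Complex.ofReal '' Set.Icc (-1) 2 := by
  simp only [freeRoutes, List.mem_cons, List.not_mem_nil, or_false] at hr
  rcases hr with rfl | rfl | rfl | rfl
  on_goal 4 => exact hT.mem_ofReal_of_mulOneAdd hcenter
  all_goals exact ⟨_, Hole.center_mem_Icc _, hcenter.symm⟩

lemma isCaptured_of_isCapturedBy (hT : InQuarterEllipse T) {m : TaylorModel} {h : ℂ}
    (hm : Encloses m h T) (hcap : isCapturedBy m) : IsCaptured T := by
  rw [isCapturedBy, Bool.or_eq_true, List.any_eq_true, List.any_eq_true] at hcap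
  rcases hcap with ⟨r, hr, hin⟩ | ⟨r, -, hin⟩
  · exact ⟨r.1, r.2, (hm.evalRoute r.1).norm_sub_center_lt hin,
      hT.mem_ofReal_of_mem_freeRoutes hr⟩
  · rw [Bool.and_eq_true] at hin
    exact ⟨r.1, r.2, (hm.evalRoute r.1).norm_sub_center_lt hin.1,
      fun hcenter => absurd hcenter ((hm.evalRoute r.1).ne_center hin.2)⟩

lemma not_isOutside (hT : InQuarterEllipse T) {c : GaussianInt} {s : ℕ}
    (hre : |1048576 * T.re - c.re| ≤ s) (him : |1048576 * T.im - c.im| ≤ s) : ¬ isOutside c s := by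
  simp only [isOutside, decide_eq_true_eq]
  rintro ⟨hre0, him0, hout⟩
  rify at hre0 him0 hout
  have hre1 : (524288 - c.re - s : ℝ) ≤ 1048576 * (1 / 2 - T.re) := by linarith [(abs_le.1 hre).2]
  have him1 : (c.im - s : ℝ) ≤ 1048576 * T.im := by linarith [(abs_le.1 him).1]
  have hre2 := pow_le_pow_left₀ hre0 hre1 2
  have him2 := pow_le_pow_left₀ him0 him1 2
  nlinarith [hT.rational_semiaxes_lt]

lemma isCaptured_of_isCovered (hT : InQuarterEllipse T) {depth : ℕ} {c : GaussianInt} {s : ℕ}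
    (hcov : isCovered depth c s) (hre : |1048576 * T.re - c.re| ≤ s)
    (him : |1048576 * T.im - c.im| ≤ s) : IsCaptured T := by
  have hbase {c s} (hre : |1048576 * T.re - (c : GaussianInt).re| ≤ (s : ℕ))
      (him : |1048576 * T.im - c.im| ≤ s) (h : isOutside c s ∨ isCapturedBy (square c s)) :
      IsCaptured T := by
    obtain ⟨_, hm⟩ := exists_encloses_square hre him
    exact hT.isCaptured_of_isCapturedBy hm (h.resolve_left (hT.not_isOutside hre him))
  induction depth generalizing c s with
  | zero => exact hbase hre him (by simpa only [isCovered, Bool.or_eq_true] using hcov)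
  | succ depth ih =>
    rw [isCovered, Bool.or_eq_true, Bool.or_eq_true, List.all_eq_true] at hcov
    refine hcov.elim (hbase hre him) fun hsub => ?_
    have hst : (s : ℝ) ≤ 2 * ((s + 1) / 2 : ℕ) := by
      exact_mod_cast (by omega : s ≤ 2 * ((s + 1) / 2))
    generalize (s + 1) / 2 = t at hst hsub
    have hhalf (a : ℝ) (b : ℤ) (hab : |a - b| ≤ s) :
        ∃ u : ℤ, (u = -1 ∨ u = 1) ∧ |a - (b + u * (t : ℕ) : ℤ)| ≤ t := by
      obtain ⟨hlo, hhi⟩ := abs_le.1 hab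
      rcases le_total a b with h | h
      · exact ⟨-1, .inl rfl, by rw [abs_le]; push_cast; constructor <;> linarith⟩
      · exact ⟨1, .inr rfl, by rw [abs_le]; push_cast; constructor <;> linarith⟩
    obtain ⟨u, hu, hut⟩ := hhalf _ _ hre
    obtain ⟨v, hv, hvt⟩ := hhalf _ _ him
    have huv : (⟨u, v⟩ : GaussianInt) ∈ [(⟨-1, -1⟩ : GaussianInt), ⟨-1, 1⟩, ⟨1, -1⟩, ⟨1, 1⟩] := by
      rcases hu with rfl | rfl <;> rcases hv with rfl | rfl <;> simp
    exact ih (hsub _ huv) hut hvt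

lemma isCaptured (hT : InQuarterEllipse T) : IsCaptured T := by
  have hlt := hT.rational_semiaxes_lt
  have hre : 1 / 2 - T.re < 1.625 := by nlinarith [sq_nonneg T.im]
  have him : T.im < 1.625 := by nlinarith [sq_nonneg (T.re - 1 / 2)]
  have := hT.re_le
  have := hT.im_nonneg
  refine hT.isCaptured_of_isCovered isCovered_quarter ?_ ?_ <;> rw [abs_le] <;> push_cast <;>
    constructor <;> linarith

end InQuarterEllipse

end Covering

section OrderThree

variable {T : ℂ}

lemma IsCaptured.of_conj (h : IsCaptured (starRingEnd ℂ T)) : IsCaptured T := by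
  obtain ⟨p, e, hlt, himp⟩ := h
  rw [TraceMove.evalRoute_conj, ← Complex.conj_ofReal, ← map_sub, Complex.norm_conj] at hlt
  refine ⟨p, e, hlt, fun hcenter => ?_⟩
  obtain ⟨t, ht, htT⟩ := himp (by rw [TraceMove.evalRoute_conj, hcenter, Complex.conj_ofReal])
  exact ⟨t, ht, (starRingEnd ℂ).injective (by rw [Complex.conj_ofReal, htT])⟩

lemma isCaptured_of_re_le (hre : T.re ≤ 1 / 2) (hlt : ‖T + 1‖ + ‖T - 2‖ < 1 + √5) :
    IsCaptured T := by
  rcases le_total 0 T.im with him | him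
  · exact InQuarterEllipse.isCaptured ⟨hre, him, hlt⟩
  · refine .of_conj (InQuarterEllipse.isCaptured ⟨hre, by simpa, ?_⟩)
    rwa [← Complex.norm_conj (T + 1), ← Complex.norm_conj (T - 2), map_add, map_sub, map_one,
      Complex.conj_ofNat] at hlt

namespace IsParamSystem

variable {S : Set ℂ}

lemma mem_ofReal_of_isCaptured (hS : IsParamSystem S 3) (hT : T ∈ traceParams S)
    (h : IsCaptured T) : T ∈ Complex.ofReal '' Set.Icc (-1) 2 := by
  obtain ⟨p, e, hlt, himp⟩ := h
  exact himp (hS.trace_eq_center (TraceMove.evalRoute_mem hS hT p) hlt)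

lemma mem_ofReal_of_norm_add_norm_lt (hS : IsParamSystem S 3) (hT : T ∈ traceParams S)
    (hlt : ‖T + 1‖ + ‖T - 2‖ < 1 + √5) : T ∈ Complex.ofReal '' Set.Icc (-1) 2 := by
  rcases le_total T.re (1 / 2) with hre | hre
  · exact hS.mem_ofReal_of_isCaptured hT (isCaptured_of_re_le hre hlt)
  · have hlt' : ‖1 - T + 1‖ + ‖1 - T - 2‖ < 1 + √5 := by
      convert hlt using 1
      rw [add_comm, ← norm_neg (1 - T - 2), ← norm_neg (1 - T + 1)]
      congr 2 <;> ring
    obtain ⟨t, ⟨ht1, ht2⟩, ht⟩ := hS.mem_ofReal_of_isCaptured (TraceMove.symm.eval_mem hS hT)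
      (isCaptured_of_re_le (T := 1 - T) (by simp; linarith) hlt')
    refine ⟨1 - t, ⟨by linarith, by linarith⟩, ?_⟩
    rw [Complex.ofReal_sub, ht]
    simp [TraceMove.eval]

lemma mem_crossingParams_of_order_three (hS : IsParamSystem S 3) {x : ℂ} (hx : x ∈ S)
    (hK : ‖x‖ + ‖1 + x‖ < (1 + √5) / 3) : x ∈ crossingParams := by
  have hT : -1 - 3 * x ∈ traceParams S := by
    change -(1 + (-1 - 3 * x)) / 3 ∈ S
    convert hx using 1
    ring
  have hleft : ‖-1 - 3 * x + 1‖ = 3 * ‖x‖ := by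
    rw [← Complex.norm_ofNat 3, ← norm_mul, ← norm_neg]; congr 1; ring
  have hright : ‖-1 - 3 * x - 2‖ = 3 * ‖1 + x‖ := by
    rw [← Complex.norm_ofNat 3, ← norm_mul, ← norm_neg]; congr 1; ring
  obtain ⟨t, ⟨ht1, ht2⟩, ht⟩ := hS.mem_ofReal_of_norm_add_norm_lt hT (by linarith)
  refine ⟨-(1 + t) / 3, ⟨by linarith, by linarith⟩, ?_⟩
  push_cast
  rw [ht]
  ring

end IsParamSystem

end OrderThree

/-! ### Displacement of the base point -/

/-- The hyperbolic cosine of the distance between the base point `j` of `H³` and its image under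
`g`. -/
def coshDispl (g : SL2C) : ℝ := fnorm g ^ 2 / 2

/-- The hyperbolic distance between the base point `j` of `H³` and its image under `g`. -/
def displ (g : SL2C) : ℝ := arcosh (coshDispl g)

/-- The squared length of the `j`-th column of `g`. -/
def colNormSq (g : SL2C) (j : Fin 2) : ℝ := ‖g 0 j‖ ^ 2 + ‖g 1 j‖ ^ 2

/-- The Hermitian inner product of the two columns of `g`. -/
def colInner (g : SL2C) : ℂ := conj (g 0 0) * g 0 1 + conj (g 1 0) * g 1 1

lemma coshDispl_eq_colNormSq (g : SL2C) : coshDispl g = (colNormSq g 0 + colNormSq g 1) / 2 := by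
  have h : fnorm g = (∑ i, ∑ j, ‖g i j‖ ^ (2 : ℝ)) ^ (1 / 2 : ℝ) := Matrix.frobenius_norm_def _
  rw [coshDispl, h, ← Real.sqrt_eq_rpow, Real.sq_sqrt (by positivity)]
  simp only [Fin.sum_univ_two, Real.rpow_two, colNormSq]
  ring

lemma coshDispl_transpose (g : SL2C) : coshDispl g.transpose = coshDispl g := by
  simp only [coshDispl_eq_colNormSq, colNormSq, SpecialLinearGroup.coe_transpose,
    Matrix.transpose_apply]
  ring

lemma coshDispl_inv (g : SL2C) : coshDispl g⁻¹ = coshDispl g := by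
  simp only [coshDispl_eq_colNormSq, colNormSq, SL2C.inv_zero_zero, SL2C.inv_zero_one,
    SL2C.inv_one_zero, SL2C.inv_one_one, norm_neg]
  ring

lemma displ_inv (g : SL2C) : displ g⁻¹ = displ g := by rw [displ, coshDispl_inv, displ]

lemma norm_add_norm_le_coshDispl (g : SL2C) :
    ‖g 0 1 * g 1 0‖ + ‖1 + g 0 1 * g 1 0‖ ≤ coshDispl g := by
  have h : 1 + g 0 1 * g 1 0 = g 0 0 * g 1 1 := by linear_combination -g.det_eq_one
  rw [h, norm_mul, norm_mul, coshDispl_eq_colNormSq, colNormSq, colNormSq]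
  linarith [two_mul_le_add_sq ‖g 0 1‖ ‖g 1 0‖, two_mul_le_add_sq ‖g 0 0‖ ‖g 1 1‖]

lemma one_le_coshDispl (g : SL2C) : 1 ≤ coshDispl g := by
  have := one_le_norm_add_norm_one_add (g 0 1 * g 1 0)
  exact this.trans (norm_add_norm_le_coshDispl g)

lemma cosh_displ (g : SL2C) : cosh (displ g) = coshDispl g := cosh_arcosh (one_le_coshDispl g)

lemma displ_nonneg (g : SL2C) : 0 ≤ displ g := arcosh_nonneg (one_le_coshDispl g)

lemma coshDispl_mul (g h : SL2C) :
    coshDispl (g * h) = (colNormSq g 0 * colNormSq h.transpose 0 +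
      colNormSq g 1 * colNormSq h.transpose 1) / 2 + (colInner g * colInner h.transpose).re := by
  simp only [coshDispl_eq_colNormSq, colNormSq, colInner, SpecialLinearGroup.coe_transpose,
    Matrix.transpose_apply, SL2C.mul_apply, norm_sq_eq_re_sq_add_im_sq, Complex.add_re,
    Complex.add_im, Complex.mul_re, Complex.mul_im, Complex.conj_re, Complex.conj_im]
  ring

-- Lagrange's identity for the two columns.
lemma colNormSq_mul_colNormSq (g : SL2C) :
    colNormSq g 0 * colNormSq g 1 = ‖colInner g‖ ^ 2 + 1 := by
  have h : ‖g 0 0 * g 1 1 - g 0 1 * g 1 0‖ ^ 2 = 1 := by rw [g.det_eq_one, norm_one, one_pow]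
  rw [← h]
  simp only [colNormSq, colInner, norm_sq_eq_re_sq_add_im_sq, Complex.add_re, Complex.add_im,
    Complex.sub_re, Complex.sub_im, Complex.mul_re, Complex.mul_im, Complex.conj_re,
    Complex.conj_im]
  ring

lemma sinh_displ_sq (g : SL2C) :
    sinh (displ g) ^ 2 = ((colNormSq g 0 - colNormSq g 1) / 2) ^ 2 + ‖colInner g‖ ^ 2 := by
  rw [sinh_sq, cosh_displ, coshDispl_eq_colNormSq]
  linear_combination colNormSq_mul_colNormSq g

lemma mul_add_mul_le_mul_of_sq_eq {a b c a' b' c' : ℝ} (hc : 0 ≤ c) (hc' : 0 ≤ c')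
    (h : c ^ 2 = a ^ 2 + b ^ 2) (h' : c' ^ 2 = a' ^ 2 + b' ^ 2) : a * a' + b * b' ≤ c * c' := by
  refine le_of_sq_le_sq ?_ (mul_nonneg hc hc')
  rw [mul_pow, h, h']
  linarith [sq_nonneg (a * b' - b * a')]

lemma displ_mul_le (g h : SL2C) : displ (g * h) ≤ displ g + displ h := by
  have hh : displ h.transpose = displ h := by rw [displ, coshDispl_transpose, displ]
  have hcs := mul_add_mul_le_mul_of_sq_eq (sinh_nonneg_iff.2 (displ_nonneg g))
    (sinh_nonneg_iff.2 (displ_nonneg h.transpose)) (sinh_displ_sq g) (sinh_displ_sq h.transpose)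
  have hre : (colInner g * colInner h.transpose).re ≤ ‖colInner g‖ * ‖colInner h.transpose‖ :=
    (Complex.re_le_norm _).trans_eq (norm_mul _ _)
  have hcosh : cosh (displ (g * h)) ≤ cosh (displ g + displ h) := by
    rw [← hh, cosh_add, cosh_displ, cosh_displ, cosh_displ, coshDispl_mul,
      coshDispl_eq_colNormSq g, coshDispl_eq_colNormSq h.transpose]
    linarith
  rwa [cosh_le_cosh, abs_of_nonneg (displ_nonneg _),
    abs_of_nonneg (add_nonneg (displ_nonneg g) (displ_nonneg h))] at hcosh

/-! ### Distance to an axis -/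

/-- The hyperbolic distance between the base point `j` of `H³` and the image under `g` of the
geodesic from `0` to `∞`. -/
def axisDist (g : SL2C) : ℝ := arcosh √(colNormSq g 0 * colNormSq g 1)

lemma one_le_colNormSq_mul_colNormSq (g : SL2C) : 1 ≤ colNormSq g 0 * colNormSq g 1 := by
  rw [colNormSq_mul_colNormSq]
  linarith [sq_nonneg ‖colInner g‖]

lemma axisDist_nonneg (g : SL2C) : 0 ≤ axisDist g :=
  arcosh_nonneg (one_le_sqrt.2 (one_le_colNormSq_mul_colNormSq g))

lemma cosh_axisDist_sq (g : SL2C) : cosh (axisDist g) ^ 2 = colNormSq g 0 * colNormSq g 1 := by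
  have h1 := one_le_colNormSq_mul_colNormSq g
  rw [axisDist, cosh_arcosh (one_le_sqrt.2 h1), Real.sq_sqrt (by linarith)]

lemma colNormSq_pos (g : SL2C) (j : Fin 2) : 0 < colNormSq g j := by
  have hpos : 0 < colNormSq g 0 * colNormSq g 1 :=
    one_pos.trans_le (one_le_colNormSq_mul_colNormSq g)
  have h : 0 ≤ colNormSq g j := by unfold colNormSq; positivity
  refine h.lt_of_ne' fun h0 => hpos.ne' ?_
  fin_cases j <;> simp_all

lemma IsDiagonalWith.colNormSq_mul_zero {f : SL2C} {l m : ℂ} (hf : IsDiagonalWith f l m)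
    (g : SL2C) : colNormSq (g * f) 0 = ‖l‖ ^ 2 * colNormSq g 0 := by
  simp only [colNormSq, hf.mul_apply_zero, norm_mul]
  ring

lemma IsDiagonalWith.colNormSq_mul_one {f : SL2C} {l m : ℂ} (hf : IsDiagonalWith f l m)
    (g : SL2C) : colNormSq (g * f) 1 = ‖m‖ ^ 2 * colNormSq g 1 := by
  simp only [colNormSq, hf.mul_apply_one, norm_mul]
  ring

lemma exists_pos_pow_four_eq {a : ℝ} (ha : 0 < a) : ∃ s : ℝ, 0 < s ∧ s ^ 4 = a := by
  refine ⟨√√a, by positivity, ?_⟩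
  rw [show (4 : ℕ) = 2 * 2 from rfl, pow_mul, Real.sq_sqrt (by positivity), Real.sq_sqrt ha.le]

lemma exists_isDiagonalWith_inv {s : ℂ} (hs : s ≠ 0) : ∃ e : SL2C, IsDiagonalWith e s s⁻¹ :=
  ⟨mkSL2C s 0 0 s⁻¹ (by field_simp; ring), rfl, rfl, rfl, rfl⟩

-- Translating along the geodesic moves the base point to the foot of the perpendicular.
lemma exists_displ_mul_eq_axisDist (g : SL2C) :
    ∃ (e : SL2C) (l m : ℂ), IsDiagonalWith e l m ∧ displ (g * e) = axisDist g := by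
  have h0 := colNormSq_pos g 0
  obtain ⟨s, hs, hsq⟩ := exists_pos_pow_four_eq (div_pos (colNormSq_pos g 1) h0)
  obtain ⟨e, he⟩ := exists_isDiagonalWith_inv (Complex.ofReal_ne_zero.2 hs.ne')
  refine ⟨e, s, _, he, ?_⟩
  have hsq' : s ^ 4 * colNormSq g 0 = colNormSq g 1 := by rw [hsq, div_mul_cancel₀ _ h0.ne']
  have hcosh : coshDispl (g * e) = s ^ 2 * colNormSq g 0 := by
    rw [coshDispl_eq_colNormSq, he.colNormSq_mul_zero, he.colNormSq_mul_one, ← hsq', norm_inv,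
      Complex.norm_of_nonneg hs.le]
    field_simp
    ring
  have hsqrt : colNormSq g 0 * colNormSq g 1 = (s ^ 2 * colNormSq g 0) ^ 2 := by rw [← hsq']; ring
  rw [displ, axisDist, hcosh, hsqrt, Real.sqrt_sq (by positivity)]

lemma IsDiagonalWith.inv_mul_mul_offDiag_mul {f : SL2C} {l m : ℂ} (hf : IsDiagonalWith f l m)
    (g : SL2C) : (f⁻¹ * g * f) 0 1 * (f⁻¹ * g * f) 1 0 = g 0 1 * g 1 0 := by
  rw [hf.mul_apply_zero, hf.mul_apply_one, SL2C.mul_apply, SL2C.mul_apply, hf.inv.zero_zero,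
    hf.inv.zero_one, hf.inv.one_zero, hf.inv.one_one]
  linear_combination g 0 1 * g 1 0 * (l * m + 1) * hf.mul_eq_one

lemma norm_add_norm_le_cosh_displ_add_axisDist (g h : SL2C) :
    ‖(g⁻¹ * h * g) 0 1 * (g⁻¹ * h * g) 1 0‖ + ‖1 + (g⁻¹ * h * g) 0 1 * (g⁻¹ * h * g) 1 0‖ ≤
      cosh (displ h + 2 * axisDist g) := by
  obtain ⟨e, l, m, he, hdispl⟩ := exists_displ_mul_eq_axisDist g
  have hconj : e⁻¹ * (g⁻¹ * h * g) * e = (g * e)⁻¹ * h * (g * e) := by group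
  rw [← he.inv_mul_mul_offDiag_mul, hconj]
  refine (norm_add_norm_le_coshDispl _).trans ?_
  rw [← cosh_displ, cosh_le_cosh, abs_of_nonneg (displ_nonneg _)]
  refine le_trans ?_ (le_abs_self _)
  calc displ ((g * e)⁻¹ * h * (g * e))
    _ ≤ displ ((g * e)⁻¹ * h) + displ (g * e) := displ_mul_le _ _
    _ ≤ displ (g * e)⁻¹ + displ h + displ (g * e) := by gcongr; exact displ_mul_le _ _
    _ = displ h + 2 * axisDist g := by rw [displ_inv, hdispl]; ring

lemma IsDiagonalWith.eq_conj_of_norm_eq_one {f : SL2C} {l m : ℂ} (hf : IsDiagonalWith f l m)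
    (hl : ‖l‖ = 1) : m = conj l := by
  rw [← Complex.inv_eq_conj hl]
  exact (inv_eq_of_mul_eq_one_right hf.mul_eq_one).symm

lemma sinh_axisDist_sq (g : SL2C) : sinh (axisDist g) ^ 2 = ‖colInner g‖ ^ 2 := by
  rw [sinh_sq, cosh_axisDist_sq, colNormSq_mul_colNormSq, add_sub_cancel_right]

lemma IsDiagonalWith.colInner_mul {f : SL2C} {l m : ℂ} (hf : IsDiagonalWith f l m) (g : SL2C) :
    colInner (g * f) = conj l * m * colInner g := by
  simp only [colInner, hf.mul_apply_zero, hf.mul_apply_one, map_mul]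
  ring

lemma colNormSq_transpose_inv_zero (g : SL2C) : colNormSq g⁻¹.transpose 0 = colNormSq g 1 := by
  simp only [colNormSq, SpecialLinearGroup.coe_transpose, Matrix.transpose_apply,
    SL2C.inv_zero_zero, SL2C.inv_zero_one, norm_neg]
  ring

lemma colNormSq_transpose_inv_one (g : SL2C) : colNormSq g⁻¹.transpose 1 = colNormSq g 0 := by
  simp only [colNormSq, SpecialLinearGroup.coe_transpose, Matrix.transpose_apply,
    SL2C.inv_one_zero, SL2C.inv_one_one, norm_neg]
  ring

lemma colInner_transpose_inv (g : SL2C) : colInner g⁻¹.transpose = -conj (colInner g) := by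
  simp only [colInner, SpecialLinearGroup.coe_transpose, Matrix.transpose_apply,
    SL2C.inv_zero_zero, SL2C.inv_zero_one, SL2C.inv_one_zero, SL2C.inv_one_one, map_add, map_mul,
    map_neg, Complex.conj_conj]
  ring

lemma two_mul_one_sub_re_sq {l : ℂ} (hl : ‖l‖ = 1) :
    2 * (1 - (conj l ^ 2).re) = ‖l - conj l‖ ^ 2 := by
  have hl2 : l.re ^ 2 + l.im ^ 2 = 1 := by rw [← norm_sq_eq_re_sq_add_im_sq, hl, one_pow]
  rw [norm_sq_eq_re_sq_add_im_sq]
  simp only [Complex.sub_re, Complex.sub_im, Complex.conj_re, Complex.conj_im, sq, Complex.mul_re]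
  linear_combination -2 * hl2

-- With `l = exp (i θ)` this is `cosh d = 1 + 2 sin² θ sinh² r`.
lemma IsDiagonalWith.coshDispl_conj {f : SL2C} {l m : ℂ} (hf : IsDiagonalWith f l m)
    (hl : ‖l‖ = 1) (g : SL2C) :
    coshDispl (g * f * g⁻¹) = 1 + ‖l - m‖ ^ 2 / 2 * sinh (axisDist g) ^ 2 := by
  obtain rfl := hf.eq_conj_of_norm_eq_one hl
  have hinner : colInner (g * f) * colInner g⁻¹.transpose =
      -(conj l ^ 2 * ((‖colInner g‖ ^ 2 : ℝ) : ℂ)) := by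
    rw [hf.colInner_mul, colInner_transpose_inv, Complex.ofReal_pow, ← Complex.mul_conj']
    ring
  rw [coshDispl_mul, hf.colNormSq_mul_zero, hf.colNormSq_mul_one, colNormSq_transpose_inv_zero,
    colNormSq_transpose_inv_one, hinner, Complex.neg_re, Complex.re_mul_ofReal, sinh_axisDist_sq,
    ← two_mul_one_sub_re_sq hl, RCLike.norm_conj, hl]
  linear_combination colNormSq_mul_colNormSq g

/-! ### Diagonalizing elliptic elements -/

namespace IsEllipticOfOrder

variable {A : SL2C} {n : ℕ}

lemma mul_mul_inv (hA : IsEllipticOfOrder A n) (P : SL2C) : IsEllipticOfOrder (P * A * P⁻¹) n := by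
  have h_neg (k : ℕ) : P * A ^ k * P⁻¹ = -1 ↔ A ^ k = -1 := by
    rw [mul_inv_eq_iff_eq_mul, neg_one_mul, ← mul_neg_one, mul_right_inj]
  simpa only [IsEllipticOfOrder, conj_pow, conj_eq_one_iff, h_neg, ne_eq] using hA

lemma ne_one (hA : IsEllipticOfOrder A n) (hn : 1 < n) : A ≠ 1 := by
  simpa using (hA.2 1 le_rfl hn).1

lemma ne_neg_one (hA : IsEllipticOfOrder A n) (hn : 1 < n) : A ≠ -1 := by
  simpa using (hA.2 1 le_rfl hn).2

lemma pow_apply_zero_one (hA : IsEllipticOfOrder A n) : (A ^ n) 0 1 = 0 := by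
  rcases hA.1 with h | h <;> simp [h]

end IsEllipticOfOrder

namespace SL2C

lemma exists_col_zero_eq {v : Fin 2 → ℂ} (hv : v ≠ 0) :
    ∃ P : SL2C, P 0 0 = v 0 ∧ P 1 0 = v 1 := by
  refine IsCoprime.exists_SL2_col ?_ 0
  by_cases h : v 0 = 0
  · have h1 : v 1 ≠ 0 := fun h1 => hv (by ext i; fin_cases i <;> assumption)
    exact isCoprime_one_left.symm.of_isCoprime_of_dvd_right (isUnit_iff_ne_zero.2 h1).dvd
  · exact isCoprime_one_left.of_isCoprime_of_dvd_left (isUnit_iff_ne_zero.2 h).dvd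

lemma exists_eq_conj_of_one_zero_eq_zero (A : SL2C) :
    ∃ P T : SL2C, T 1 0 = 0 ∧ A = P * T * P⁻¹ := by
  obtain ⟨μ, hμ⟩ := Module.End.exists_eigenvalue (Matrix.toLin' (A : Matrix (Fin 2) (Fin 2) ℂ))
  obtain ⟨v, hv⟩ := hμ.exists_hasEigenvector
  have hA : (A : Matrix (Fin 2) (Fin 2) ℂ) *ᵥ v = μ • v := hv.apply_eq_smul
  obtain ⟨P, h0, h1⟩ := exists_col_zero_eq hv.2
  have hA0 : A 0 0 * P 0 0 + A 0 1 * P 1 0 = μ * P 0 0 := by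
    simpa [Matrix.mulVec, dotProduct, h0, h1] using congrFun hA 0
  have hA1 : A 1 0 * P 0 0 + A 1 1 * P 1 0 = μ * P 1 0 := by
    simpa [Matrix.mulVec, dotProduct, h0, h1] using congrFun hA 1
  refine ⟨P, P⁻¹ * A * P, ?_, by group⟩
  rw [mul_assoc, mul_apply, mul_apply, mul_apply, inv_one_zero, inv_one_one]
  linear_combination P 0 0 * hA1 - P 1 0 * hA0

variable {T : SL2C}

lemma exists_isDiagonalWith_of_ne (h10 : T 1 0 = 0) (hne : T 0 0 ≠ T 1 1) :
    ∃ P f : SL2C, IsDiagonalWith f (T 0 0) (T 1 1) ∧ T = P * f * P⁻¹ := by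
  set z := T 0 1 / (T 1 1 - T 0 0)
  have hz : z * (T 1 1 - T 0 0) = T 0 1 := div_mul_cancel₀ _ (sub_ne_zero.2 hne.symm)
  set U := mkSL2C 1 z 0 1 (by ring) with hU
  refine ⟨U, U⁻¹ * T * U, ⟨?_, ?_, ?_, ?_⟩, by group⟩ <;>
    simp only [mul_assoc, mul_apply, inv_zero_zero, inv_zero_one, inv_one_zero, inv_one_one,
      h10] <;>
    simp [hU, mkSL2C]
  linear_combination -hz

lemma eq_one_or_eq_neg_one_of_pow (h10 : T 1 0 = 0) (heq : T 0 0 = T 1 1) {k : ℕ}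
    (hk : (T ^ (k + 1)) 0 1 = 0) : T = 1 ∨ T = -1 := by
  have hk0 : (k : ℂ) + 1 ≠ 0 := by exact_mod_cast k.succ_ne_zero
  have hsq : T 1 1 ^ 2 = 1 := by
    simpa [h10, heq, sq] using T.det_eq_one
  rw [pow_succ_apply, heq, Matrix.one_apply_ne zero_ne_one, mul_zero, sub_zero,
    mul_eq_zero] at hk
  rcases sq_eq_one_iff.1 hsq with h11 | h11
  · left
    have h01 : T 0 1 = 0 := hk.resolve_left (by
      rw [h11, one_add_one_eq_two, Chebyshev.S_eval_two]
      exact_mod_cast hk0)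
    exact ext_entries (by simp [heq, h11]) (by simp [h01]) (by simp [h10]) (by simp [h11])
  · right
    have h01 : T 0 1 = 0 := hk.resolve_left (by
      rw [h11, ← neg_add, one_add_one_eq_two, Chebyshev.S_eval_neg_two]
      simpa using hk0)
    exact ext_entries (by simp [heq, h11]) (by simp [h01]) (by simp [h10]) (by simp [h11])

end SL2C

lemma IsEllipticOfOrder.exists_isDiagonalWith_conj {A : SL2C} {n : ℕ} (hn : 1 < n)
    (hA : IsEllipticOfOrder A n) :
    ∃ (P f : SL2C) (l m : ℂ), IsDiagonalWith f l m ∧ A = P * f * P⁻¹ := by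
  obtain ⟨P, T, h10, rfl⟩ := SL2C.exists_eq_conj_of_one_zero_eq_zero A
  have hT : IsEllipticOfOrder T n := by simpa [mul_assoc] using hA.mul_mul_inv P⁻¹
  have hne : T 0 0 ≠ T 1 1 := by
    obtain ⟨k, rfl⟩ := Nat.exists_eq_add_of_lt hn
    intro heq
    rcases SL2C.eq_one_or_eq_neg_one_of_pow h10 heq hT.pow_apply_zero_one with h | h
    exacts [hT.ne_one hn h, hT.ne_neg_one hn h]
  obtain ⟨Q, f, hf, hTf⟩ := SL2C.exists_isDiagonalWith_of_ne h10 hne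
  exact ⟨P * Q, f, _, _, hf, by rw [hTf]; group⟩

namespace IsDiagonalWith

variable {f : SL2C} {l m : ℂ} {n : ℕ}

lemma sq_eq_one_iff_eq_one_or (hf : IsDiagonalWith f l m) : l ^ 2 = 1 ↔ f = 1 ∨ f = -1 := by
  constructor
  · intro h
    have hml : m = l := by linear_combination l * hf.mul_eq_one - m * h
    rcases sq_eq_one_iff.1 h with rfl | rfl
    · exact .inl (SL2C.ext_entries (by simp [hf.zero_zero]) (by simp [hf.zero_one])
        (by simp [hf.one_zero]) (by simp [hf.one_one, hml]))
    · exact .inr (SL2C.ext_entries (by simp [hf.zero_zero]) (by simp [hf.zero_one])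
        (by simp [hf.one_zero]) (by simp [hf.one_one, hml]))
  · rintro (rfl | rfl) <;> simp [← hf.zero_zero]

lemma isPrimitiveRoot_sq (hf : IsDiagonalWith f l m) (hn : 0 < n) (hA : IsEllipticOfOrder f n) :
    IsPrimitiveRoot (l ^ 2) n := by
  refine IsPrimitiveRoot.mk_of_lt _ hn ?_ fun k hk0 hkn h => ?_
  · rw [← pow_mul, mul_comm, pow_mul, (hf.pow n).sq_eq_one_iff_eq_one_or]
    exact hA.1
  · rw [← pow_mul, mul_comm, pow_mul, (hf.pow k).sq_eq_one_iff_eq_one_or] at h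
    exact h.elim (hA.2 k hk0 hkn).1 (hA.2 k hk0 hkn).2

lemma isOfFinOrder (hf : IsDiagonalWith f l m) (hn : 0 < n) (hl : (l ^ 2) ^ n = 1) :
    IsOfFinOrder f := by
  rw [← pow_mul, mul_comm, pow_mul, (hf.pow n).sq_eq_one_iff_eq_one_or] at hl
  refine isOfFinOrder_iff_pow_eq_one.2 ⟨n * 2, by positivity, ?_⟩
  rw [pow_mul]
  rcases hl with h | h <;> simp [h]

end IsDiagonalWith

/-! ### Crossing axes -/

lemma SL2C.conj_mulVec {X : SL2C} {v : Fin 2 → ℂ} {c : ℂ} (hX : X.1 *ᵥ v = c • v) (P : SL2C) :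
    (P * X * P⁻¹).1 *ᵥ (P.1 *ᵥ v) = c • (P.1 *ᵥ v) := by
  rw [Matrix.mulVec_mulVec, ← Matrix.SpecialLinearGroup.coe_mul, inv_mul_cancel_right,
    Matrix.SpecialLinearGroup.coe_mul, ← Matrix.mulVec_mulVec, hX, Matrix.mulVec_smul]

lemma HasCommonEigenvector.mul_mul_inv {S T : SL2C} (h : HasCommonEigenvector S T) (P : SL2C) :
    HasCommonEigenvector (P * S * P⁻¹) (P * T * P⁻¹) := by
  obtain ⟨v, hv, ⟨a, ha⟩, b, hb⟩ := h
  refine ⟨P.1 *ᵥ v, fun h0 => hv ?_, ⟨a, SL2C.conj_mulVec ha P⟩, b, SL2C.conj_mulVec hb P⟩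
  calc
    v = (P⁻¹ * P).1 *ᵥ v := by simp
    _ = P⁻¹.1 *ᵥ (P.1 *ᵥ v) := by rw [Matrix.mulVec_mulVec, Matrix.SpecialLinearGroup.coe_mul]
    _ = 0 := by rw [h0, Matrix.mulVec_zero]

lemma hasCommonEigenvector_of_one_zero {S T : SL2C} (hS : S 1 0 = 0) (hT : T 1 0 = 0) :
    HasCommonEigenvector S T := by
  have h_fst {X : SL2C} (hX : X 1 0 = 0) :
      (X : Matrix (Fin 2) (Fin 2) ℂ) *ᵥ Pi.single 0 1 = X 0 0 • Pi.single 0 1 := by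
    ext i
    fin_cases i <;> simp [hX]
  exact ⟨Pi.single 0 1, by simp, ⟨_, h_fst hS⟩, _, h_fst hT⟩

lemma hasCommonEigenvector_of_zero_one {S T : SL2C} (hS : S 0 1 = 0) (hT : T 0 1 = 0) :
    HasCommonEigenvector S T := by
  have h_snd {X : SL2C} (hX : X 0 1 = 0) :
      (X : Matrix (Fin 2) (Fin 2) ℂ) *ᵥ Pi.single 1 1 = X 1 1 • Pi.single 1 1 := by
    ext i
    fin_cases i <;> simp [hX]
  exact ⟨Pi.single 1 1, by simp, ⟨_, h_snd hS⟩, _, h_snd hT⟩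

/-- `S` and `T` are simultaneously conjugate into `SU(2)`, i.e. they have a common fixed point in
hyperbolic space. -/
def IsSimultaneouslyUnitarizable (S T : SL2C) : Prop :=
  ∃ C : SL2C,
    ((C * S * C⁻¹ : SL2C) : Matrix (Fin 2) (Fin 2) ℂ) ∈ Matrix.unitaryGroup (Fin 2) ℂ ∧
    ((C * T * C⁻¹ : SL2C) : Matrix (Fin 2) (Fin 2) ℂ) ∈ Matrix.unitaryGroup (Fin 2) ℂ

lemma IsSimultaneouslyUnitarizable.mul_mul_inv {S T : SL2C}
    (h : IsSimultaneouslyUnitarizable S T) (P : SL2C) :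
    IsSimultaneouslyUnitarizable (P * S * P⁻¹) (P * T * P⁻¹) := by
  obtain ⟨C, hS, hT⟩ := h
  have h_conj (X : SL2C) : C * P⁻¹ * (P * X * P⁻¹) * (C * P⁻¹)⁻¹ = C * X * C⁻¹ := by group
  exact ⟨C * P⁻¹, by rwa [h_conj], by rwa [h_conj]⟩

lemma SL2C.mem_unitaryGroup {g : SL2C} (h11 : g 1 1 = conj (g 0 0))
    (h01 : g 0 1 = -conj (g 1 0)) :
    (g : Matrix (Fin 2) (Fin 2) ℂ) ∈ Matrix.unitaryGroup (Fin 2) ℂ := by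
  have h_star : star (g : Matrix (Fin 2) (Fin 2) ℂ) = (g⁻¹ : SL2C) := by
    ext i j
    fin_cases i <;> fin_cases j <;> simp [Matrix.star_apply, Matrix.adjugate_fin_two, h11, h01]
  rw [Matrix.mem_unitaryGroup_iff, h_star, ← Matrix.SpecialLinearGroup.coe_mul, mul_inv_cancel,
    Matrix.SpecialLinearGroup.coe_one]

-- Conjugation by `diag(s, s⁻¹)` multiplies the off-diagonal entries by `s²` and `s⁻²`; the choice
-- of `s` makes their moduli equal.
lemma exists_isDiagonalWith_conj_mem_unitaryGroup {h : SL2C} (h11 : h 1 1 = conj (h 0 0))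
    (h01 : h 0 1 ≠ 0) (h10 : h 1 0 ≠ 0) (hneg : h 0 1 * h 1 0 = -‖h 0 1 * h 1 0‖) :
    ∃ (e : SL2C) (s : ℂ), IsDiagonalWith e s s⁻¹ ∧
      ((e * h * e⁻¹ : SL2C) : Matrix (Fin 2) (Fin 2) ℂ) ∈ Matrix.unitaryGroup (Fin 2) ℂ := by
  obtain ⟨s, hs0, hs⟩ := exists_pos_pow_four_eq
    (div_pos (norm_pos_iff.2 h10) (norm_pos_iff.2 h01))
  have hsC : (s : ℂ) ≠ 0 := by exact_mod_cast hs0.ne'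
  have hs4 : (s : ℂ) ^ 4 * ‖h 0 1‖ = ‖h 1 0‖ := by
    rw [eq_div_iff (norm_ne_zero_iff.2 h01)] at hs
    exact_mod_cast hs
  have h_swap : (s : ℂ) ^ 4 * h 0 1 = -conj (h 1 0) := by
    apply mul_right_cancel₀ h10
    rw [norm_mul] at hneg
    push_cast at hneg
    linear_combination (s : ℂ) ^ 4 * hneg - ‖h 1 0‖ * hs4 + Complex.mul_conj' (h 1 0)
  obtain ⟨e, he⟩ := exists_isDiagonalWith_inv hsC
  refine ⟨e, s, he, SL2C.mem_unitaryGroup ?_ ?_⟩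
  · rw [he.inv.mul_apply_zero, he.inv.mul_apply_one, SL2C.mul_apply, SL2C.mul_apply]
    simp [he.zero_zero, he.zero_one, he.one_zero, he.one_one, h11]
    field_simp
  · rw [he.inv.mul_apply_zero, he.inv.mul_apply_one, SL2C.mul_apply, SL2C.mul_apply]
    simp [he.zero_zero, he.zero_one, he.one_zero, he.one_one]
    field_simp
    linear_combination h_swap

namespace IsDiagonalWith

variable {f g e : SL2C} {l m s t : ℂ}

lemma conj_eq_self (hf : IsDiagonalWith f l m) (he : IsDiagonalWith e s t) :
    e * f * e⁻¹ = f := by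
  apply SL2C.ext_entries
  · simp [hf.conj_zero_zero, he.zero_one, hf.zero_zero]
  · simp [hf.conj_zero_one, he.zero_one, hf.zero_one]
  · simp [hf.conj_one_zero, he.one_zero, hf.one_zero]
  · simp [hf.conj_one_one, he.zero_one, hf.one_one]

lemma mem_unitaryGroup (hf : IsDiagonalWith f l m) (hl : ‖l‖ = 1) :
    (f : Matrix (Fin 2) (Fin 2) ℂ) ∈ Matrix.unitaryGroup (Fin 2) ℂ :=
  SL2C.mem_unitaryGroup (by rw [hf.one_one, hf.zero_zero, hf.eq_conj_of_norm_eq_one hl])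
    (by simp [hf.zero_one, hf.one_zero])

lemma ofReal_norm_sub_sq (hf : IsDiagonalWith f l m) (hl : ‖l‖ = 1) :
    ((‖l - m‖ ^ 2 : ℝ) : ℂ) = 2 - l ^ 2 - m ^ 2 := by
  have hconj : conj (l - m) = m - l := by
    simp [hf.eq_conj_of_norm_eq_one hl]
  push_cast
  rw [← Complex.mul_conj', hconj]
  linear_combination 2 * hf.mul_eq_one

lemma conj_offDiag_mul_eq_neg_norm (hf : IsDiagonalWith f l m) (hl : ‖l‖ = 1)
    (hx : g 0 1 * g 1 0 ∈ crossingParams) :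
    (g * f * g⁻¹) 0 1 * (g * f * g⁻¹) 1 0 =
      -‖(g * f * g⁻¹) 0 1 * (g * f * g⁻¹) 1 0‖ := by
  obtain ⟨r, ⟨hr1, hr0⟩, hr⟩ := hx
  have h_nonpos : ‖l - m‖ ^ 2 * r * (1 + r) ≤ 0 :=
    mul_nonpos_of_nonpos_of_nonneg (mul_nonpos_of_nonneg_of_nonpos (by positivity) hr0)
      (by linarith)
  have h_eq : (g * f * g⁻¹) 0 1 * (g * f * g⁻¹) 1 0 = (‖l - m‖ ^ 2 * r * (1 + r) : ℝ) := by
    rw [hf.conj_offDiag_mul, ← hf.ofReal_norm_sub_sq hl, ← hr]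
    push_cast
    ring
  rw [h_eq, Complex.norm_real, Real.norm_of_nonpos h_nonpos]
  push_cast
  ring

lemma hasCommonEigenvector_or_isSimultaneouslyUnitarizable (hf : IsDiagonalWith f l m)
    (hl : ‖l‖ = 1) (hx : g 0 1 * g 1 0 ∈ crossingParams) :
    HasCommonEigenvector f (g * f * g⁻¹) ∨ IsSimultaneouslyUnitarizable f (g * f * g⁻¹) := by
  by_cases h01 : (g * f * g⁻¹) 0 1 = 0
  · exact .inl (hasCommonEigenvector_of_zero_one hf.zero_one h01)
  by_cases h10 : (g * f * g⁻¹) 1 0 = 0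
  · exact .inl (hasCommonEigenvector_of_one_zero hf.one_zero h10)
  have h11 : (g * f * g⁻¹) 1 1 = conj ((g * f * g⁻¹) 0 0) := by
    obtain ⟨r, -, hr⟩ := hx
    rw [hf.conj_one_one, hf.conj_zero_zero, ← hr, hf.eq_conj_of_norm_eq_one hl]
    simp
  obtain ⟨e, s, he, hunitary⟩ := exists_isDiagonalWith_conj_mem_unitaryGroup h11 h01 h10
    (hf.conj_offDiag_mul_eq_neg_norm hl hx)
  exact .inr ⟨e, by rw [hf.conj_eq_self he]; exact hf.mem_unitaryGroup hl, hunitary⟩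

end IsDiagonalWith

/-! ### Rotation angles -/

section RootsOfUnity

variable {n : ℕ}

lemma norm_eq_one_of_sq_pow_eq_one {l : ℂ} (hn : 0 < n) (hl : (l ^ 2) ^ n = 1) : ‖l‖ = 1 :=
  Complex.norm_eq_one_of_pow_eq_one (n := 2 * n) (by rw [pow_mul, hl]) (by lia)

lemma norm_exp_two_pi_div_pow_sub_one (n k : ℕ) :
    ‖Complex.exp (2 * π * Complex.I / n) ^ k - 1‖ = ‖2 * sin (k * π / n)‖ := by
  rw [← Complex.exp_nat_mul, show k * (2 * π * Complex.I / n) =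
    Complex.I * ((2 * (k * π / n) : ℝ) : ℂ) by push_cast; ring,
    Complex.norm_exp_I_mul_ofReal_sub_one, mul_div_cancel_left₀ _ two_ne_zero]

lemma sin_pi_div_pos (hn : 2 ≤ n) : 0 < sin (π / n) :=
  sin_pos_of_pos_of_lt_pi (by positivity) (div_lt_self pi_pos (by exact_mod_cast hn))

lemma sin_pi_div_le_sin_mul_pi_div {k : ℕ} (hk : 0 < k) (hkn : k < n) :
    sin (π / n) ≤ sin (k * π / n) := by
  have hn0 : (0 : ℝ) < n := by exact_mod_cast hk.trans hkn
  have hk1 : (1 : ℝ) ≤ k := by exact_mod_cast hk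
  have hkn1 : (k : ℝ) + 1 ≤ n := by exact_mod_cast hkn
  have hle : π / n ≤ π := div_le_self pi_pos.le (by linarith)
  have h_lower : π / n ≤ k * π / n := by
    gcongr
    nlinarith [pi_pos]
  have h_upper : k * π / n ≤ π - π / n := by
    rw [div_le_iff₀ hn0, sub_mul, div_mul_cancel₀ _ hn0.ne']
    nlinarith [pi_pos]
  have h := strictConcaveOn_sin_Icc.concaveOn.min_le_of_mem_Icc (x := π / n) (y := π - π / n)
    (z := k * π / n) ⟨by positivity, hle⟩ ⟨by linarith, by linarith [show 0 ≤ π / n by positivity]⟩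
    ⟨h_lower, h_upper⟩
  rwa [sin_pi_sub, min_self] at h

lemma two_mul_sin_pi_div_le_norm_sub_one [NeZero n] {ζ : ℂ} (hζ : ζ ^ n = 1) (hζ1 : ζ ≠ 1) :
    2 * sin (π / n) ≤ ‖ζ - 1‖ := by
  obtain ⟨k, hkn, rfl⟩ := (Complex.isPrimitiveRoot_exp n (NeZero.ne n)).eq_pow_of_pow_eq_one hζ
  have hk : 0 < k := Nat.pos_of_ne_zero (by rintro rfl; simp at hζ1)
  rw [norm_exp_two_pi_div_pow_sub_one]
  exact (mul_le_mul_of_nonneg_left (sin_pi_div_le_sin_mul_pi_div hk hkn) two_pos.le).trans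
    (le_abs_self _)

lemma sin_pi_div_lt_half (hn : 7 ≤ n) : sin (π / n) < 1 / 2 := by
  rw [← sin_pi_div_six]
  have h7 : (6 : ℝ) < n := by exact_mod_cast hn
  exact sin_lt_sin_of_lt_of_le_pi_div_two (by linarith [show 0 ≤ π / n by positivity, pi_pos])
    (by linarith [pi_pos]) (div_lt_div_of_pos_left pi_pos (by norm_num) h7)

end RootsOfUnity

namespace IsDiagonalWith

variable {f : SL2C} {l m : ℂ} {n : ℕ}

lemma norm_sub_eq_norm_sq_sub_one (hf : IsDiagonalWith f l m) (hl : ‖l‖ = 1) :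
    ‖l - m‖ = ‖l ^ 2 - 1‖ := by
  rw [← hf.mul_eq_one, sq, ← mul_sub, norm_mul, hl, one_mul]

lemma norm_sub_eq_two_mul_sin (hf : IsDiagonalWith f l m) (hl : ‖l‖ = 1) (hn : 2 ≤ n)
    (hexp : l ^ 2 = Complex.exp (2 * π * Complex.I / n)) : ‖l - m‖ = 2 * sin (π / n) := by
  have h := norm_exp_two_pi_div_pow_sub_one n 1
  rw [pow_one, ← hexp, Nat.cast_one, one_mul] at h
  rw [hf.norm_sub_eq_norm_sq_sub_one hl, h,
    Real.norm_of_nonneg (mul_nonneg two_pos.le (sin_pi_div_pos hn).le)]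

lemma two_mul_sin_le_norm_sub (hf : IsDiagonalWith f l m) (hl : ‖l‖ = 1) (hn : 2 ≤ n)
    (hprim : IsPrimitiveRoot (l ^ 2) n) : 2 * sin (π / n) ≤ ‖l - m‖ := by
  have : NeZero n := ⟨by lia⟩
  rw [hf.norm_sub_eq_norm_sq_sub_one hl]
  exact two_mul_sin_pi_div_le_norm_sub_one hprim.pow_eq_one (hprim.ne_one (by lia))

lemma sq_ne_sq (hf : IsDiagonalWith f l m) (hn : 3 ≤ n) (hprim : IsPrimitiveRoot (l ^ 2) n) :
    l ^ 2 ≠ m ^ 2 := by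
  intro h
  refine hprim.pow_ne_one_of_pos_of_lt two_ne_zero hn ?_
  linear_combination l ^ 2 * h + (l * m + 1) * hf.mul_eq_one

lemma norm_one_sub_sq_lt_one (hf : IsDiagonalWith f l m) (hl : ‖l‖ = 1) (hlt : ‖l - m‖ < 1) :
    ‖1 - l ^ 2‖ < 1 ∧ ‖1 - m ^ 2‖ < 1 := by
  have hm : ‖m‖ = 1 := by simpa [hl] using congrArg norm hf.mul_eq_one
  constructor
  · rwa [norm_sub_rev, ← hf.norm_sub_eq_norm_sq_sub_one hl]
  · rwa [← hf.mul_eq_one, sq, ← sub_mul, norm_mul, hm, mul_one]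

end IsDiagonalWith

lemma IsDiscreteSubgroup.comap_conj {Γ : Subgroup SL2C} (hΓ : IsDiscreteSubgroup Γ) (P : SL2C) :
    IsDiscreteSubgroup (Γ.comap (MulAut.conj P).toMonoidHom) := by
  have : DiscreteTopology Γ := hΓ
  have : IsTopologicalGroup SL2C := Matrix.SpecialLinearGroup.topologicalGroup
  have hcont : Continuous (MulAut.conj P) := by
    change Continuous fun g => P * g * P⁻¹
    fun_prop
  have hmaps : Set.MapsTo (MulAut.conj P) (Γ.comap (MulAut.conj P).toMonoidHom) Γ := fun _ => id
  exact DiscreteTopology.of_continuous_injective (hcont.restrict hmaps)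
    (hmaps.restrict_inj.2 (MulAut.conj P).injective.injOn)

lemma sq_sin_pi_div_four : sin (π / 4) ^ 2 = 1 / 2 := by
  rw [sin_pi_div_four, div_pow, sq_sqrt (by norm_num)]
  norm_num

lemma sq_cos_pi_div_five : cos (π / 5) ^ 2 = (3 + √5) / 8 := by
  rw [cos_pi_div_five, div_pow, add_sq, sq_sqrt (by norm_num)]
  ring

lemma sq_sin_pi_div_five : sin (π / 5) ^ 2 = (5 - √5) / 8 := by
  rw [sin_sq, sq_cos_pi_div_five]
  ring

lemma sq_sin_pi_div_six : sin (π / 6) ^ 2 = 1 / 4 := by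
  rw [sin_pi_div_six]
  norm_num

/-- Below this value of `‖x‖ + ‖1 + x‖`, the axis parameter `x` of a discrete group containing the
rotation `f` by `2π / n` lies in `[-1, 0]`: it bounds from below the hyperbolic cosine of the
distance between disjoint axes of `f` and one of its conjugates. -/
def axisBound : ℕ → ℝ
  | 3 => (1 + √5) / 3
  | 4 => (1 + √3) / 2
  | 5 => (5 + √5) / 5
  | 6 => 2
  | n => 1 / (2 * sin (π / n) ^ 2) - 1

lemma axisBound_of_seven_le {n : ℕ} (hn : 7 ≤ n) :
    axisBound n = 1 / (2 * sin (π / n) ^ 2) - 1 := by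
  unfold axisBound
  split <;> lia

lemma axisBound_five : axisBound 5 = 2 / (4 * sin (π / 5) ^ 2) := by
  have h5 : √5 ^ 2 = 5 := sq_sqrt (by norm_num)
  have hne : 5 - √5 ≠ 0 := by nlinarith
  rw [sq_sin_pi_div_five, axisBound]
  field_simp
  linear_combination -4 * h5

lemma IsDiscreteSubgroup.mem_crossingParams_of_lt_axisBound {Γ : Subgroup SL2C}
    (hΓ : IsDiscreteSubgroup Γ) {f : SL2C} {l m x : ℂ} {n : ℕ} (hf : IsDiagonalWith f l m)
    (hfΓ : f ∈ Γ) (hn : 3 ≤ n) (hexp : l ^ 2 = Complex.exp (2 * π * Complex.I / n))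
    (hx : x ∈ axisParams Γ f) (hK : ‖x‖ + ‖1 + x‖ < axisBound n) : x ∈ crossingParams := by
  have hprim : IsPrimitiveRoot (l ^ 2) n := hexp ▸ Complex.isPrimitiveRoot_exp n (by lia)
  have hl := norm_eq_one_of_sq_pow_eq_one (by lia) hprim.pow_eq_one
  have hnorm := hf.norm_sub_eq_two_mul_sin hl (by lia) hexp
  have hσ : ((4 * sin (π / n) ^ 2 : ℝ) : ℂ) = 2 - l ^ 2 - m ^ 2 := by
    rw [← hf.ofReal_norm_sub_sq hl, hnorm]
    push_cast
    ring
  have hS : IsParamSystem (axisParams Γ f) (4 * sin (π / n) ^ 2) :=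
    hΓ.isParamSystem_axisParams hf hfΓ (hf.isOfFinOrder (by lia) hprim.pow_eq_one)
      (hf.sq_ne_sq hn hprim) hσ
  obtain rfl | rfl | rfl | rfl | h7 : n = 3 ∨ n = 4 ∨ n = 5 ∨ n = 6 ∨ 7 ≤ n := by lia
  · refine IsParamSystem.mem_crossingParams_of_order_three ?_ hx hK
    rw [Nat.cast_ofNat, sq_sin_pi_div_three] at hS
    convert hS
    norm_num
  · refine IsParamSystem.mem_crossingParams_of_order_four ?_ hx hK
    rw [Nat.cast_ofNat, sq_sin_pi_div_four] at hS
    convert hS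
    norm_num
  · push_cast at hS
    have h5 : √5 ^ 2 = 5 := sq_sqrt (by norm_num)
    rw [axisBound_five] at hK
    refine hS.mem_crossingParams_of_order_five ?_ ?_ hx hK
    · rw [sq_sin_pi_div_five]
      linear_combination h5 / 4
    · rw [sq_sin_pi_div_five]
      nlinarith [sqrt_nonneg 5]
  · refine IsParamSystem.mem_crossingParams_of_order_six ?_ hx hK
    rw [Nat.cast_ofNat, sq_sin_pi_div_six] at hS
    convert hS
    norm_num
  · have hsin := sin_pi_div_pos (n := n) (by lia)
    have hlt := hf.norm_one_sub_sq_lt_one hl (by linarith [sin_pi_div_lt_half h7])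
    refine hS.mem_crossingParams_of_mul_one_add_ne (by positivity) (fun y hy => ?_) hx ?_
    · exact hΓ.mul_one_add_ne_neg_one hf hfΓ (hf.sq_ne_sq hn hprim) (hprim.ne_one (by lia))
        hlt.1 hlt.2 hσ hy
    · rw [axisBound_of_seven_le h7] at hK
      convert hK using 2
      field_simp
      norm_num

/-! ### The displacement bound -/

/-- `cosh (2 r)`, where `r` is the distance to the axis of a rotation by `2π / n` at which points
are moved by the distance `arcosh t`, that is, `t = 1 + 2 sin² (π / n) sinh² r`. -/
def coshTwiceRadius (n : ℕ) (t : ℝ) : ℝ := 1 + (t - 1) / sin (π / n) ^ 2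

lemma one_le_coshTwiceRadius (n : ℕ) {t : ℝ} (ht : 1 ≤ t) : 1 ≤ coshTwiceRadius n t :=
  le_add_of_nonneg_right (div_nonneg (sub_nonneg.2 ht) (sq_nonneg _))

namespace IsDiagonalWith

variable {f g C : SL2C} {l m : ℂ} {n : ℕ} {t : ℝ}

lemma two_mul_axisDist_lt_of_coshDispl_lt (hf : IsDiagonalWith f l m) (hl : ‖l‖ = 1) (hn : 2 ≤ n)
    (hprim : IsPrimitiveRoot (l ^ 2) n) (hC : coshDispl (C * f * C⁻¹) < t) :
    2 * axisDist C < arcosh (coshTwiceRadius n t) := by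
  have h1 := one_le_coshTwiceRadius n ((one_le_coshDispl _).trans hC.le)
  have hsin := sin_pi_div_pos hn
  have hsq : (2 * sin (π / n)) ^ 2 ≤ ‖l - m‖ ^ 2 := by
    gcongr
    exact hf.two_mul_sin_le_norm_sub hl hn hprim
  have hsinh : 2 * sinh (axisDist C) ^ 2 < (t - 1) / sin (π / n) ^ 2 := by
    rw [lt_div_iff₀ (by positivity)]
    rw [hf.coshDispl_conj hl] at hC
    nlinarith [sq_nonneg (sinh (axisDist C))]
  have hcosh : cosh (2 * axisDist C) < coshTwiceRadius n t := by
    rw [cosh_two_mul, cosh_sq, coshTwiceRadius]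
    linarith
  rwa [← cosh_arcosh h1, cosh_lt_cosh, abs_of_nonneg (arcosh_nonneg h1),
    abs_of_nonneg (mul_nonneg two_pos.le (axisDist_nonneg C))] at hcosh

lemma norm_add_norm_lt_of_coshDispl_lt (hf : IsDiagonalWith f l m) (hl : ‖l‖ = 1) (hn : 2 ≤ n)
    (hprim : IsPrimitiveRoot (l ^ 2) n) (hCf : coshDispl (C * f * C⁻¹) < t)
    (hCg : coshDispl (C * g * C⁻¹) < t) :
    ‖g 0 1 * g 1 0‖ + ‖1 + g 0 1 * g 1 0‖ < cosh (arcosh t + arcosh (coshTwiceRadius n t)) := by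
  have h1 := one_le_coshDispl (C * g * C⁻¹)
  have hdispl : displ (C * g * C⁻¹) < arcosh t :=
    (arcosh_lt_arcosh (by linarith) (by linarith)).2 hCg
  have hr := hf.two_mul_axisDist_lt_of_coshDispl_lt hl hn hprim hCf
  have h0 : 0 ≤ displ (C * g * C⁻¹) + 2 * axisDist C :=
    add_nonneg (displ_nonneg _) (mul_nonneg two_pos.le (axisDist_nonneg C))
  have hlt := add_lt_add hdispl hr
  have hle := norm_add_norm_le_cosh_displ_add_axisDist C (C * g * C⁻¹)
  rw [show C⁻¹ * (C * g * C⁻¹) * C = g by group] at hle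
  exact hle.trans_lt (cosh_strictMonoOn h0 (h0.trans hlt.le) hlt)

end IsDiagonalWith

/-! ### The constants -/

lemma cosh_arcosh_add_arcosh {s t u : ℝ} (hs : 1 ≤ s) (ht : 1 ≤ t) (hu : s * t ≤ u)
    (h : (s ^ 2 - 1) * (t ^ 2 - 1) = (u - s * t) ^ 2) : cosh (arcosh s + arcosh t) = u := by
  rw [cosh_add, cosh_arcosh hs, cosh_arcosh ht, sinh_arcosh hs, sinh_arcosh ht,
    ← sqrt_mul (sub_nonneg.2 (one_le_pow₀ hs)), h, sqrt_sq (sub_nonneg.2 hu)]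
  ring

lemma dOf_of_ne_six {n : ℕ} (hn : n ≠ 6) : dOf n = tOf n := if_neg hn

lemma dOf_of_seven_le {n : ℕ} (hn : 7 ≤ n) :
    dOf n = (5 - 2 * sin (π / n) ^ 2) / (4 + 2 * sin (π / n) ^ 2) := by
  rw [dOf_of_ne_six (by lia)]
  unfold tOf
  split <;> lia

lemma t5_spec : 1 < t5 ∧ t5 * (t5 - cos (π / 5) ^ 2) +
    (t5 - 1) * √((t5 + 1) * (t5 + 1 - 2 * cos (π / 5) ^ 2)) = 1 / 2 := by
  have hex : ∃ t : ℝ, 1 < t ∧ t * (t - cos (π / 5) ^ 2) +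
      (t - 1) * √((t + 1) * (t + 1 - 2 * cos (π / 5) ^ 2)) = 1 / 2 := by
    have hsq : √5 ^ 2 = 5 := sq_sqrt (by norm_num)
    have h5_lower : 2 < √5 := by nlinarith [sqrt_nonneg 5]
    have h5_upper : √5 < 3 := by nlinarith
    rw [sq_cos_pi_div_five]
    set F : ℝ → ℝ := fun t =>
      t * (t - (3 + √5) / 8) + (t - 1) * √((t + 1) * (t + 1 - 2 * ((3 + √5) / 8))) with hF
    have hF1 : F 1 < 1 / 2 := by simp only [hF]; linarith
    have hF2 : 1 / 2 < F 2 := by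
      simp only [hF]
      linarith [sqrt_nonneg ((2 + 1) * (2 + 1 - 2 * ((3 + √5) / 8)))]
    have hcont : ContinuousOn F (Set.Icc 1 2) := by fun_prop
    obtain ⟨t, ht, h⟩ := intermediate_value_Ioo one_le_two hcont ⟨hF1, hF2⟩
    exact ⟨t, ht.1, h⟩
  rw [t5, dif_pos hex]
  exact hex.choose_spec

lemma cosh_arcosh_dOf_three :
    cosh (arcosh (dOf 3) + arcosh (coshTwiceRadius 3 (dOf 3))) = axisBound 3 := by
  have h5 : √5 ^ 2 = 5 := sq_sqrt (by norm_num)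
  have h5_lower : 2.236 < √5 := by rw [lt_sqrt] <;> norm_num
  have h5_upper : √5 < 2.237 := by rw [sqrt_lt'] <;> norm_num
  have hv : √(8 + 2 * √5) ^ 2 = 8 + 2 * √5 := sq_sqrt (by positivity)
  have hd : dOf 3 = (2 * √(8 + 2 * √5) - (1 + √5)) / (6 - √5) := dOf_of_ne_six (by simp)
  have hr : coshTwiceRadius 3 (dOf 3) = (4 * dOf 3 - 1) / 3 := by
    rw [coshTwiceRadius, Nat.cast_ofNat, sq_sin_pi_div_three]
    ring
  have h1 : 1 ≤ dOf 3 := by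
    rw [hd, le_div_iff₀ (by linarith)]
    nlinarith [sqrt_nonneg (8 + 2 * √5)]
  have hd' : dOf 3 ≤ 1.02 := by
    rw [hd, div_le_iff₀ (by linarith)]
    nlinarith [sqrt_nonneg (8 + 2 * √5)]
  have hquad : dOf 3 ^ 2 * (41 - 12 * √5) + 2 * dOf 3 * (1 + 5 * √5) - 26 - 6 * √5 = 0 := by
    have h : dOf 3 * (6 - √5) + 1 + √5 = 2 * √(8 + 2 * √5) := by
      rw [hd, div_mul_cancel₀ _ (by linarith)]
      ring
    linear_combination (dOf 3 * (6 - √5) + 1 + √5 + 2 * √(8 + 2 * √5)) * h + 4 * hv -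
      (dOf 3 ^ 2 - 2 * dOf 3 + 1) * h5
  refine cosh_arcosh_add_arcosh h1 (one_le_coshTwiceRadius 3 h1) ?_ ?_
  · rw [hr, axisBound]
    nlinarith
  · rw [hr, axisBound]
    linear_combination (4 * √5 - 7) / 279 * hquad -
      (1 / 9 - dOf 3 ^ 2 * 48 / 279 + 40 * dOf 3 / 279 - 24 / 279) * h5

lemma cosh_arcosh_dOf_four :
    cosh (arcosh (dOf 4) + arcosh (coshTwiceRadius 4 (dOf 4))) = axisBound 4 := by
  have h3 : √3 ^ 2 = 3 := sq_sqrt (by norm_num)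
  have h3_lower : 1.732 < √3 := by rw [lt_sqrt] <;> norm_num
  have h3_upper : √3 < 1.733 := by rw [sqrt_lt'] <;> norm_num
  have hv : √(6 + 2 * √3) ^ 2 = 6 + 2 * √3 := sq_sqrt (by positivity)
  have hd : dOf 4 = (√(6 + 2 * √3) - √3) / (3 - √3) := dOf_of_ne_six (by simp)
  have hr : coshTwiceRadius 4 (dOf 4) = 2 * dOf 4 - 1 := by
    rw [coshTwiceRadius, Nat.cast_ofNat, sq_sin_pi_div_four]
    ring
  have h1 : 1 ≤ dOf 4 := by
    rw [hd, le_div_iff₀ (by linarith)]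
    nlinarith [sqrt_nonneg (6 + 2 * √3)]
  have hd' : dOf 4 ≤ 1.08 := by
    rw [hd, div_le_iff₀ (by linarith)]
    nlinarith [sqrt_nonneg (6 + 2 * √3)]
  have hquad : dOf 4 ^ 2 * (12 - 6 * √3) + 2 * dOf 4 * (3 * √3 - 3) - 3 - 2 * √3 = 0 := by
    have h : dOf 4 * (3 - √3) + √3 = √(6 + 2 * √3) := by
      rw [hd, div_mul_cancel₀ _ (by linarith)]
      ring
    linear_combination (dOf 4 * (3 - √3) + √3 + √(6 + 2 * √3)) * h + hv -
      (dOf 4 ^ 2 - 2 * dOf 4 + 1) * h3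
  refine cosh_arcosh_add_arcosh h1 (one_le_coshTwiceRadius 4 h1) ?_ ?_
  · rw [hr, axisBound]
    nlinarith
  · rw [hr, axisBound]
    linear_combination √3 / 6 * hquad - (1 / 4 - dOf 4 ^ 2 + dOf 4 - 1 / 3) * h3

lemma cosh_arcosh_dOf_five :
    cosh (arcosh (dOf 5) + arcosh (coshTwiceRadius 5 (dOf 5))) = axisBound 5 := by
  have hd : dOf 5 = t5 := dOf_of_ne_six (by simp)
  obtain ⟨h1, h⟩ := t5_spec
  have hq : 0 < sin (π / 5) ^ 2 := pow_pos (by exact_mod_cast sin_pi_div_pos (n := 5) (by simp)) 2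
  rw [cos_sq'] at h
  have hr : coshTwiceRadius 5 (dOf 5) = 1 + (t5 - 1) / sin (π / 5) ^ 2 := by
    rw [coshTwiceRadius, Nat.cast_ofNat, hd]
  have hc := one_le_coshTwiceRadius 5 h1.le
  have hroot : 0 ≤ (t5 + 1) * (t5 + 1 - 2 * (1 - sin (π / 5) ^ 2)) :=
    mul_nonneg (by linarith) (by linarith)
  have hsqrt := sqrt_nonneg ((t5 + 1) * (t5 + 1 - 2 * (1 - sin (π / 5) ^ 2)))
  have hsq := sq_sqrt hroot
  rw [axisBound_five, hr, hd]
  rw [← hd, hr] at hc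
  generalize √((t5 + 1) * (t5 + 1 - 2 * (1 - sin (π / 5) ^ 2))) = v at *
  generalize sin (π / 5) ^ 2 = q at *
  have hgap : 2 / (4 * q) - t5 * (1 + (t5 - 1) / q) = (t5 - 1) * v / q := by
    field_simp
    linear_combination -4 * h
  refine cosh_arcosh_add_arcosh h1.le hc ?_ ?_
  · rw [← sub_nonneg, hgap]
    exact div_nonneg (mul_nonneg (by linarith) hsqrt) hq.le
  · rw [hgap, div_pow, mul_pow, hsq]
    field_simp
    ring

lemma cosh_arcosh_dOf_six :
    cosh (arcosh (dOf 6) + arcosh (coshTwiceRadius 6 (dOf 6))) = axisBound 6 := by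
  have h24 : √24 ^ 2 = 24 := sq_sqrt (by norm_num)
  have h24_lower : 4.89 < √24 := by rw [lt_sqrt] <;> norm_num
  have h24_upper : √24 < 5 := by rw [sqrt_lt'] <;> norm_num
  have hd : dOf 6 = 6 - √24 := if_pos rfl
  have hr : coshTwiceRadius 6 (dOf 6) = 4 * dOf 6 - 3 := by
    rw [coshTwiceRadius, Nat.cast_ofNat, sq_sin_pi_div_six]
    ring
  have h1 : 1 ≤ dOf 6 := by linarith
  refine cosh_arcosh_add_arcosh h1 (one_le_coshTwiceRadius 6 h1) ?_ ?_
  · rw [hr, hd, axisBound]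
    linarith
  · rw [hr, hd, axisBound]
    linear_combination -h24

lemma cosh_arcosh_dOf_of_seven_le {n : ℕ} (hn : 7 ≤ n) :
    cosh (arcosh (dOf n) + arcosh (coshTwiceRadius n (dOf n))) = axisBound n := by
  have hpos := sin_pi_div_pos (n := n) (by lia)
  have hlt := sin_pi_div_lt_half hn
  have hd := dOf_of_seven_le hn
  rw [axisBound_of_seven_le hn]
  have hr : coshTwiceRadius n (dOf n) = 1 + (dOf n - 1) / sin (π / n) ^ 2 := rfl
  have hq0 : 0 < sin (π / n) ^ 2 := by positivity
  have hq1 : 0 < 1 - 4 * sin (π / n) ^ 2 := by nlinarith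
  generalize sin (π / n) ^ 2 = q at *
  have h1 : 1 ≤ dOf n := by
    rw [hd, le_div_iff₀ (by linarith)]
    linarith
  refine cosh_arcosh_add_arcosh h1 (one_le_coshTwiceRadius n h1) ?_ ?_
  · have hgap : 1 / (2 * q) - 1 - dOf n * (1 + (dOf n - 1) / q) =
        3 * (1 - 4 * q) * (1 + 2 * q) / (q * (4 + 2 * q) ^ 2) := by
      rw [hd]
      field_simp
      ring
    rw [hr, ← sub_nonneg, hgap]
    positivity
  · rw [hr, hd]
    field_simp
    ring

lemma cosh_arcosh_dOf {n : ℕ} (hn : 3 ≤ n) :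
    cosh (arcosh (dOf n) + arcosh (coshTwiceRadius n (dOf n))) = axisBound n := by
  obtain rfl | rfl | rfl | rfl | h7 : n = 3 ∨ n = 4 ∨ n = 5 ∨ n = 6 ∨ 7 ≤ n := by lia
  · exact cosh_arcosh_dOf_three
  · exact cosh_arcosh_dOf_four
  · exact cosh_arcosh_dOf_five
  · exact cosh_arcosh_dOf_six
  · exact cosh_arcosh_dOf_of_seven_le h7

lemma IsDiagonalWith.exists_pow_sq_eq_exp {f : SL2C} {l m : ℂ} {n : ℕ} (hf : IsDiagonalWith f l m)
    (hn : 0 < n) (hprim : IsPrimitiveRoot (l ^ 2) n) : ∃ (k : ℕ) (l' m' : ℂ),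
      IsDiagonalWith (f ^ k) l' m' ∧ l' ^ 2 = Complex.exp (2 * π * Complex.I / n) := by
  have : NeZero n := ⟨hn.ne'⟩
  obtain ⟨k, -, hk⟩ := hprim.eq_pow_of_pow_eq_one
    (Complex.isPrimitiveRoot_exp n hn.ne').pow_eq_one
  exact ⟨k, l ^ k, m ^ k, hf.pow k, by rw [← hk, pow_right_comm]⟩

lemma IsDiscreteSubgroup.dOf_le_max_coshDispl {Γ : Subgroup SL2C} (hΓ : IsDiscreteSubgroup Γ)
    {f g : SL2C} {l m : ℂ} {n : ℕ} (hf : IsDiagonalWith f l m) (hn : 3 ≤ n)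
    (hprim : IsPrimitiveRoot (l ^ 2) n) (hfΓ : f ∈ Γ) (hgΓ : g ∈ Γ)
    (hg : g 0 1 * g 1 0 ∉ crossingParams) (C : SL2C) :
    dOf n ≤ max (coshDispl (C * f * C⁻¹)) (coshDispl (C * g * C⁻¹)) := by
  by_contra! hlt
  have hl := norm_eq_one_of_sq_pow_eq_one (by lia) hprim.pow_eq_one
  have hK := hf.norm_add_norm_lt_of_coshDispl_lt hl (by lia) hprim (max_lt_iff.1 hlt).1
    (max_lt_iff.1 hlt).2
  rw [cosh_arcosh_dOf hn] at hK
  obtain ⟨k, l', m', hf', hexp⟩ := hf.exists_pow_sq_eq_exp (by lia) hprim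
  have hf'Γ := Γ.pow_mem hfΓ k
  exact hg (hΓ.mem_crossingParams_of_lt_axisBound hf' hf'Γ hn hexp
    ⟨g, conj_mem_of_mem hf'Γ hgΓ, rfl⟩ hK)

/-- Theorem 3.2: displacement bound when the axes of `A` and `B·A·B⁻¹` are disjoint. -/
theorem margulis_disjoint_axes (A B : SL2C) (n : ℕ) (hn : 3 ≤ n)
    (hd : IsDiscreteSubgroup (Subgroup.closure {A, B}))
    (hA : IsEllipticOfOrder A n)
    (hfix : ¬ HasCommonEigenvector A (B * A * B⁻¹))
    (hax : ¬ ∃ C : SL2C,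
      ((C * A * C⁻¹ : SL2C) : Matrix (Fin 2) (Fin 2) ℂ) ∈ Matrix.unitaryGroup (Fin 2) ℂ ∧
      ((C * (B * A * B⁻¹) * C⁻¹ : SL2C) : Matrix (Fin 2) (Fin 2) ℂ) ∈
        Matrix.unitaryGroup (Fin 2) ℂ) :
    ∀ C : SL2C,
      max (fnorm ((C * A * C⁻¹ : SL2C) : Matrix (Fin 2) (Fin 2) ℂ) ^ 2)
      (fnorm ((C * B * C⁻¹ : SL2C) : Matrix (Fin 2) (Fin 2) ℂ) ^ 2) ≥ 2 * dOf n := by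
  intro C
  obtain ⟨P, f, l, m, hf, rfl⟩ := hA.exists_isDiagonalWith_conj (by lia)
  obtain ⟨g, rfl⟩ : ∃ g, B = P * g * P⁻¹ := ⟨P⁻¹ * B * P, by group⟩
  have hprim : IsPrimitiveRoot (l ^ 2) n :=
    hf.isPrimitiveRoot_sq (by lia) (by simpa [mul_assoc] using hA.mul_mul_inv P⁻¹)
  have hl := norm_eq_one_of_sq_pow_eq_one (by lia) hprim.pow_eq_one
  have hconj : P * g * P⁻¹ * (P * f * P⁻¹) * (P * g * P⁻¹)⁻¹ = P * (g * f * g⁻¹) * P⁻¹ := by group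
  rw [hconj] at hfix hax
  have hg : g 0 1 * g 1 0 ∉ crossingParams := fun hg =>
    (hf.hasCommonEigenvector_or_isSimultaneouslyUnitarizable hl hg).elim
      (fun h => hfix (h.mul_mul_inv P)) (fun h => hax (h.mul_mul_inv P))
  have hbound := (hd.comap_conj P).dOf_le_max_coshDispl hf hn hprim
    (Subgroup.subset_closure (by simp)) (Subgroup.subset_closure (by simp)) hg (C * P)
  have hCP (h : SL2C) : C * P * h * (C * P)⁻¹ = C * (P * h * P⁻¹) * C⁻¹ := by group
  rw [hCP, hCP, coshDispl, coshDispl, max_div_div_right two_pos.le] at hbound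
  linarith

end
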